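/- arXiv:1907.04636 — 2 statements merged into one kernel-verified Lean document; each statement's English description precedes it below -/
import Mathlib

section
/- Assume condition (R) with γ∈(0,2), and let α∈[0,1). Let ξ_{γ,σ,1}(q) be the smallest positive zero of Ψ_{γ,σ}'(·;q), where Ψ_{γ,σ}(x;q) = x^{γ+1} λ_{γ,σ}(x;q). Then the equation 1 + r·f_{γ,σ}''(r;q)/f_{γ,σ}'(r;q) = α has a unique root r₁ in the interval (0, ξ_{γ,σ,1}(q)), and the radius of convexity of order α of f_{γ,σ}(·;q) equals r₁. -/
noncomputable def qPochInf (a q : ℝ) : ℝ := ∏' k : ℕ, (1 - a * q ^ k)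

noncomputable def qGamma (q x : ℝ) : ℝ :=
  qPochInf q q * (1 - q) ^ (1 - x) / qPochInf (q ^ x) q

noncomputable def qML (γ σ q : ℝ) (z : ℂ) : ℂ :=
  ∑' n : ℕ,
    (((-1) ^ n * σ ^ (2 * n) * q ^ (n * (n - 1)) / qGamma q (2 * n + γ + 1) : ℝ) : ℂ) * z ^ (2 * n)

noncomputable def qMLR (γ σ q : ℝ) (x : ℝ) : ℝ :=
  ∑' n : ℕ,
    ((-1) ^ n * σ ^ (2 * n) * q ^ (n * (n - 1)) / qGamma q (2 * n + γ + 1)) * x ^ (2 * n)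

def condR (q γ : ℝ) : Prop :=
  (γ = 0 ∨ γ = 1) ∨
    (γ ∈ Set.Ioo (0 : ℝ) 2 ∧ γ ≠ 1 ∧
      1 < q⁻¹ * (1 - q) * (1 - q ^ (γ + 1)) * (1 - q ^ (γ + 2)))

noncomputable def radiusStarlike (α : ℝ) (f : ℂ → ℂ) : ℝ :=
  sSup {r : ℝ | 0 < r ∧ ∀ z : ℂ, 0 < ‖z‖ → ‖z‖ < r →
    α < (z * deriv f z / f z).re}

noncomputable def radiusConvex (α : ℝ) (f : ℂ → ℂ) : ℝ :=
  sSup {r : ℝ | 0 < r ∧ ∀ z : ℂ, ‖z‖ < r →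
    α < (1 + z * deriv (deriv f) z / deriv f z).re}

noncomputable def fML (γ σ q : ℝ) (z : ℂ) : ℂ :=
  Complex.exp ((1 / ((γ : ℂ) + 1)) *
    Complex.log (z ^ ((γ : ℂ) + 1) * (qGamma q (γ + 1) : ℂ) * qML γ σ q z))

noncomputable def gML (γ σ q : ℝ) (z : ℂ) : ℂ :=
  z * (qGamma q (γ + 1) : ℂ) * qML γ σ q z

noncomputable def hML (γ σ q : ℝ) (z : ℂ) : ℂ :=
  z * (qGamma q (γ + 1) : ℂ) *
    ∑' n : ℕ,
      (((-1) ^ n * σ ^ (2 * n) * q ^ (n * (n - 1)) / qGamma q (2 * n + γ + 1) : ℝ) : ℂ) * z ^ n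

noncomputable def hMLR (γ σ q : ℝ) (x : ℝ) : ℝ :=
  x * qGamma q (γ + 1) *
    ∑' n : ℕ,
      ((-1) ^ n * σ ^ (2 * n) * q ^ (n * (n - 1)) / qGamma q (2 * n + γ + 1)) * x ^ n

/-- Real restriction of the normalized function $f_{γ,σ}$ (principal branch). -/
noncomputable def fMLR (γ σ q : ℝ) (x : ℝ) : ℝ :=
  (x ^ (γ + 1) * qGamma q (γ + 1) * qMLR γ σ q x) ^ (1 / (γ + 1))

/-!
Put `ν = γ + 1` and `Ψ(z) = z ^ ν f(z²)`, where `f` is entire. Wherever `F = Ψ ^ (1 / ν)` is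
holomorphic, `1 + z F''(z) / F'(z) = 1 - 2 E(z²)`, with `E` an explicit combination of the
logarithmic derivatives of `f` and of `f + (2 / ν) w f'(w)`, the latter being `Ψ'` up to elementary
factors. If `- w f'(w) / f(w)` has nonnegative Taylor coefficients, then so has `E`. Hence
`|E(w)| ≤ E(|w|)`, and `E` increases from `0` to `∞` on `(0, ξ²)`, where `ξ` is the first positive
zero of `Ψ'`. So the real part of `1 + z F''(z) / F'(z)` on a circle is smallest on the positive
axis, and the radius of convexity is the root of `2 E(r²) = 1 - α`.

For `f = Γ_q(γ + 1) λ_{γ,σ}` in the variable `z²` the nonnegativity is read off the coefficients.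
If `γ` is `0` or `1`, then `f` comes from the `q`-exponential `g(w) = (1 - τ w) g(p w)` by dividing
the coefficients by the products `∏ (1 - b pⁱ)`, a limit of operations which preserve the
nonnegativity. Otherwise condition (R) forces `q < 1 / 2`, so that the coefficients satisfy
Hutchinson's condition: their ratios decrease at least by the factor `4`.
-/

section FormalPowerSeries

open PowerSeries Finset Filter Topology

/-- A formal power series all of whose coefficients are nonnegative; its sum is then dominated, at
any complex point, by its sum at the modulus of that point. -/
def NonnegCoeff {R : Type*} [Semiring R] [LE R] (f : R⟦X⟧) : Prop :=
  ∀ n, 0 ≤ coeff n f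

theorem NonnegCoeff.add {R : Type*} [Semiring R] [PartialOrder R] [IsOrderedRing R] {f g : R⟦X⟧}
    (hf : NonnegCoeff f) (hg : NonnegCoeff g) : NonnegCoeff (f + g) := fun n => by
  rw [map_add]
  exact add_nonneg (hf n) (hg n)

theorem NonnegCoeff.mul {R : Type*} [Semiring R] [PartialOrder R] [IsOrderedRing R] {f g : R⟦X⟧}
    (hf : NonnegCoeff f) (hg : NonnegCoeff g) : NonnegCoeff (f * g) := fun n => by
  rw [coeff_mul]
  exact sum_nonneg fun x _ => mul_nonneg (hf _) (hg _)

theorem coeff_X_mul_derivative {R : Type*} [CommSemiring R] (f : R⟦X⟧) (n : ℕ) :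
    coeff n (X * d⁄dX R f) = n * coeff n f := by
  cases n with
  | zero => simp
  | succ n => rw [coeff_succ_X_mul, coeff_derivative, mul_comm, Nat.cast_succ]

section Field

variable {k : Type*} [Field k] {f g s : k⟦X⟧}

/-- The series `-X f' / f`. If `f = ∏ (1 - X / ρᵢ)`, it is `∑ₙ (∑ᵢ ρᵢ⁻ⁿ) Xⁿ` with `n ≥ 1`, so its
coefficients are the power sums of the inverse zeros. They are nonnegative if the zeros are
positive; unlike positivity of the zeros, this can be checked on the coefficients of `f`. -/
noncomputable def negLogDeriv (f : k⟦X⟧) : k⟦X⟧ :=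
  -(X * d⁄dX k f) * f⁻¹

theorem mul_negLogDeriv (hf : constantCoeff f ≠ 0) : f * negLogDeriv f = -(X * d⁄dX k f) := by
  rw [negLogDeriv, mul_left_comm, PowerSeries.mul_inv_cancel f hf, mul_one]

theorem eq_negLogDeriv_of_mul_eq (hf : constantCoeff f ≠ 0) (h : f * s = -(X * d⁄dX k f)) :
    s = negLogDeriv f := by
  rw [negLogDeriv, ← h, mul_right_comm, PowerSeries.mul_inv_cancel f hf, one_mul]

theorem negLogDeriv_mul (hf : constantCoeff f ≠ 0) (hg : constantCoeff g ≠ 0) :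
    negLogDeriv (f * g) = negLogDeriv f + negLogDeriv g := by
  refine (eq_negLogDeriv_of_mul_eq (by simp [hf, hg]) ?_).symm
  rw [Derivation.leibniz, smul_eq_mul, smul_eq_mul]
  linear_combination g * mul_negLogDeriv hf + f * mul_negLogDeriv hg

theorem negLogDeriv_C_mul {c : k} (hc : c ≠ 0) (hf : constantCoeff f ≠ 0) :
    negLogDeriv (C c * f) = negLogDeriv f := by
  rw [negLogDeriv_mul (by simpa using hc) hf, add_eq_right]
  simp [negLogDeriv]

theorem constantCoeff_rescale (p : k) (f : k⟦X⟧) :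
    constantCoeff (rescale p f) = constantCoeff f := by
  rw [← coeff_zero_eq_constantCoeff_apply, coeff_rescale, pow_zero, one_mul,
    coeff_zero_eq_constantCoeff_apply]

theorem negLogDeriv_rescale (hf : constantCoeff f ≠ 0) (p : k) :
    negLogDeriv (rescale p f) = rescale p (negLogDeriv f) := by
  refine (eq_negLogDeriv_of_mul_eq (by rwa [constantCoeff_rescale]) ?_).symm
  rw [← map_mul, mul_negLogDeriv hf]
  ext n
  simp only [coeff_rescale, map_neg, coeff_X_mul_derivative]
  ring

theorem constantCoeff_negLogDeriv (f : k⟦X⟧) : constantCoeff (negLogDeriv f) = 0 := by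
  simp [negLogDeriv]

theorem X_mul_derivative_inv (f : k⟦X⟧) : X * d⁄dX k f⁻¹ = negLogDeriv f * f⁻¹ := by
  rw [derivative_inv', negLogDeriv]
  ring

/-- The series `f + c X f'`. If `Ψ(x) = x ^ ν f(x²)`, then `x Ψ'(x) = ν x ^ ν g(x²)` with `g` the
Euler shift of `f` with `c = 2 / ν`. -/
noncomputable def eulerShift (c : k) (f : k⟦X⟧) : k⟦X⟧ :=
  f + C c * (X * d⁄dX k f)

theorem constantCoeff_eulerShift (c : k) (f : k⟦X⟧) :
    constantCoeff (eulerShift c f) = constantCoeff f := by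
  simp [eulerShift]

theorem eulerShift_eq_mul (c : k) (hf : constantCoeff f ≠ 0) :
    eulerShift c f = f * (1 - C c * negLogDeriv f) := by
  rw [eulerShift]
  linear_combination C c * mul_negLogDeriv hf

/-- With `c = 2 / ν` and `F(z) = (z ^ ν f(z²)) ^ (1 / ν)`, the sum `E` of this series satisfies
`1 + z F''(z) / F'(z) = 1 - 2 E(z²)`. -/
noncomputable def convexityDefect (c : k) (f : k⟦X⟧) : k⟦X⟧ :=
  negLogDeriv (eulerShift c f) - C (1 - c / 2) * negLogDeriv f

theorem constantCoeff_convexityDefect (c : k) (f : k⟦X⟧) :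
    constantCoeff (convexityDefect c f) = 0 := by
  rw [convexityDefect, map_sub, map_mul, constantCoeff_negLogDeriv, constantCoeff_negLogDeriv,
    mul_zero, sub_zero]

end Field

section OrderedField

variable {k : Type*} [Field k] [LinearOrder k] [IsStrictOrderedRing k] {f g s : k⟦X⟧}

theorem nonnegCoeff_inv_of_coeff_nonpos (h0 : 0 < constantCoeff f)
    (h : ∀ n ≠ 0, coeff n f ≤ 0) : NonnegCoeff f⁻¹ := by
  intro n
  induction n using Nat.strong_induction_on with
  | _ n ih =>
    rw [PowerSeries.coeff_inv]
    split_ifs with hn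
    · exact inv_nonneg.2 h0.le
    · rw [neg_mul, ← mul_neg, ← sum_neg_distrib]
      refine mul_nonneg (inv_nonneg.2 h0.le) (sum_nonneg fun x hx => ?_)
      split_ifs with hlt
      · have hx : x.1 + x.2 = n := mem_antidiagonal.1 hx
        exact neg_nonneg.2 (mul_nonpos_of_nonpos_of_nonneg (h x.1 (by lia)) (ih x.2 hlt))
      · exact neg_zero.ge

theorem nonnegCoeff_negLogDeriv_of_coeff_nonpos (h0 : 0 < constantCoeff f)
    (h : ∀ n ≠ 0, coeff n f ≤ 0) : NonnegCoeff (negLogDeriv f) := by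
  refine NonnegCoeff.mul (fun n => ?_) (nonnegCoeff_inv_of_coeff_nonpos h0 h)
  rw [map_neg, coeff_X_mul_derivative, neg_nonneg]
  rcases eq_or_ne n 0 with rfl | hn
  · simp
  · exact mul_nonpos_of_nonneg_of_nonpos n.cast_nonneg (h n hn)

theorem nonnegCoeff_of_X_mul_derivative_eq_mul (hs : NonnegCoeff s)
    (hs0 : constantCoeff s = 0) (hg0 : 0 ≤ constantCoeff g) (h : X * d⁄dX k g = s * g) :
    NonnegCoeff g := by
  intro n
  induction n using Nat.strong_induction_on with
  | _ n ih =>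
    rcases Nat.eq_zero_or_pos n with rfl | hn
    · rwa [coeff_zero_eq_constantCoeff_apply]
    have hcoeff : (n : k) * coeff n g = ∑ x ∈ antidiagonal n, coeff x.1 s * coeff x.2 g := by
      rw [← coeff_X_mul_derivative, h, coeff_mul]
    refine nonneg_of_mul_nonneg_right (hcoeff.symm ▸ sum_nonneg fun x hx => ?_)
      (Nat.cast_pos.2 hn)
    have hx : x.1 + x.2 = n := mem_antidiagonal.1 hx
    rcases eq_or_ne x.1 0 with h0 | h0
    · rw [h0, coeff_zero_eq_constantCoeff_apply, hs0, zero_mul]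
    · exact mul_nonneg (hs _) (ih _ (by lia))

theorem nonnegCoeff_inv_of_negLogDeriv (h0 : 0 < constantCoeff f)
    (h : NonnegCoeff (negLogDeriv f)) : NonnegCoeff f⁻¹ :=
  nonnegCoeff_of_X_mul_derivative_eq_mul h (constantCoeff_negLogDeriv f) (by simp [h0.le])
    (X_mul_derivative_inv f)

theorem nonnegCoeff_rescale_mul_inv (h0 : 0 < constantCoeff f) (h : NonnegCoeff (negLogDeriv f))
    {p : k} (hp0 : 0 ≤ p) (hp1 : p ≤ 1) : NonnegCoeff (rescale p f * f⁻¹) := by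
  have hr0 : constantCoeff (rescale p f) ≠ 0 := by rw [constantCoeff_rescale]; exact h0.ne'
  refine nonnegCoeff_of_X_mul_derivative_eq_mul (s := negLogDeriv f - negLogDeriv (rescale p f))
    (fun n => ?_) (by simp [constantCoeff_negLogDeriv]) ?_ ?_
  · rw [map_sub, negLogDeriv_rescale h0.ne', coeff_rescale, sub_nonneg]
    exact mul_le_of_le_one_left (h n) (pow_le_one₀ hp0 hp1)
  · rw [map_mul, constantCoeff_rescale, constantCoeff_inv,
      mul_inv_cancel₀ h0.ne']
    exact zero_le_one
  · rw [Derivation.leibniz, smul_eq_mul, smul_eq_mul]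
    linear_combination rescale p f * X_mul_derivative_inv f + f⁻¹ * mul_negLogDeriv hr0

theorem nonnegCoeff_negLogDeriv_sub_C_mul_rescale (h0 : 0 < constantCoeff f)
    (h : NonnegCoeff (negLogDeriv f)) {p c : k} (hp0 : 0 ≤ p) (hp1 : p ≤ 1) (hc0 : 0 ≤ c)
    (hc1 : c < 1) : NonnegCoeff (negLogDeriv (f - C c * rescale p f)) := by
  have hfactor : f - C c * rescale p f = f * (1 - C c * (rescale p f * f⁻¹)) := by
    linear_combination (C c * rescale p f) * PowerSeries.mul_inv_cancel f h0.ne'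
  have hconst : 0 < constantCoeff (1 - C c * (rescale p f * f⁻¹)) := by
    simpa [constantCoeff_rescale, h0.ne'] using hc1
  rw [hfactor, negLogDeriv_mul h0.ne' hconst.ne']
  refine h.add (nonnegCoeff_negLogDeriv_of_coeff_nonpos hconst fun n hn => ?_)
  rw [map_sub, coeff_C_mul, coeff_one, if_neg hn, zero_sub, neg_nonpos]
  exact mul_nonneg hc0 (nonnegCoeff_rescale_mul_inv h0 h hp0 hp1 n)

theorem nonnegCoeff_negLogDeriv_one_sub_C_mul_negLogDeriv (h : NonnegCoeff (negLogDeriv f))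
    {c : k} (hc : 0 ≤ c) : NonnegCoeff (negLogDeriv (1 - C c * negLogDeriv f)) := by
  refine nonnegCoeff_negLogDeriv_of_coeff_nonpos (by simp [constantCoeff_negLogDeriv])
    fun n hn => ?_
  rw [map_sub, coeff_C_mul, coeff_one, if_neg hn, zero_sub, neg_nonpos]
  exact mul_nonneg hc (h n)

theorem coeff_negLogDeriv_le_coeff_negLogDeriv_eulerShift (h0 : constantCoeff f ≠ 0)
    (h : NonnegCoeff (negLogDeriv f)) {c : k} (hc : 0 ≤ c) (n : ℕ) :
    coeff n (negLogDeriv f) ≤ coeff n (negLogDeriv (eulerShift c f)) := by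
  rw [eulerShift_eq_mul c h0, negLogDeriv_mul h0 (by simp [constantCoeff_negLogDeriv]), map_add,
    le_add_iff_nonneg_right]
  exact nonnegCoeff_negLogDeriv_one_sub_C_mul_negLogDeriv h hc n

theorem min_mul_coeff_le_coeff_convexityDefect (h0 : constantCoeff f ≠ 0)
    (h : NonnegCoeff (negLogDeriv f)) {c : k} (hc : 0 ≤ c) (n : ℕ) :
    min 1 (c / 2) * coeff n (negLogDeriv (eulerShift c f)) ≤ coeff n (convexityDefect c f) := by
  have hle := coeff_negLogDeriv_le_coeff_negLogDeriv_eulerShift h0 h hc n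
  rw [convexityDefect, map_sub, coeff_C_mul]
  rcases le_total 1 (c / 2) with hc1 | hc1
  · rw [min_eq_left hc1]
    nlinarith [h n]
  · rw [min_eq_right hc1]
    nlinarith [h n]

theorem nonnegCoeff_convexityDefect (h0 : constantCoeff f ≠ 0) (h : NonnegCoeff (negLogDeriv f))
    {c : k} (hc : 0 ≤ c) : NonnegCoeff (convexityDefect c f) := fun n =>
  (mul_nonneg (by positivity)
    ((h n).trans (coeff_negLogDeriv_le_coeff_negLogDeriv_eulerShift h0 h hc n))).trans
    (min_mul_coeff_le_coeff_convexityDefect h0 h hc n)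

section Limit

variable [TopologicalSpace k] [OrderTopology k] {F : ℕ → k⟦X⟧}

theorem tendsto_coeff_inv (hf : constantCoeff f ≠ 0)
    (hF : ∀ n, Tendsto (fun K => coeff n (F K)) atTop (𝓝 (coeff n f))) (n : ℕ) :
    Tendsto (fun K => coeff n (F K)⁻¹) atTop (𝓝 (coeff n f⁻¹)) := by
  induction n using Nat.strong_induction_on with
  | _ n ih =>
    have hconst : Tendsto (fun K => (constantCoeff (F K))⁻¹) atTop (𝓝 (constantCoeff f)⁻¹) := by
      simpa only [coeff_zero_eq_constantCoeff_apply] using (hF 0).inv₀ (by simpa using hf)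
    simp_rw [fun g : k⟦X⟧ => PowerSeries.coeff_inv n g]
    split_ifs with hn
    · exact hconst
    · refine hconst.neg.mul (tendsto_finsetSum _ fun x _ => ?_)
      split_ifs with hlt
      · exact (hF x.1).mul (ih x.2 hlt)
      · exact tendsto_const_nhds

theorem NonnegCoeff.negLogDeriv_of_tendsto (hf : constantCoeff f ≠ 0)
    (hF : ∀ n, Tendsto (fun K => coeff n (F K)) atTop (𝓝 (coeff n f)))
    (h : ∀ K, NonnegCoeff (negLogDeriv (F K))) : NonnegCoeff (negLogDeriv f) := by
  intro n
  have hcoeff (g : k⟦X⟧) : coeff n (negLogDeriv g) =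
      ∑ x ∈ antidiagonal n, -(x.1 * coeff x.1 g) * coeff x.2 g⁻¹ := by
    simp only [negLogDeriv, coeff_mul _ _ g⁻¹, map_neg, coeff_X_mul_derivative]
  have hlim : Tendsto (fun K => coeff n (negLogDeriv (F K))) atTop
      (𝓝 (coeff n (negLogDeriv f))) := by
    simp_rw [hcoeff]
    exact tendsto_finsetSum _ fun x _ =>
      ((hF x.1).const_mul _).neg.mul (tendsto_coeff_inv hf hF x.2)
  exact ge_of_tendsto' hlim fun K => h K n

end Limit

end OrderedField

section QRecurrences

variable {k : Type*} [Field k] [LinearOrder k] [IsStrictOrderedRing k] {f : k⟦X⟧} {p b τ : k}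

theorem nonnegCoeff_negLogDeriv_of_qExponential_recurrence (h0 : 0 < constantCoeff f)
    (hp0 : 0 ≤ p) (hp1 : p < 1) (hτ : 0 ≤ τ)
    (hf : ∀ n, coeff (n + 1) f * (1 - p ^ (n + 1)) = -(τ * p ^ n * coeff n f)) :
    NonnegCoeff (negLogDeriv f) := by
  have hfactor : f = (1 - C τ * X) * rescale p f := by
    ext n
    rw [sub_mul, one_mul, mul_assoc, map_sub, coeff_C_mul, coeff_rescale]
    cases n with
    | zero => simp
    | succ n =>
      rw [coeff_succ_X_mul, coeff_rescale]
      linear_combination hf n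
  have hlog : negLogDeriv f = negLogDeriv (1 - C τ * X) + rescale p (negLogDeriv f) := by
    rw [← negLogDeriv_rescale h0.ne', ← negLogDeriv_mul (by simp)
      (by rw [constantCoeff_rescale]; exact h0.ne'), ← hfactor]
  have hlinear : NonnegCoeff (negLogDeriv (1 - C τ * X)) := by
    refine nonnegCoeff_negLogDeriv_of_coeff_nonpos (by simp) fun n hn => ?_
    rw [map_sub, coeff_C_mul, coeff_one, if_neg hn, coeff_X, zero_sub, neg_nonpos]
    positivity
  intro n
  rcases eq_or_ne n 0 with rfl | hn
  · rw [coeff_zero_eq_constantCoeff_apply, constantCoeff_negLogDeriv]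
  have hcoeff := congrArg (coeff n) hlog
  rw [map_add, coeff_rescale] at hcoeff
  have hfixed : (1 - p ^ n) * coeff n (negLogDeriv f) = coeff n (negLogDeriv (1 - C τ * X)) := by
    linear_combination hcoeff
  exact nonneg_of_mul_nonneg_right (hfixed ▸ hlinear n)
    (sub_pos.2 (pow_lt_one₀ hp0 hp1 hn))

theorem nonnegCoeff_negLogDeriv_of_tail_products (h0 : 0 < constantCoeff f)
    (hp0 : 0 ≤ p) (hp1 : p ≤ 1) (hb0 : 0 ≤ b) (hb1 : b < 1)
    (hf : NonnegCoeff (negLogDeriv (mk fun n => coeff n f * ∏ i ∈ range n, (1 - b * p ^ i))))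
    (K : ℕ) :
    NonnegCoeff (negLogDeriv (mk fun n => coeff n f * ∏ i ∈ range n, (1 - b * p ^ (K + i)))) := by
  set F : ℕ → k⟦X⟧ := fun K => mk fun n => coeff n f * ∏ i ∈ range n, (1 - b * p ^ (K + i))
    with hF
  have hF0 (K : ℕ) : 0 < constantCoeff (F K) := by
    simpa [hF] using h0
  have hbp (K : ℕ) : b * p ^ K < 1 :=
    (mul_le_of_le_one_right hb0 (pow_le_one₀ hp0 hp1)).trans_lt hb1
  have hstep (K : ℕ) :
      C (1 - b * p ^ K) * F (K + 1) = F K - C (b * p ^ K) * rescale p (F K) := by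
    ext n
    have hprod : (1 - b * p ^ K) * ∏ i ∈ range n, (1 - b * p ^ (K + 1 + i)) =
        (1 - b * p ^ (K + n)) * ∏ i ∈ range n, (1 - b * p ^ (K + i)) := by
      rw [mul_comm (1 - b * p ^ (K + n)), ← prod_range_succ (fun i => 1 - b * p ^ (K + i)),
        prod_range_succ', mul_comm]
      simp only [add_zero, add_assoc, add_comm 1]
    rw [coeff_C_mul, map_sub (coeff n), coeff_C_mul, coeff_rescale]
    simp only [hF, coeff_mk]
    rw [pow_add] at hprod
    linear_combination coeff n f * hprod
  change NonnegCoeff (negLogDeriv (F K))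
  induction K with
  | zero => simpa only [hF, zero_add] using hf
  | succ K ih =>
    rw [← negLogDeriv_C_mul (sub_pos.2 (hbp K)).ne' (hF0 _).ne', hstep]
    exact nonnegCoeff_negLogDeriv_sub_C_mul_rescale (hF0 K) ih hp0 hp1
      (mul_nonneg hb0 (pow_nonneg hp0 K)) (hbp K)

-- Multiplying the `n`-th coefficient by `∏ i < n, (1 - b pⁱ)` gives a `q`-exponential; the factors
-- are then pushed to infinity, as `∏ i < n, (1 - b p ^ (K + i))` with `K → ∞`.
theorem nonnegCoeff_negLogDeriv_of_hahnExton_recurrence [Archimedean k] [TopologicalSpace k]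
    [OrderTopology k] (h0 : 0 < constantCoeff f) (hp0 : 0 ≤ p) (hp1 : p < 1) (hb0 : 0 ≤ b)
    (hb1 : b < 1) (hτ : 0 ≤ τ)
    (hf : ∀ n, coeff (n + 1) f * ((1 - p ^ (n + 1)) * (1 - b * p ^ n)) =
      -(τ * p ^ n * coeff n f)) :
    NonnegCoeff (negLogDeriv f) := by
  have hbase : NonnegCoeff
      (negLogDeriv (mk fun n => coeff n f * ∏ i ∈ range n, (1 - b * p ^ i))) := by
    refine nonnegCoeff_negLogDeriv_of_qExponential_recurrence
      (by simpa using h0) hp0 hp1 hτ fun n => ?_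
    rw [coeff_mk, coeff_mk, prod_range_succ]
    linear_combination (∏ i ∈ range n, (1 - b * p ^ i)) * hf n
  refine NonnegCoeff.negLogDeriv_of_tendsto h0.ne' (fun n => ?_)
    (nonnegCoeff_negLogDeriv_of_tail_products h0 hp0 hp1.le hb0 hb1 hbase)
  have hpow (i : ℕ) : Tendsto (fun K : ℕ => p ^ (K + i)) atTop (𝓝 0) :=
    (tendsto_add_atTop_iff_nat i).2 (tendsto_pow_atTop_nhds_zero_of_lt_one hp0 hp1)
  have hprod : Tendsto (fun K : ℕ => ∏ i ∈ range n, (1 - b * p ^ (K + i))) atTop (𝓝 1) := by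
    simpa using tendsto_finsetProd (range n) fun i _ => ((hpow i).const_mul b).const_sub 1
  simpa only [coeff_mk, mul_one] using hprod.const_mul (coeff n f)

end QRecurrences

section Hutchinson

theorem alternatingSum_succ {R : Type*} [CommRing R] (n : ℕ) (b : ℕ → R) :
    ∑ i ∈ range (n + 1), (-1) ^ i * b i = b 0 - ∑ i ∈ range n, (-1) ^ i * b (i + 1) := by
  rw [sum_range_succ', pow_zero, one_mul, sub_eq_add_neg, ← sum_neg_distrib, add_comm]
  simp only [pow_succ, mul_neg, mul_one, neg_mul]

theorem constantCoeff_mul_coeff_succ_inv {k : Type*} [Field k] {f : k⟦X⟧} {e : ℕ → k}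
    (hf0 : constantCoeff f ≠ 0) (hf : ∀ n, coeff n f = (-1) ^ n * e n) (m : ℕ) :
    constantCoeff f * coeff (m + 1) f⁻¹ =
      ∑ i ∈ range (m + 1), (-1) ^ i * (e (i + 1) * coeff (m - i) f⁻¹) := by
  have hcoeff := congrArg (coeff (m + 1)) (PowerSeries.mul_inv_cancel f hf0)
  rw [coeff_mul, Finset.Nat.sum_antidiagonal_succ, coeff_one, if_neg m.succ_ne_zero,
    coeff_zero_eq_constantCoeff_apply, Finset.Nat.sum_antidiagonal_eq_sum_range_succ_mk] at hcoeff
  rw [eq_neg_of_add_eq_zero_left hcoeff, ← sum_neg_distrib]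
  refine sum_congr rfl fun i _ => ?_
  rw [hf, pow_succ]
  ring

theorem coeff_neg_derivative_mul_inv {k : Type*} [Field k] {f : k⟦X⟧} {e : ℕ → k}
    (hf : ∀ n, coeff n f = (-1) ^ n * e n) (m : ℕ) :
    coeff m (-d⁄dX k f * f⁻¹) =
      ∑ i ∈ range (m + 1), (-1) ^ i * ((i + 1) * e (i + 1) * coeff (m - i) f⁻¹) := by
  rw [coeff_mul, Finset.Nat.sum_antidiagonal_eq_sum_range_succ_mk]
  refine sum_congr rfl fun i _ => ?_
  rw [map_neg, coeff_derivative, hf, pow_succ]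
  ring

variable {k : Type*} [Field k] [LinearOrder k] [IsStrictOrderedRing k]

theorem alternatingSum_mem_Icc {n : ℕ} {b : ℕ → k} (h0 : ∀ i, 0 ≤ b i)
    (h : ∀ i, i + 1 < n → b (i + 1) ≤ b i) :
    ∑ i ∈ range n, (-1) ^ i * b i ∈ Set.Icc 0 (b 0) := by
  induction n generalizing b with
  | zero => simpa using h0 0
  | succ n ih =>
    obtain ⟨hlower, hupper⟩ := ih (fun i => h0 (i + 1)) fun i hi => h (i + 1) (by lia)
    rw [alternatingSum_succ]
    refine ⟨sub_nonneg.2 ?_, sub_le_self _ hlower⟩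
    rcases n with _ | n
    · simpa using h0 0
    · exact hupper.trans (h 0 (by lia))

theorem half_le_alternatingSum {n : ℕ} {b : ℕ → k} (h0 : ∀ i, 0 ≤ b i)
    (h : ∀ i < n, b (i + 1) ≤ b i / 2) :
    b 0 / 2 ≤ ∑ i ∈ range (n + 1), (-1) ^ i * b i := by
  rcases n with _ | n
  · simpa using half_le_self (h0 0)
  have htail := (alternatingSum_mem_Icc (n := n + 1) (fun i => h0 (i + 1)) fun i hi =>
    (h (i + 1) (by lia)).trans (half_le_self (h0 (i + 1)))).2
  rw [alternatingSum_succ]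
  linarith [h 0 (by lia)]

variable {f : k⟦X⟧} {e r : ℕ → k}

theorem coeff_inv_growth_of_hutchinson (hf : ∀ n, coeff n f = (-1) ^ n * e n) (he0 : 0 < e 0)
    (he_nonneg : ∀ n, 0 ≤ e n) (he : ∀ n, e (n + 1) = r n * e n) (hr : 0 ≤ r 0)
    (hr0 : ∀ n, r (n + 1) ≤ r 0 / 4) (m : ℕ) :
    0 ≤ coeff m f⁻¹ ∧ r 0 / 2 * coeff m f⁻¹ ≤ coeff (m + 1) f⁻¹ := by
  have hf0 : constantCoeff f = e 0 := by simpa using hf 0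
  induction m using Nat.strong_induction_on with
  | _ m ih =>
    have hnonneg : ∀ j ≤ m, 0 ≤ coeff j f⁻¹ := by
      rintro (_ | j) hj
      · simpa [hf0] using he0.le
      · exact (mul_nonneg (div_nonneg hr zero_le_two) (ih j hj).1).trans (ih j hj).2
    refine ⟨hnonneg m le_rfl, ?_⟩
    have hsum := half_le_alternatingSum (n := m)
      (fun i => mul_nonneg (he_nonneg (i + 1)) (hnonneg (m - i) (m.sub_le i))) fun i hi => ?_
    · rw [← constantCoeff_mul_coeff_succ_inv (hf0 ▸ he0.ne') hf, hf0, zero_add, he,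
        Nat.sub_zero] at hsum
      exact le_of_mul_le_mul_left (by linarith) he0
    · obtain ⟨j, hj⟩ : ∃ j, m - i = j + 1 := ⟨m - i - 1, by lia⟩
      rw [he (i + 1), hj, show m - (i + 1) = j by lia]
      calc r (i + 1) * e (i + 1) * coeff j f⁻¹
          ≤ r 0 / 4 * e (i + 1) * coeff j f⁻¹ := by
            gcongr
            exacts [hnonneg j (by lia), he_nonneg _, hr0 i]
        _ = e (i + 1) * (r 0 / 2 * coeff j f⁻¹) / 2 := by ring
        _ ≤ e (i + 1) * coeff (j + 1) f⁻¹ / 2 := by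
            gcongr
            exacts [he_nonneg _, (ih j (by lia)).2]

theorem nonnegCoeff_neg_derivative_mul_inv_of_hutchinson
    (hf : ∀ n, coeff n f = (-1) ^ n * e n) (he0 : 0 < e 0) (he_nonneg : ∀ n, 0 ≤ e n)
    (he : ∀ n, e (n + 1) = r n * e n) (hr : ∀ n, 0 ≤ r n)
    (hr0 : ∀ n, r (n + 1) ≤ r 0 / 4) :
    NonnegCoeff (-d⁄dX k f * f⁻¹) := by
  have hinv := coeff_inv_growth_of_hutchinson hf he0 he_nonneg he (hr 0) hr0
  intro m
  rw [coeff_neg_derivative_mul_inv hf]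
  refine (alternatingSum_mem_Icc (fun i => mul_nonneg
    (mul_nonneg (by positivity) (he_nonneg (i + 1))) (hinv (m - i)).1) fun i hi => ?_).1
  obtain ⟨j, hj⟩ : ∃ j, m - i = j + 1 := ⟨m - i - 1, by lia⟩
  rw [he (i + 1), hj, show m - (i + 1) = j by lia, Nat.cast_succ]
  have hterm : 0 ≤ e (i + 1) * coeff j f⁻¹ := mul_nonneg (he_nonneg _) (hinv j).1
  calc (i + 1 + 1 : k) * (r (i + 1) * e (i + 1)) * coeff j f⁻¹
      = (i + 2) * (e (i + 1) * coeff j f⁻¹) * r (i + 1) := by ring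
    _ ≤ (2 * (i + 1)) * (e (i + 1) * coeff j f⁻¹) * (r 0 / 4) := by
        have := i.cast_nonneg (α := k)
        gcongr
        exacts [hr _, by linarith, hr0 i]
    _ = (i + 1) * e (i + 1) * (r 0 / 2 * coeff j f⁻¹) := by ring
    _ ≤ (i + 1) * e (i + 1) * coeff (j + 1) f⁻¹ := by
        have := he_nonneg (i + 1)
        gcongr
        exact (hinv j).2

-- The coefficients of `-f' f⁻¹` are alternating sums whose terms decrease, because the coefficients
-- of `f⁻¹` grow at least by the factor `r 0 / 2`.
theorem nonnegCoeff_negLogDeriv_of_hutchinson (h0 : 0 < constantCoeff f)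
    (hf : ∀ n, coeff (n + 1) f = -(r n * coeff n f)) (hr : ∀ n, 0 ≤ r n)
    (hr4 : ∀ n, r (n + 1) ≤ r n / 4) : NonnegCoeff (negLogDeriv f) := by
  set e : ℕ → k := fun n => (-1) ^ n * coeff n f with he
  have hfe (n : ℕ) : coeff n f = (-1) ^ n * e n := by
    rw [he, ← mul_assoc, ← mul_pow, neg_one_mul, neg_neg, one_pow, one_mul]
  have he_succ (n : ℕ) : e (n + 1) = r n * e n := by
    simp only [he, hf, pow_succ]
    ring
  have he0 : 0 < e 0 := by simpa [he] using h0
  have he_nonneg (n : ℕ) : 0 ≤ e n := by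
    induction n with
    | zero => exact he0.le
    | succ n ih => exact he_succ n ▸ mul_nonneg (hr n) ih
  have hr0 (n : ℕ) : r (n + 1) ≤ r 0 / 4 := by
    induction n with
    | zero => exact hr4 0
    | succ n ih => linarith [hr4 (n + 1), hr 0]
  have hX : NonnegCoeff (X : k⟦X⟧) := fun n => by rw [coeff_X]; positivity
  rw [negLogDeriv, ← mul_neg, mul_assoc]
  exact hX.mul (nonnegCoeff_neg_derivative_mul_inv_of_hutchinson hfe he0 he_nonneg he_succ
    hr hr0)

end Hutchinson

end FormalPowerSeries

section PowerSums

open PowerSeries Finset Filter Topology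

section HasPowerSum

variable {R 𝕜 : Type*} [CommRing R] [RCLike 𝕜] [Algebra R 𝕜] {f g : R⟦X⟧} {z s t : 𝕜}

/-- The series `f` converges (absolutely, as `𝕜` is `ℝ` or `ℂ`) at the point `z`, with sum `s`. The
coefficients may lie in a smaller ring than `z`, so that real series can be summed at complex
points. -/
def HasPowerSum (f : R⟦X⟧) (z s : 𝕜) : Prop :=
  HasSum (fun n => coeff n f • z ^ n) s

/-- The sum of `f` at `z`, with junk value `0` if the series does not converge. -/
noncomputable def powerSum (f : R⟦X⟧) (z : 𝕜) : 𝕜 :=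
  ∑' n, coeff n f • z ^ n

theorem HasPowerSum.powerSum_eq (h : HasPowerSum f z s) : powerSum f z = s :=
  h.tsum_eq

theorem HasPowerSum.add (hf : HasPowerSum f z s) (hg : HasPowerSum g z t) :
    HasPowerSum (f + g) z (s + t) := by
  simpa only [HasPowerSum, map_add, add_smul] using HasSum.add hf hg

theorem HasPowerSum.neg (hf : HasPowerSum f z s) : HasPowerSum (-f) z (-s) := by
  simpa only [HasPowerSum, map_neg, neg_smul] using HasSum.neg hf

theorem HasPowerSum.mul (hf : HasPowerSum f z s) (hg : HasPowerSum g z t) :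
    HasPowerSum (f * g) z (s * t) := by
  have hterm : (fun n => coeff n (f * g) • z ^ n) =
      fun n => ∑ x ∈ antidiagonal n, coeff x.1 f • z ^ x.1 * coeff x.2 g • z ^ x.2 := by
    funext n
    rw [coeff_mul, sum_smul]
    refine sum_congr rfl fun x hx => ?_
    rw [smul_mul_smul_comm, ← pow_add, mem_antidiagonal.1 hx]
  have hf' := hf.summable.norm
  have hg' := hg.summable.norm
  rw [HasPowerSum, hterm, ← hf.tsum_eq, ← hg.tsum_eq,
    tsum_mul_tsum_eq_tsum_sum_antidiagonal_of_summable_norm hf' hg']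
  exact (summable_norm_sum_mul_antidiagonal_of_summable_norm hf' hg').of_norm.hasSum

theorem hasPowerSum_C (c : R) (z : 𝕜) : HasPowerSum (C c) z (algebraMap R 𝕜 c) := by
  have h := hasSum_single (f := fun n => coeff n (C c) • z ^ n) 0 fun n hn => by
    rw [coeff_C, if_neg hn, zero_smul]
  simpa only [HasPowerSum, coeff_zero_C, pow_zero, Algebra.algebraMap_eq_smul_one] using h

theorem hasPowerSum_X (z : 𝕜) : HasPowerSum (X : R⟦X⟧) z z := by
  have h := hasSum_single (f := fun n => coeff n (X : R⟦X⟧) • z ^ n) 1 fun n hn => by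
    rw [coeff_X, if_neg hn, zero_smul]
  simpa only [HasPowerSum, coeff_one_X, pow_one, one_smul] using h

theorem powerSum_zero (f : R⟦X⟧) : powerSum f (0 : 𝕜) = algebraMap R 𝕜 (constantCoeff f) := by
  rw [powerSum, tsum_eq_single 0 fun n hn => by rw [zero_pow hn, smul_zero], pow_zero,
    coeff_zero_eq_constantCoeff_apply, Algebra.algebraMap_eq_smul_one]

theorem hasPowerSum_map_algebraMap : HasPowerSum (map (algebraMap R 𝕜) f) z s ↔
    HasPowerSum f z s := by
  simp only [HasPowerSum, coeff_map, algebraMap_smul]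

end HasPowerSum

theorem hasFPowerSeriesAt_of_hasPowerSum {𝕜 : Type*} [RCLike 𝕜] {f : 𝕜⟦X⟧} {F : 𝕜 → 𝕜}
    (hf : ∀ᶠ z in 𝓝 0, HasPowerSum f z (F z)) :
    HasFPowerSeriesAt F (FormalMultilinearSeries.ofScalars 𝕜 fun n => coeff n f) 0 := by
  rw [hasFPowerSeriesAt_iff]
  filter_upwards [hf] with z hz
  simpa only [HasPowerSum, FormalMultilinearSeries.coeff_ofScalars, zero_add, smul_eq_mul,
    mul_comm] using hz

theorem eq_of_eventually_hasPowerSum {𝕜 : Type*} [RCLike 𝕜] {f g : 𝕜⟦X⟧} {F : 𝕜 → 𝕜}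
    (hf : ∀ᶠ z in 𝓝 0, HasPowerSum f z (F z)) (hg : ∀ᶠ z in 𝓝 0, HasPowerSum g z (F z)) :
    f = g := by
  ext n
  have heq := (hasFPowerSeriesAt_of_hasPowerSum hf).eq_formalMultilinearSeries
    (hasFPowerSeriesAt_of_hasPowerSum hg)
  simpa only [FormalMultilinearSeries.coeff_ofScalars] using
    congrArg (fun p => FormalMultilinearSeries.coeff p n) heq

section RealCoefficients

variable {𝕜 : Type*} [RCLike 𝕜] {f g : ℝ⟦X⟧}

theorem powerSum_ofReal (f : ℝ⟦X⟧) (x : ℝ) : powerSum f (x : 𝕜) = ((powerSum f x : ℝ) : 𝕜) := by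
  simp only [powerSum, RCLike.ofReal_tsum, smul_eq_mul, RCLike.ofReal_mul, RCLike.ofReal_pow,
    RCLike.real_smul_eq_coe_mul]

theorem powerSum_zero_ne_zero_iff : powerSum f (0 : 𝕜) ≠ 0 ↔ constantCoeff f ≠ 0 := by
  rw [powerSum_zero, map_ne_zero]

theorem NonnegCoeff.norm_le (hf : NonnegCoeff f) {z s : 𝕜} {t : ℝ} (hs : HasPowerSum f z s)
    (ht : HasPowerSum f ‖z‖ t) : ‖s‖ ≤ t :=
  hs.norm_le_of_bounded ht fun n => by
    rw [norm_smul, norm_pow, Real.norm_of_nonneg (hf n), smul_eq_mul]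

theorem NonnegCoeff.nonneg (hf : NonnegCoeff f) {x s : ℝ} (hx : 0 ≤ x) (hs : HasPowerSum f x s) :
    0 ≤ s :=
  hs.nonneg fun n => mul_nonneg (hf n) (pow_nonneg hx n)

-- As the constant term vanishes, `s ≤ (x / y) * t`.
theorem NonnegCoeff.lt_of_lt (hf : NonnegCoeff f) (h0 : constantCoeff f = 0) {x y s t : ℝ}
    (hx : 0 ≤ x) (hxy : x < y) (hs : HasPowerSum f x s) (ht : HasPowerSum f y t) (ht0 : 0 < t) :
    s < t := by
  have hy : 0 < y := hx.trans_lt hxy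
  have hratio : x / y < 1 := (div_lt_one hy).2 hxy
  have hle : s ≤ x / y * t := by
    refine hasSum_le (fun n => ?_) hs (HasSum.mul_left (x / y) ht)
    rcases n with _ | n
    · simp [h0]
    have hpow : x ^ (n + 1) = (x / y) ^ (n + 1) * y ^ (n + 1) := by
      rw [← mul_pow, div_mul_cancel₀ x hy.ne']
    have hmono : (x / y) ^ (n + 1) ≤ x / y :=
      pow_le_of_le_one (by positivity) hratio.le n.succ_ne_zero
    have hcoeff := hf (n + 1)
    calc coeff (n + 1) f • x ^ (n + 1)
        = (x / y) ^ (n + 1) * (coeff (n + 1) f * y ^ (n + 1)) := by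
          rw [hpow, smul_eq_mul]
          ring
      _ ≤ x / y * (coeff (n + 1) f * y ^ (n + 1)) := by gcongr
  exact hle.trans_lt (mul_lt_of_lt_one_left ht0 hratio)

theorem HasPowerSum.continuousOn_powerSum {x s : ℝ} (h : HasPowerSum f x s) :
    ContinuousOn (powerSum f : ℝ → ℝ) (Set.Icc 0 x) := by
  refine continuousOn_tsum (fun n => by fun_prop) h.summable.norm fun n y hy => ?_
  rw [norm_smul, norm_smul, norm_pow, norm_pow, Real.norm_of_nonneg hy.1,
    Real.norm_of_nonneg (hy.1.trans hy.2)]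
  gcongr
  exacts [hy.1, hy.2]

/-- A real power series with infinite radius of convergence. -/
def IsEntire (f : ℝ⟦X⟧) : Prop :=
  ∀ r : ℝ, Summable fun n => coeff n f * r ^ n

theorem IsEntire.hasPowerSum (hf : IsEntire f) (z : 𝕜) : HasPowerSum f z (powerSum f z) := by
  refine (Summable.of_norm ((hf ‖z‖).norm.congr fun n => ?_)).hasSum
  simp only [norm_smul, norm_mul, norm_pow, norm_norm]

theorem IsEntire.derivative (hf : IsEntire f) : IsEntire (d⁄dX ℝ f) := by
  intro r
  refine Summable.of_norm_bounded
    ((summable_nat_add_iff 1).2 (hf (2 * (|r| + 1))).norm) fun n => ?_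
  have hn : (n + 1 : ℝ) ≤ 2 ^ (n + 1) := by exact_mod_cast (n + 1).lt_two_pow_self.le
  have hr : |r| ^ n ≤ (|r| + 1) ^ (n + 1) :=
    (pow_le_pow_left₀ (abs_nonneg r) (by linarith) n).trans
      (pow_le_pow_right₀ (by linarith [abs_nonneg r]) n.le_succ)
  simp only [Real.norm_eq_abs]
  calc |coeff n (d⁄dX ℝ f) * r ^ n| = |coeff (n + 1) f| * ((n + 1) * |r| ^ n) := by
        rw [coeff_derivative, abs_mul, abs_mul, abs_pow,
          abs_of_nonneg (a := (n + 1 : ℝ)) (by positivity), mul_assoc]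
    _ ≤ |coeff (n + 1) f| * (2 ^ (n + 1) * (|r| + 1) ^ (n + 1)) := by gcongr
    _ = |coeff (n + 1) f * (2 * (|r| + 1)) ^ (n + 1)| := by
        rw [abs_mul, abs_pow, abs_of_nonneg (a := 2 * (|r| + 1)) (by positivity), mul_pow]

theorem IsEntire.hasSum_derivative (hf : IsEntire f) (z : 𝕜) :
    HasSum (fun n => coeff n f • (n * z ^ (n - 1))) (powerSum (d⁄dX ℝ f) z) := by
  rw [← hasSum_nat_add_iff' 1, sum_range_one, Nat.cast_zero, zero_mul, smul_zero, sub_zero]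
  refine (hf.derivative.hasPowerSum z).congr_fun fun n => ?_
  rw [coeff_derivative, n.add_sub_cancel, mul_smul, ← Nat.cast_succ, Nat.cast_smul_eq_nsmul,
    nsmul_eq_mul]

theorem IsEntire.hasDerivAt (hf : IsEntire f) (z : 𝕜) :
    HasDerivAt (powerSum f) (powerSum (d⁄dX ℝ f) z) z := by
  have hz : z ∈ Metric.ball (0 : 𝕜) (‖z‖ + 1) := by simp
  have hterm (n : ℕ) (w : 𝕜) :
      HasDerivAt (fun w => coeff n f • w ^ n) (coeff n f • (n * w ^ (n - 1))) w :=
    (hasDerivAt_pow n w).fun_const_smul (coeff n f)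
  rw [← (hf.hasSum_derivative z).tsum_eq]
  refine hasDerivAt_tsum_of_isPreconnected (hf.hasSum_derivative (‖z‖ + 1)).summable.norm
    Metric.isOpen_ball (convex_ball 0 _).isPreconnected
    (fun n w _ => hterm n w) (fun n w hw => ?_) hz
    (hf.hasPowerSum z).summable hz
  have hw : ‖w‖ ≤ ‖z‖ + 1 := (mem_ball_zero_iff.1 hw).le
  rw [norm_smul, norm_smul, norm_mul, norm_mul, norm_pow, norm_pow, RCLike.norm_natCast,
    RCLike.norm_natCast, Real.norm_of_nonneg (r := ‖z‖ + 1) (by positivity)]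
  gcongr

theorem IsEntire.continuous_powerSum (hf : IsEntire f) : Continuous (powerSum f : 𝕜 → 𝕜) :=
  continuous_iff_continuousAt.2 fun z => (hf.hasDerivAt z).continuousAt

theorem IsEntire.hasPowerSum_eulerShift (hf : IsEntire f) (c : ℝ) (z : 𝕜) :
    HasPowerSum (eulerShift c f) z (powerSum f z + c * (z * powerSum (d⁄dX ℝ f) z)) :=
  (hf.hasPowerSum z).add
    ((hasPowerSum_C c z).mul ((hasPowerSum_X z).mul (hf.derivative.hasPowerSum z)))

theorem isEntire_eulerShift (hf : IsEntire f) (c : ℝ) : IsEntire (eulerShift c f) := fun r =>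
  (hf.hasPowerSum_eulerShift c r).summable

-- The reciprocal has a Taylor series on the zero-free disc, which must be the formal inverse.
theorem IsEntire.exists_hasPowerSum_inv (hf : IsEntire f) {R : ℝ}
    (hne : ∀ z : ℂ, ‖z‖ < R → powerSum f z ≠ 0) {z : ℂ} (hz : ‖z‖ < R) :
    ∃ s, HasPowerSum f⁻¹ z s := by
  set G : ℂ → ℂ := fun w => (powerSum f w)⁻¹
  set T : ℂ⟦X⟧ := mk fun n => (n.factorial : ℂ)⁻¹ * iteratedDeriv n G 0 with hT
  have hTaylor {w : ℂ} (hw : ‖w‖ < R) : HasPowerSum T w (G w) := by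
    have hG : DifferentiableOn ℂ G (Metric.ball 0 R) := fun v hv =>
      ((hf.hasDerivAt v).differentiableAt.inv
        (hne v (mem_ball_zero_iff.1 hv))).differentiableWithinAt
    refine (Complex.hasSum_taylorSeries_on_ball hG (mem_ball_zero_iff.2 hw)).congr_fun fun n => ?_
    simp only [hT, coeff_mk, sub_zero, smul_eq_mul]
    ring
  have hprod : map (algebraMap ℝ ℂ) f * T = 1 := by
    refine eq_of_eventually_hasPowerSum (F := fun _ => 1) ?_ (Eventually.of_forall fun w => by
      simpa using hasPowerSum_C (1 : ℂ) w)
    filter_upwards [Metric.ball_mem_nhds (0 : ℂ) ((norm_nonneg z).trans_lt hz)] with w hw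
    rw [mem_ball_zero_iff] at hw
    rw [← mul_inv_cancel₀ (hne w hw)]
    exact (hasPowerSum_map_algebraMap.2 (hf.hasPowerSum w)).mul (hTaylor hw)
  have hconst : constantCoeff f ≠ 0 :=
    powerSum_zero_ne_zero_iff.1 (hne 0 (by simpa using (norm_nonneg z).trans_lt hz))
  have hprod' : map (algebraMap ℝ ℂ) f * map (algebraMap ℝ ℂ) f⁻¹ = 1 := by
    rw [← map_mul, PowerSeries.mul_inv_cancel f hconst, map_one]
  have hTinv : T = map (algebraMap ℝ ℂ) f⁻¹ := by
    linear_combination map (algebraMap ℝ ℂ) f⁻¹ * hprod - T * hprod'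
  exact ⟨G z, hasPowerSum_map_algebraMap.1 (hTinv ▸ hTaylor hz)⟩

section ZeroFree

variable {R : ℝ} {z : 𝕜}

theorem IsEntire.hasPowerSum_inv_powerSum_inv (hf : IsEntire f)
    (hne : ∀ z : ℂ, ‖z‖ < R → powerSum f z ≠ 0) (hz : ‖z‖ < R) :
    HasPowerSum f⁻¹ z (powerSum f⁻¹ z) := by
  obtain ⟨s, hs⟩ := hf.exists_hasPowerSum_inv hne (z := (‖z‖ : ℂ)) (by simpa using hz)
  refine (Summable.of_norm (hs.summable.norm.congr fun n => ?_)).hasSum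
  simp only [norm_smul, norm_pow, Complex.norm_real, norm_norm]

theorem IsEntire.powerSum_mul_powerSum_inv (hf : IsEntire f)
    (hne : ∀ z : ℂ, ‖z‖ < R → powerSum f z ≠ 0) (hz : ‖z‖ < R) :
    powerSum f z * powerSum f⁻¹ z = 1 := by
  have hconst : constantCoeff f ≠ 0 :=
    powerSum_zero_ne_zero_iff.1 (hne 0 (by simpa using (norm_nonneg z).trans_lt hz))
  have hmul := (hf.hasPowerSum z).mul (hf.hasPowerSum_inv_powerSum_inv hne hz)
  rw [PowerSeries.mul_inv_cancel f hconst] at hmul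
  simpa using hmul.unique (hasPowerSum_C (1 : ℝ) z)

theorem IsEntire.hasPowerSum_inv (hf : IsEntire f)
    (hne : ∀ z : ℂ, ‖z‖ < R → powerSum f z ≠ 0) (hz : ‖z‖ < R) :
    HasPowerSum f⁻¹ z (powerSum f z)⁻¹ := by
  rw [← eq_inv_of_mul_eq_one_right (hf.powerSum_mul_powerSum_inv hne hz)]
  exact hf.hasPowerSum_inv_powerSum_inv hne hz

theorem IsEntire.hasPowerSum_negLogDeriv (hf : IsEntire f)
    (hne : ∀ z : ℂ, ‖z‖ < R → powerSum f z ≠ 0) (hz : ‖z‖ < R) :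
    HasPowerSum (negLogDeriv f) z (-(z * powerSum (d⁄dX ℝ f) z / powerSum f z)) := by
  rw [div_eq_mul_inv, ← neg_mul]
  exact ((hasPowerSum_X z).mul (hf.derivative.hasPowerSum z)).neg.mul (hf.hasPowerSum_inv hne hz)

theorem IsEntire.hasPowerSum_convexityDefect (hf : IsEntire f) {c : ℝ}
    (hne : ∀ z : ℂ, ‖z‖ < R → powerSum f z ≠ 0)
    (hne' : ∀ z : ℂ, ‖z‖ < R → powerSum (eulerShift c f) z ≠ 0) (hz : ‖z‖ < R) :
    HasPowerSum (convexityDefect c f) z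
      ((1 - c / 2) * (z * powerSum (d⁄dX ℝ f) z / powerSum f z) -
        z * powerSum (d⁄dX ℝ (eulerShift c f)) z / powerSum (eulerShift c f) z) := by
  convert ((isEntire_eulerShift hf c).hasPowerSum_negLogDeriv hne' hz).add
    ((hasPowerSum_C (1 - c / 2) z).mul (hf.hasPowerSum_negLogDeriv hne hz)).neg using 1
  · rw [convexityDefect, sub_eq_add_neg]
  · simp only [map_sub, map_one, map_div₀, map_ofNat, RCLike.algebraMap_eq_ofReal]
    ring

end ZeroFree

end RealCoefficients

end PowerSums

section LaguerreType

open PowerSeries Set Filter Topology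

/-- The class of real entire functions `f` of genus zero with only positive zeros `a₁, a₂, …` and
`f 0 > 0`, encoded by `-z f' z / f z = ∑ₙ (∑ₖ aₖ⁻ⁿ) zⁿ` having nonnegative coefficients. This
weaker requirement is all that is used of the zeros, and it can be checked on coefficients. -/
structure IsLaguerreType (f : ℝ⟦X⟧) : Prop where
  isEntire : IsEntire f
  constantCoeff_pos : 0 < constantCoeff f
  nonnegCoeff_negLogDeriv : NonnegCoeff (negLogDeriv f)

theorem isLaguerreType_eulerShift {f : ℝ⟦X⟧} (h : IsLaguerreType f) {c : ℝ} (hc : 0 ≤ c) :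
    IsLaguerreType (eulerShift c f) where
  isEntire := isEntire_eulerShift h.isEntire c
  constantCoeff_pos := by simpa only [constantCoeff_eulerShift] using h.constantCoeff_pos
  nonnegCoeff_negLogDeriv n := (h.nonnegCoeff_negLogDeriv n).trans
    (coeff_negLogDeriv_le_coeff_negLogDeriv_eulerShift h.constantCoeff_pos.ne'
      h.nonnegCoeff_negLogDeriv hc n)

namespace IsLaguerreType

variable {f : ℝ⟦X⟧} {R : ℝ}

theorem norm_inv_powerSum_le (h : IsLaguerreType f)
    (hne : ∀ z : ℂ, ‖z‖ < R → powerSum f z ≠ 0) {z : ℂ} (hz : ‖z‖ < R) :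
    ‖(powerSum f z)⁻¹‖ ≤ (powerSum f ‖z‖)⁻¹ :=
  (nonnegCoeff_inv_of_negLogDeriv h.constantCoeff_pos h.nonnegCoeff_negLogDeriv).norm_le
    (h.isEntire.hasPowerSum_inv hne hz) (h.isEntire.hasPowerSum_inv hne (by rwa [norm_norm]))

theorem norm_powerSum_norm_le (h : IsLaguerreType f)
    (hne : ∀ z : ℂ, ‖z‖ < R → powerSum f z ≠ 0) {z : ℂ} (hz : ‖z‖ ≤ R) (hR : R ≠ 0) :
    ‖powerSum f ‖z‖‖ ≤ ‖powerSum f z‖ := by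
  have hclosed : IsClosed {z : ℂ | ‖powerSum f ‖z‖‖ ≤ ‖powerSum f z‖} :=
    isClosed_le (h.isEntire.continuous_powerSum.comp continuous_norm).norm
      h.isEntire.continuous_powerSum.norm
  refine closure_minimal (fun w hw => ?_) hclosed
    (by rwa [closure_ball 0 hR, mem_closedBall_zero_iff])
  rw [mem_ball_zero_iff] at hw
  have hnorm := norm_pos_iff.2 (hne w hw)
  have hinv := h.norm_inv_powerSum_le hne hw
  rw [norm_inv] at hinv
  have hpos := inv_pos.1 ((inv_pos.2 hnorm).trans_le hinv)
  rw [mem_ofPred_eq, Real.norm_of_nonneg hpos.le]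
  exact (inv_le_inv₀ hnorm hpos).1 hinv

-- A complex zero of least modulus forces a real one of the same modulus.
theorem powerSum_complex_ne_zero (h : IsLaguerreType f) (hR : ∀ x ∈ Ioo 0 R, powerSum f x ≠ 0)
    {z : ℂ} (hz : ‖z‖ < R) : powerSum f z ≠ 0 := by
  intro hz0
  have hcompact : IsCompact (Metric.closedBall (0 : ℂ) ‖z‖ ∩ {w | powerSum f w = 0}) :=
    (isCompact_closedBall 0 ‖z‖).inter_right
      (isClosed_eq h.isEntire.continuous_powerSum continuous_const)
  obtain ⟨w, ⟨hwz, hw0⟩, hmin⟩ :=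
    hcompact.exists_isMinOn ⟨z, by simp, hz0⟩ continuous_norm.continuousOn
  rw [mem_closedBall_zero_iff] at hwz
  have hw : w ≠ 0 := by
    rintro rfl
    exact powerSum_zero_ne_zero_iff.2 h.constantCoeff_pos.ne' hw0
  have hne : ∀ v : ℂ, ‖v‖ < ‖w‖ → powerSum f v ≠ 0 := fun v hv hv0 =>
    hv.not_ge (hmin ⟨mem_closedBall_zero_iff.2 (hv.le.trans hwz), hv0⟩)
  have hreal := h.norm_powerSum_norm_le hne le_rfl (norm_ne_zero_iff.2 hw)
  rw [hw0, norm_zero, norm_le_zero_iff] at hreal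
  exact hR ‖w‖ ⟨norm_pos_iff.2 hw, hwz.trans_lt hz⟩ hreal

theorem powerSum_ne_zero (h : IsLaguerreType f) (hR : ∀ x ∈ Ioo 0 R, powerSum f x ≠ 0) {𝕜 : Type*}
    [RCLike 𝕜] {z : 𝕜} (hz : ‖z‖ < R) : powerSum f z ≠ 0 :=
  left_ne_zero_of_mul_eq_one
    (h.isEntire.powerSum_mul_powerSum_inv (fun _ => h.powerSum_complex_ne_zero hR) hz)

theorem powerSum_pos (h : IsLaguerreType f) (hR : ∀ x ∈ Ioo 0 R, powerSum f x ≠ 0) {x : ℝ}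
    (hx : x ∈ Ico 0 R) : 0 < powerSum f x := by
  have hnorm : ‖x‖ < R := (Real.norm_of_nonneg hx.1).trans_lt hx.2
  have hinv := (nonnegCoeff_inv_of_negLogDeriv h.constantCoeff_pos
    h.nonnegCoeff_negLogDeriv).nonneg hx.1
    (h.isEntire.hasPowerSum_inv (fun _ => h.powerSum_complex_ne_zero hR) hnorm)
  exact (inv_nonneg.1 hinv).lt_of_ne' (h.powerSum_ne_zero hR hnorm)

end IsLaguerreType

theorem IsEntire.hasDerivAt_rpow_mul_powerSum {f : ℝ⟦X⟧} (hf : IsEntire f) {ν x : ℝ} (hν : ν ≠ 0)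
    (hx : 0 < x) : HasDerivAt (fun t => t ^ ν * powerSum f t)
      (ν * x ^ (ν - 1) * powerSum (eulerShift ν⁻¹ f) x) x := by
  refine ((Real.hasDerivAt_rpow_const (.inl hx.ne')).mul (hf.hasDerivAt x)).congr_deriv ?_
  rw [(hf.hasPowerSum_eulerShift ν⁻¹ x).powerSum_eq, Real.rpow_sub_one hx.ne']
  simp only [RCLike.ofReal_real_eq_id, id]
  field_simp

theorem IsEntire.continuous_rpow_mul_powerSum {f : ℝ⟦X⟧} (hf : IsEntire f) {ν : ℝ} (hν : 0 ≤ ν) :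
    Continuous fun t : ℝ => t ^ ν * powerSum f t :=
  (Real.continuous_rpow_const hν).mul hf.continuous_powerSum

-- Rolle's theorem for `t ^ c⁻¹ * f t`, which also vanishes at `0`.
theorem IsEntire.powerSum_ne_zero_of_eulerShift {f : ℝ⟦X⟧} (hf : IsEntire f) {c R : ℝ} (hc : 0 < c)
    (hR : ∀ x ∈ Ioo 0 R, powerSum (eulerShift c f) x ≠ 0) {x : ℝ} (hx : x ∈ Ioc 0 R) :
    powerSum f x ≠ 0 := by
  intro hzero
  have hc' : c⁻¹ ≠ 0 := inv_ne_zero hc.ne'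
  obtain ⟨y, hy, hderiv⟩ := exists_hasDerivAt_eq_zero hx.1
    (hf.continuous_rpow_mul_powerSum (inv_nonneg.2 hc.le)).continuousOn
    (by rw [Real.zero_rpow hc', hzero, zero_mul, mul_zero])
    fun y hy => hf.hasDerivAt_rpow_mul_powerSum hc' hy.1
  rw [inv_inv] at hderiv
  exact hR y ⟨hy.1, hy.2.trans_le hx.2⟩ ((mul_eq_zero_iff_left
    (mul_ne_zero hc' (Real.rpow_pos_of_pos hy.1 _).ne')).1 hderiv)

namespace IsLaguerreType

variable {f : ℝ⟦X⟧} {c η : ℝ} {𝕜 : Type*} [RCLike 𝕜] {z : 𝕜}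

theorem hasPowerSum_negLogDeriv (h : IsLaguerreType f) (hη : ∀ x ∈ Ioo 0 η, powerSum f x ≠ 0)
    (hz : ‖z‖ < η) :
    HasPowerSum (negLogDeriv f) z (-(z * powerSum (d⁄dX ℝ f) z / powerSum f z)) :=
  h.isEntire.hasPowerSum_negLogDeriv (fun _ => h.powerSum_ne_zero hη) hz

-- If `-x f' x / f x ≤ B` on `(0, η)`, then `x ^ B * f x` increases from positive values to `0`.
theorem exists_lt_powerSum_negLogDeriv (h : IsLaguerreType f)
    (hη : IsLeast {x | 0 < x ∧ powerSum f x = 0} η) (B : ℝ) :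
    ∃ x ∈ Ioo 0 η, B < powerSum (negLogDeriv f) x := by
  wlog hB : 0 < B generalizing B
  · obtain ⟨x, hx, hlt⟩ := this 1 one_pos
    exact ⟨x, hx, by linarith⟩
  by_contra! hbound
  have hne : ∀ x ∈ Ioo 0 η, powerSum f x ≠ 0 := fun x hx hx0 => hx.2.not_ge (hη.2 ⟨hx.1, hx0⟩)
  have hmono : MonotoneOn (fun t => t ^ B * powerSum f t) (Icc 0 η) := by
    refine monotoneOn_of_hasDerivWithinAt_nonneg (convex_Icc 0 η)
      (h.isEntire.continuous_rpow_mul_powerSum hB.le).continuousOn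
      (fun x hx => (h.isEntire.hasDerivAt_rpow_mul_powerSum hB.ne'
        (interior_Icc.subset hx).1).hasDerivWithinAt) fun x hx => ?_
    rw [interior_Icc] at hx
    have hpos := h.powerSum_pos hne (Ioo_subset_Ico_self hx)
    have hle := hbound x hx
    have hnorm : ‖x‖ < η := (Real.norm_of_nonneg hx.1.le).trans_lt hx.2
    rw [(h.hasPowerSum_negLogDeriv hne hnorm).powerSum_eq, ← neg_div,
      div_le_iff₀ hpos] at hle
    rw [(h.isEntire.hasPowerSum_eulerShift B⁻¹ x).powerSum_eq]
    have hx' := hx.1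
    have : 0 ≤ B⁻¹ * (B * powerSum f x + x * powerSum (d⁄dX ℝ f) x) :=
      mul_nonneg (inv_nonneg.2 hB.le) (by linarith)
    refine mul_nonneg (by positivity) ?_
    rwa [mul_add, inv_mul_cancel_left₀ hB.ne'] at this
  have hhalf := half_lt_self hη.1.1
  have hle := hmono ⟨(half_pos hη.1.1).le, hhalf.le⟩ ⟨hη.1.1.le, le_rfl⟩ hhalf.le
  simp only [hη.1.2, mul_zero] at hle
  have hpos := mul_pos (Real.rpow_pos_of_pos (half_pos hη.1.1) B) 
    (h.powerSum_pos hne ⟨(half_pos hη.1.1).le, hhalf⟩)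
  exact hpos.not_ge hle

theorem hasPowerSum_convexityDefect (h : IsLaguerreType f) (hc : 0 < c)
    (hη : ∀ x ∈ Ioo 0 η, powerSum (eulerShift c f) x ≠ 0) (hz : ‖z‖ < η) :
    HasPowerSum (convexityDefect c f) z
      ((1 - c / 2) * (z * powerSum (d⁄dX ℝ f) z / powerSum f z) -
        z * powerSum (d⁄dX ℝ (eulerShift c f)) z / powerSum (eulerShift c f) z) :=
  h.isEntire.hasPowerSum_convexityDefect
    (fun _ => h.powerSum_ne_zero fun _ hx =>
      h.isEntire.powerSum_ne_zero_of_eulerShift hc hη (Ioo_subset_Ioc_self hx))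
    (fun _ => (isLaguerreType_eulerShift h hc.le).powerSum_ne_zero hη) hz

theorem hasPowerSum_convexityDefect_powerSum (h : IsLaguerreType f) (hc : 0 < c)
    (hη : ∀ x ∈ Ioo 0 η, powerSum (eulerShift c f) x ≠ 0) (hz : ‖z‖ < η) :
    HasPowerSum (convexityDefect c f) z (powerSum (convexityDefect c f) z) :=
  (h.hasPowerSum_convexityDefect hc hη hz).summable.hasSum

theorem exists_powerSum_convexityDefect_eq (h : IsLaguerreType f) (hc : 0 < c)
    (hη : IsLeast {x | 0 < x ∧ powerSum (eulerShift c f) x = 0} η) {v : ℝ} (hv : 0 < v) :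
    ∃ t ∈ Ioo 0 η, powerSum (convexityDefect c f) t = v := by
  have hne : ∀ x ∈ Ioo 0 η, powerSum (eulerShift c f) x ≠ 0 :=
    fun x hx hx0 => hx.2.not_ge (hη.2 ⟨hx.1, hx0⟩)
  have hm : 0 < min 1 (c / 2) := by positivity
  have hQ := isLaguerreType_eulerShift h hc.le
  obtain ⟨x, hx, hlt⟩ := hQ.exists_lt_powerSum_negLogDeriv hη (v / min 1 (c / 2))
  have hnorm : ‖x‖ < η := (Real.norm_of_nonneg hx.1.le).trans_lt hx.2
  have hsum := h.hasPowerSum_convexityDefect_powerSum hc hne hnorm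
  have hvx : v < powerSum (convexityDefect c f) x := by
    have hsumQ := (hQ.hasPowerSum_negLogDeriv hne hnorm).summable.hasSum
    refine ((div_lt_iff₀' hm).1 hlt).trans_le
      (hasSum_le (fun n => ?_) (HasSum.mul_left (min 1 (c / 2)) hsumQ) hsum)
    rw [smul_eq_mul, smul_eq_mul, ← mul_assoc]
    exact mul_le_mul_of_nonneg_right (min_mul_coeff_le_coeff_convexityDefect
      h.constantCoeff_pos.ne' h.nonnegCoeff_negLogDeriv hc.le n) (pow_nonneg hx.1.le n)
  have h0 : powerSum (convexityDefect c f) (0 : ℝ) = 0 := by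
    rw [powerSum_zero, constantCoeff_convexityDefect, map_zero]
  obtain ⟨t, ht, htv⟩ := intermediate_value_Ioo hx.1.le hsum.continuousOn_powerSum
    ⟨h0.trans_lt hv, hvx⟩
  exact ⟨t, ⟨ht.1, ht.2.trans hx.2⟩, htv⟩

end IsLaguerreType
end LaguerreType

section RootNormalization

open PowerSeries Set Filter Topology

section Calculus

variable {𝕜 : Type*} [RCLike 𝕜]

theorem eventually_differentiableAt_of_deriv_deriv_ne_zero {F : 𝕜 → 𝕜} {z : 𝕜}
    (h1 : deriv F z ≠ 0) (h2 : deriv (deriv F) z ≠ 0) : ∀ᶠ w in 𝓝 z, DifferentiableAt 𝕜 F w :=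
  ((differentiableAt_of_deriv_ne_zero h2).continuousAt.eventually_ne h1).mono fun _ =>
    differentiableAt_of_deriv_ne_zero

theorem hasDerivAt_deriv_of_eventually_hasDerivAt_mul {F φ : 𝕜 → 𝕜} {φ' z : 𝕜}
    (hF : ∀ᶠ w in 𝓝 z, HasDerivAt F (F w * φ w) w) (hφ : HasDerivAt φ φ' z) :
    HasDerivAt (deriv F) (F z * φ z * φ z + F z * φ') z :=
  (hF.self_of_nhds.mul hφ).congr_of_eventuallyEq (hF.mono fun _ hw => hw.deriv)

end Calculus

theorem hasFDerivAt_log_norm {f : ℂ → ℂ} {f' z : ℂ} (hf : HasDerivAt f f' z) (h0 : f z ≠ 0) :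
    HasFDerivAt (fun w => Real.log ‖f w‖)
      (Complex.reCLM.comp ((ContinuousLinearMap.toSpanSingleton ℂ (f' / f z)).restrictScalars ℝ))
      z := by
  have hlog : HasDerivAt (fun w => Complex.log (f w / f z)) (f' / f z) z := by
    simpa [div_self h0] using (hf.div_const (f z)).clog (by simp [div_self h0])
  have hre := (Complex.reCLM.hasFDerivAt.comp z
    (hlog.hasFDerivAt.restrictScalars ℝ)).add_const (Real.log ‖f z‖)
  refine hre.congr_of_eventuallyEq ?_
  filter_upwards [hf.continuousAt.eventually_ne h0] with w hw
  simp [Complex.log_re, Real.log_div, hw, h0]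

theorem div_eq_add_of_eventually_log_norm_eq {f g k : ℂ → ℂ} {f' g' k' z : ℂ} {a : ℝ}
    (hf : HasDerivAt f f' z) (hg : HasDerivAt g g' z) (hk : HasDerivAt k k' z)
    (hf0 : f z ≠ 0) (hg0 : g z ≠ 0) (hk0 : k z ≠ 0)
    (h : ∀ᶠ w in 𝓝 z, Real.log ‖f w‖ = Real.log ‖g w‖ + a * Real.log ‖k w‖) :
    f' / f z = g' / g z + a * (k' / k z) := by
  have heq := (hasFDerivAt_log_norm hf hf0).unique (((hasFDerivAt_log_norm hg hg0).add
    ((hasFDerivAt_log_norm hk hk0).const_mul a)).congr_of_eventuallyEq h)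
  have h1 := DFunLike.congr_fun heq 1
  have hI := DFunLike.congr_fun heq (-Complex.I)
  apply Complex.ext
  · simpa using h1
  · simpa using hI

theorem IsEntire.hasDerivAt_powerSum_sq {𝕜 : Type*} [RCLike 𝕜] {f : ℝ⟦X⟧} (hf : IsEntire f)
    (z : 𝕜) :
    HasDerivAt (fun w => powerSum f (w ^ 2)) (2 * z * powerSum (d⁄dX ℝ f) (z ^ 2)) z := by
  have hsq : HasDerivAt (fun w : 𝕜 => w ^ 2) (2 * z) z := by simpa using hasDerivAt_pow 2 z
  rw [mul_comm]
  exact HasDerivAt.comp z (hf.hasDerivAt (z ^ 2)) hsq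

variable {f : ℝ⟦X⟧} {ν : ℝ}

theorem IsEntire.hasDerivAt_rpow_mul_powerSum_sq (hf : IsEntire f) (hν : ν ≠ 0) {x : ℝ}
    (hx : 0 < x) : HasDerivAt (fun t => t ^ ν * powerSum f (t ^ 2))
      (ν * x ^ (ν - 1) * powerSum (eulerShift (2 / ν) f) (x ^ 2)) x := by
  refine ((Real.hasDerivAt_rpow_const (.inl hx.ne')).mul
    (hf.hasDerivAt_powerSum_sq x)).congr_deriv ?_
  rw [(hf.hasPowerSum_eulerShift (2 / ν) (x ^ 2)).powerSum_eq, Real.rpow_sub_one hx.ne']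
  simp only [RCLike.ofReal_real_eq_id, id]
  field_simp

/-- The function `(z ^ ν f(z²)) ^ (1 / ν)`, with principal branches of the power and of the
logarithm. -/
noncomputable def rootNormalization (ν : ℝ) (f : ℝ⟦X⟧) (z : ℂ) : ℂ :=
  Complex.exp (1 / ν * Complex.log (z ^ (ν : ℂ) * powerSum f (z ^ 2)))

/-- The function `rootNormalization` on the positive real axis. -/
noncomputable def realRootNormalization (ν : ℝ) (f : ℝ⟦X⟧) (x : ℝ) : ℝ :=
  (x ^ ν * powerSum f (x ^ 2)) ^ (1 / ν)

theorem hasDerivAt_realRootNormalization (hf : IsEntire f) (hν : ν ≠ 0) {x : ℝ} (hx : 0 < x)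
    (hpos : 0 < powerSum f (x ^ 2)) :
    HasDerivAt (realRootNormalization ν f) (realRootNormalization ν f x *
      (powerSum (eulerShift (2 / ν) f) (x ^ 2) / (x * powerSum f (x ^ 2)))) x := by
  have hxν := Real.rpow_pos_of_pos hx ν
  have hbase := mul_pos hxν hpos
  refine ((hf.hasDerivAt_rpow_mul_powerSum_sq hν hx).rpow_const
    (p := 1 / ν) (.inl hbase.ne')).congr_deriv ?_
  rw [realRootNormalization, Real.rpow_sub_one hbase.ne', Real.rpow_sub_one hx.ne']
  field_simp

theorem log_norm_rootNormalization (hν : ν ≠ 0) {z : ℂ} (hz : z ≠ 0)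
    (hfz : powerSum f (z ^ 2) ≠ 0) :
    Real.log ‖rootNormalization ν f z‖ = Real.log ‖z‖ + 1 / ν * Real.log ‖powerSum f (z ^ 2)‖ := by
  have hz' := norm_pos_iff.2 hz
  rw [rootNormalization, Complex.norm_exp, Real.log_exp, ← Complex.ofReal_one,
    ← Complex.ofReal_div, Complex.re_ofReal_mul, Complex.log_re, norm_mul,
    Complex.norm_cpow_real, Real.log_mul (Real.rpow_pos_of_pos hz' ν).ne' (norm_ne_zero_iff.2 hfz),
    Real.log_rpow hz']
  field_simp

-- Whatever branch the logarithm takes near `z`, the modulus determines the logarithmic derivative.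
theorem hasDerivAt_rootNormalization (hf : IsEntire f) (hν : ν ≠ 0) {z : ℂ} (hz : z ≠ 0)
    (hfz : powerSum f (z ^ 2) ≠ 0) (hd : DifferentiableAt ℂ (rootNormalization ν f) z) :
    HasDerivAt (rootNormalization ν f) (rootNormalization ν f z *
      (powerSum (eulerShift (2 / ν) f) (z ^ 2) / (z * powerSum f (z ^ 2)))) z := by
  have hF0 : rootNormalization ν f z ≠ 0 := Complex.exp_ne_zero _
  have hlog := div_eq_add_of_eventually_log_norm_eq hd.hasDerivAt (hasDerivAt_id' z)
    (hf.hasDerivAt_powerSum_sq z) hF0 hz hfz (a := 1 / ν) (by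
      filter_upwards [eventually_ne_nhds hz,
        (hf.hasDerivAt_powerSum_sq z).continuousAt.eventually_ne hfz] with w hw hfw
      exact log_norm_rootNormalization hν hw hfw)
  refine hd.hasDerivAt.congr_deriv ?_
  rw [(hf.hasPowerSum_eulerShift (2 / ν) (z ^ 2)).powerSum_eq]
  rw [div_eq_iff hF0] at hlog
  rw [hlog, RCLike.ofReal_eq_complex_ofReal]
  push_cast
  field_simp

theorem eventually_differentiableAt_rootNormalization (hf : IsEntire f) {x : ℝ} (hx : 0 < x)
    (hpos : 0 < powerSum f (x ^ 2)) :
    ∀ᶠ w in 𝓝 (x : ℂ), DifferentiableAt ℂ (rootNormalization ν f) w := by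
  have hpow {w : ℂ} (hw : w ∈ Complex.slitPlane) :
      DifferentiableAt ℂ (fun w : ℂ => w ^ (ν : ℂ) * powerSum f (w ^ 2)) w :=
    (differentiableAt_id.cpow_const hw).mul (hf.hasDerivAt_powerSum_sq w).differentiableAt
  have hxslit : (x : ℂ) ∈ Complex.slitPlane := Complex.ofReal_mem_slitPlane.2 hx
  have hbase : (x : ℂ) ^ (ν : ℂ) * powerSum f ((x : ℂ) ^ 2) ∈ Complex.slitPlane := by
    have hreal : (x : ℂ) ^ (ν : ℂ) * powerSum f ((x : ℂ) ^ 2) =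
        ((x ^ ν * powerSum f (x ^ 2) : ℝ) : ℂ) := by
      rw [Complex.ofReal_mul, Complex.ofReal_cpow hx.le, ← Complex.ofReal_pow]
      exact congrArg _ (powerSum_ofReal (𝕜 := ℂ) f (x ^ 2))
    rw [hreal, Complex.ofReal_mem_slitPlane]
    exact mul_pos (Real.rpow_pos_of_pos hx ν) hpos
  filter_upwards [Complex.isOpen_slitPlane.mem_nhds hxslit,
    (hpow hxslit).continuousAt.eventually_mem (Complex.isOpen_slitPlane.mem_nhds hbase)]
    with w hw hbase
  exact (((hpow hw).clog hbase).const_mul _).cexp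

theorem IsLaguerreType.one_add_mul_deriv_deriv_div_deriv (h : IsLaguerreType f) {c η : ℝ}
    (hc : 0 < c) (hη : ∀ x ∈ Ioo 0 η, powerSum (eulerShift c f) x ≠ 0) {𝕜 : Type*} [RCLike 𝕜]
    {F : 𝕜 → 𝕜} {z : 𝕜} (hz0 : z ≠ 0) (hz : ‖z ^ 2‖ < η) (hF0 : F z ≠ 0)
    (hF : ∀ᶠ w in 𝓝 z, HasDerivAt F
      (F w * (powerSum (eulerShift c f) (w ^ 2) / (w * powerSum f (w ^ 2)))) w) :
    1 + z * deriv (deriv F) z / deriv F z = 1 - 2 * powerSum (convexityDefect c f) (z ^ 2) := by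
  have hQ := isLaguerreType_eulerShift h hc.le
  have hfz : powerSum f (z ^ 2) ≠ 0 := h.powerSum_ne_zero (fun x hx =>
    h.isEntire.powerSum_ne_zero_of_eulerShift hc hη (Ioo_subset_Ioc_self hx)) hz
  have hQz := hQ.powerSum_ne_zero hη hz
  have hφ := (hQ.isEntire.hasDerivAt_powerSum_sq z).fun_div
    ((hasDerivAt_id' z).fun_mul (h.isEntire.hasDerivAt_powerSum_sq z)) (mul_ne_zero hz0 hfz)
  rw [(hasDerivAt_deriv_of_eventually_hasDerivAt_mul hF hφ).deriv, hF.self_of_nhds.deriv,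
    (h.hasPowerSum_convexityDefect hc hη hz).powerSum_eq]
  have hshift := (h.isEntire.hasPowerSum_eulerShift c (z ^ 2)).powerSum_eq
  field_simp
  linear_combination powerSum (eulerShift c f) (z ^ 2) * hshift

theorem radiusConvex_eq {F : ℂ → ℂ} {α r : ℝ} (hr : 0 < r)
    (hlt : ∀ z : ℂ, ‖z‖ < r → α < (1 + z * deriv (deriv F) z / deriv F z).re)
    (hle : (1 + r * deriv (deriv F) r / deriv F r).re ≤ α) : radiusConvex α F = r := by
  refine IsGreatest.csSup_eq ⟨⟨hr, hlt⟩, fun s hs => ?_⟩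
  by_contra! hrs
  exact hle.not_gt (hs.2 r (by rwa [Complex.norm_of_nonneg hr.le]))

namespace IsLaguerreType

variable {η : ℝ}

theorem powerSum_pos_of_eulerShift (h : IsLaguerreType f) {c : ℝ} (hc : 0 < c)
    (hη : ∀ x ∈ Ioo 0 η, powerSum (eulerShift c f) x ≠ 0) {x : ℝ} (hx : x ∈ Ico 0 η) :
    0 < powerSum f x :=
  h.powerSum_pos (fun _ hy =>
    h.isEntire.powerSum_ne_zero_of_eulerShift hc hη (Ioo_subset_Ioc_self hy)) hx

theorem one_add_mul_deriv_deriv_div_deriv_real (h : IsLaguerreType f) (hν : 0 < ν)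
    (hη : ∀ x ∈ Ioo 0 η, powerSum (eulerShift (2 / ν) f) x ≠ 0) {x : ℝ} (hx0 : 0 < x)
    (hx : x ^ 2 < η) :
    1 + x * deriv (deriv (realRootNormalization ν f)) x / deriv (realRootNormalization ν f) x =
      1 - 2 * powerSum (convexityDefect (2 / ν) f) (x ^ 2) := by
  have hpos {w : ℝ} (hw : w ^ 2 < η) : 0 < powerSum f (w ^ 2) :=
    h.powerSum_pos_of_eulerShift (by positivity) hη ⟨sq_nonneg w, hw⟩
  refine h.one_add_mul_deriv_deriv_div_deriv (by positivity) hη hx0.ne' (by simpa using hx)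
    (Real.rpow_pos_of_pos (mul_pos (Real.rpow_pos_of_pos hx0 ν) (hpos hx)) _).ne' ?_
  filter_upwards [lt_mem_nhds hx0, (continuous_pow 2).continuousAt.eventually_lt_const hx]
    with w hw0 hw
  exact hasDerivAt_realRootNormalization h.isEntire hν.ne' hw0 (hpos hw)

theorem one_add_mul_deriv_deriv_div_deriv_complex (h : IsLaguerreType f) (hν : 0 < ν)
    (hη : ∀ x ∈ Ioo 0 η, powerSum (eulerShift (2 / ν) f) x ≠ 0) {z : ℂ} (hz0 : z ≠ 0)
    (hz : ‖z‖ ^ 2 < η) (hd : ∀ᶠ w in 𝓝 z, DifferentiableAt ℂ (rootNormalization ν f) w) :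
    1 + z * deriv (deriv (rootNormalization ν f)) z / deriv (rootNormalization ν f) z =
      1 - 2 * powerSum (convexityDefect (2 / ν) f) (z ^ 2) := by
  rw [← norm_pow] at hz
  refine h.one_add_mul_deriv_deriv_div_deriv (by positivity) hη hz0 hz (Complex.exp_ne_zero _) ?_
  filter_upwards [hd, eventually_ne_nhds hz0,
    (continuous_pow 2).norm.continuousAt.eventually_lt_const hz] with w hdw hw0 hw
  exact hasDerivAt_rootNormalization h.isEntire hν.ne' hw0 (h.powerSum_ne_zero (fun _ hy =>
    h.isEntire.powerSum_ne_zero_of_eulerShift (by positivity) hη (Ioo_subset_Ioc_self hy)) hw) hdw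

theorem nonnegCoeff_convexityDefect (h : IsLaguerreType f) {c : ℝ} (hc : 0 ≤ c) :
    NonnegCoeff (convexityDefect c f) :=
  _root_.nonnegCoeff_convexityDefect h.constantCoeff_pos.ne' h.nonnegCoeff_negLogDeriv hc

theorem powerSum_convexityDefect_lt (h : IsLaguerreType f) {c : ℝ} (hc : 0 < c)
    (hη : ∀ x ∈ Ioo 0 η, powerSum (eulerShift c f) x ≠ 0) {s t : ℝ} (hs : 0 ≤ s) (hst : s < t)
    (ht : t < η) (hpos : 0 < powerSum (convexityDefect c f) t) :
    powerSum (convexityDefect c f) s < powerSum (convexityDefect c f) t := by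
  have ht0 : 0 ≤ t := hs.trans hst.le
  exact (h.nonnegCoeff_convexityDefect hc.le).lt_of_lt (constantCoeff_convexityDefect c f) hs hst
    (h.hasPowerSum_convexityDefect_powerSum hc hη
      (by rw [Real.norm_of_nonneg hs]; exact hst.trans ht))
    (h.hasPowerSum_convexityDefect_powerSum hc hη (by rwa [Real.norm_of_nonneg ht0])) hpos

theorem eq_of_powerSum_convexityDefect_eq (h : IsLaguerreType f) {c : ℝ} (hc : 0 < c)
    (hη : ∀ x ∈ Ioo 0 η, powerSum (eulerShift c f) x ≠ 0) {s t : ℝ} (hs : s ∈ Ico 0 η)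
    (ht : t ∈ Ico 0 η) (hst : powerSum (convexityDefect c f) s = powerSum (convexityDefect c f) t)
    (hpos : 0 < powerSum (convexityDefect c f) t) : s = t := by
  rcases lt_trichotomy s t with hlt | heq | hgt
  · exact absurd hst (h.powerSum_convexityDefect_lt hc hη hs.1 hlt ht.2 hpos).ne
  · exact heq
  · exact absurd hst (h.powerSum_convexityDefect_lt hc hη ht.1 hgt hs.2 (hst ▸ hpos)).ne'

theorem re_powerSum_convexityDefect_lt (h : IsLaguerreType f) {c : ℝ} (hc : 0 < c)
    (hη : ∀ x ∈ Ioo 0 η, powerSum (eulerShift c f) x ≠ 0) {z : ℂ} {t : ℝ} (hzt : ‖z‖ < t)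
    (ht : t < η) (hpos : 0 < powerSum (convexityDefect c f) t) :
    (powerSum (convexityDefect c f) z).re < powerSum (convexityDefect c f) t :=
  calc (powerSum (convexityDefect c f) z).re
      ≤ ‖powerSum (convexityDefect c f) z‖ := Complex.re_le_norm _
    _ ≤ powerSum (convexityDefect c f) ‖z‖ := (h.nonnegCoeff_convexityDefect hc.le).norm_le
        (h.hasPowerSum_convexityDefect_powerSum hc hη (hzt.trans ht))
        (h.hasPowerSum_convexityDefect_powerSum hc hη (by rw [norm_norm]; exact hzt.trans ht))
    _ < powerSum (convexityDefect c f) t :=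
        h.powerSum_convexityDefect_lt hc hη (norm_nonneg z) hzt ht hpos

theorem isLeast_powerSum_eulerShift (hf : IsEntire f) (hν : 0 < ν) {ξ : ℝ}
    (hξ : IsLeast {x | 0 < x ∧ deriv (fun t : ℝ => t ^ ν * powerSum f (t ^ 2)) x = 0} ξ) :
    IsLeast {x | 0 < x ∧ powerSum (eulerShift (2 / ν) f) x = 0} (ξ ^ 2) := by
  have hiff {x : ℝ} (hx : 0 < x) : deriv (fun t : ℝ => t ^ ν * powerSum f (t ^ 2)) x = 0 ↔
      powerSum (eulerShift (2 / ν) f) (x ^ 2) = 0 := by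
    rw [(hf.hasDerivAt_rpow_mul_powerSum_sq hν.ne' hx).deriv]
    exact mul_eq_zero_iff_left (mul_pos hν (Real.rpow_pos_of_pos hx _)).ne'
  refine ⟨⟨pow_pos hξ.1.1 2, (hiff hξ.1.1).1 hξ.1.2⟩, fun x ⟨hx0, hx⟩ => ?_⟩
  have hsqrt := Real.sqrt_pos.2 hx0
  rw [← Real.le_sqrt' hξ.1.1]
  exact hξ.2 ⟨hsqrt, (hiff hsqrt).2 (by rwa [Real.sq_sqrt hx0.le])⟩

theorem radiusConvex_rootNormalization_eq (h : IsLaguerreType f) (hν : 0 < ν)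
    (hη : ∀ x ∈ Ioo 0 η, powerSum (eulerShift (2 / ν) f) x ≠ 0) {α r : ℝ} (hα : α < 1)
    (hr : 0 < r) (hrη : r ^ 2 < η)
    (hv : powerSum (convexityDefect (2 / ν) f) (r ^ 2) = (1 - α) / 2) :
    radiusConvex α (rootNormalization ν f) = r := by
  have hc : 0 < 2 / ν := by positivity
  refine radiusConvex_eq hr (fun z hz => ?_) ?_
  · by_cases hjunk :
        z * deriv (deriv (rootNormalization ν f)) z / deriv (rootNormalization ν f) z = 0
    · simpa only [hjunk, add_zero, Complex.one_re] using hα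
    -- Across the branch cut of the logarithm the quotient takes the junk value `0`, excluded here.
    simp only [div_eq_zero_iff, mul_eq_zero, not_or] at hjunk
    obtain ⟨⟨hz0, hderiv2⟩, hderiv⟩ := hjunk
    have hzr : ‖z‖ ^ 2 < r ^ 2 := by gcongr
    rw [h.one_add_mul_deriv_deriv_div_deriv_complex hν hη hz0 (hzr.trans hrη)
      (eventually_differentiableAt_of_deriv_deriv_ne_zero hderiv hderiv2)]
    have hlt := h.re_powerSum_convexityDefect_lt hc hη (z := z ^ 2) (by rwa [norm_pow]) hrη
      (by rw [hv]; linarith)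
    rw [Complex.sub_re, Complex.one_re, ← Complex.ofReal_ofNat, Complex.re_ofReal_mul]
    linarith
  · have hpos : 0 < powerSum f (r ^ 2) :=
      h.powerSum_pos_of_eulerShift hc hη ⟨sq_nonneg r, hrη⟩
    have hr2 : powerSum (convexityDefect (2 / ν) f) ((r : ℂ) ^ 2) = ((1 - α) / 2 : ℝ) := by
      rw [← hv, ← Complex.ofReal_pow]
      exact powerSum_ofReal _ _
    rw [h.one_add_mul_deriv_deriv_div_deriv_complex hν hη (Complex.ofReal_ne_zero.2 hr.ne')
      (by rwa [Complex.norm_of_nonneg hr.le])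
      (eventually_differentiableAt_rootNormalization h.isEntire hr hpos), hr2, Complex.sub_re,
      Complex.one_re, ← Complex.ofReal_ofNat, Complex.re_ofReal_mul, Complex.ofReal_re]
    linarith

theorem exists_radiusConvex_rootNormalization (h : IsLaguerreType f) (hν : 0 < ν) {α ξ : ℝ}
    (hα : α < 1)
    (hξ : IsLeast {x | 0 < x ∧ deriv (fun t : ℝ => t ^ ν * powerSum f (t ^ 2)) x = 0} ξ) :
    ∃ r₁ : ℝ,
      (r₁ ∈ Ioo 0 ξ ∧ 1 + r₁ * deriv (deriv (realRootNormalization ν f)) r₁ /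
        deriv (realRootNormalization ν f) r₁ = α) ∧
      (∀ r ∈ Ioo 0 ξ, 1 + r * deriv (deriv (realRootNormalization ν f)) r /
        deriv (realRootNormalization ν f) r = α → r = r₁) ∧
      radiusConvex α (rootNormalization ν f) = r₁ := by
  have hc : 0 < 2 / ν := by positivity
  have hη := isLeast_powerSum_eulerShift h.isEntire hν hξ
  have hne : ∀ x ∈ Ioo 0 (ξ ^ 2), powerSum (eulerShift (2 / ν) f) x ≠ 0 :=
    fun x hx hx0 => hx.2.not_ge (hη.2 ⟨hx.1, hx0⟩)
  obtain ⟨t, ht, htv⟩ := h.exists_powerSum_convexityDefect_eq hc hη (v := (1 - α) / 2) (by linarith)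
  have hreal {r : ℝ} (hr : r ∈ Ioo 0 ξ) :
      1 + r * deriv (deriv (realRootNormalization ν f)) r / deriv (realRootNormalization ν f) r = α
        ↔ r = √t := by
    have hr2 : r ^ 2 < ξ ^ 2 := pow_lt_pow_left₀ hr.2 hr.1.le two_ne_zero
    rw [h.one_add_mul_deriv_deriv_div_deriv_real hν hne hr.1 hr2]
    constructor
    · intro hrα
      have hrt : r ^ 2 = t := h.eq_of_powerSum_convexityDefect_eq hc hne ⟨sq_nonneg r, hr2⟩
        ⟨ht.1.le, ht.2⟩ (by linarith) (by linarith)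
      rw [← hrt, Real.sqrt_sq hr.1.le]
    · rintro rfl
      rw [Real.sq_sqrt ht.1.le, htv]
      ring
  have hmem : √t ∈ Ioo 0 ξ := ⟨Real.sqrt_pos.2 ht.1, (Real.sqrt_lt' hξ.1.1).2 ht.2⟩
  exact ⟨√t, ⟨hmem, (hreal hmem).2 rfl⟩, fun r hr => (hreal hr).1,
    h.radiusConvex_rootNormalization_eq hν hne hα hmem.1 (by rw [Real.sq_sqrt ht.1.le]; exact ht.2)
      (by rw [Real.sq_sqrt ht.1.le]; exact htv)⟩

end IsLaguerreType

end RootNormalization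

section QMittagLeffler

open PowerSeries Set Filter Topology

section QGamma

variable {q : ℝ}

theorem summable_log_one_sub_mul_pow (hq0 : 0 ≤ q) (hq1 : q < 1) (a : ℝ) :
    Summable fun k : ℕ => Real.log (1 - a * q ^ k) := by
  simpa only [← sub_eq_add_neg] using Real.summable_log_one_add_of_summable
    ((summable_geometric_of_lt_one hq0 hq1).mul_left a).neg

theorem one_sub_mul_pow_pos (hq0 : 0 ≤ q) (hq1 : q ≤ 1) {a : ℝ} (ha : a < 1) (k : ℕ) :
    0 < 1 - a * q ^ k := by
  rcases le_total a 0 with h | h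
  · have := mul_nonneg (neg_nonneg.2 h) (pow_nonneg hq0 k)
    linarith
  · linarith [mul_le_of_le_one_right h (pow_le_one₀ hq0 hq1 (n := k))]

theorem qPochInf_pos (hq0 : 0 ≤ q) (hq1 : q < 1) {a : ℝ} (ha : a < 1) : 0 < qPochInf a q := by
  rw [qPochInf, ← Real.rexp_tsum_eq_tprod (one_sub_mul_pow_pos hq0 hq1.le ha)
    (summable_log_one_sub_mul_pow hq0 hq1 a)]
  exact Real.exp_pos _

theorem qPochInf_eq_mul (hq0 : 0 ≤ q) (hq1 : q < 1) (a : ℝ) :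
    qPochInf a q = (1 - a) * qPochInf (a * q) q := by
  have hmul : Multipliable fun k : ℕ => 1 - a * q * q ^ k := by
    simpa only [← sub_eq_add_neg] using Real.multipliable_one_add_of_summable
      ((summable_geometric_of_lt_one hq0 hq1).mul_left (a * q)).neg
  simp only [qPochInf]
  rw [tprod_eq_zero_mul' (by simpa only [pow_succ', mul_assoc] using hmul)]
  simp only [pow_zero, mul_one, pow_succ', mul_assoc]

theorem qGamma_pos (hq0 : 0 < q) (hq1 : q < 1) {x : ℝ} (hx : 0 < x) : 0 < qGamma q x :=
  div_pos (mul_pos (qPochInf_pos hq0.le hq1 hq1) (Real.rpow_pos_of_pos (sub_pos.2 hq1) _))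
    (qPochInf_pos hq0.le hq1 (Real.rpow_lt_one hq0.le hq1 hx))

theorem qGamma_add_one (hq0 : 0 < q) (hq1 : q < 1) {x : ℝ} (hx : 0 < x) :
    qGamma q (x + 1) = (1 - q ^ x) / (1 - q) * qGamma q x := by
  have h1q : 1 - q ≠ 0 := (sub_pos.2 hq1).ne'
  have hqx := Real.rpow_lt_one hq0.le hq1 hx
  have hqx' : 1 - q ^ x ≠ 0 := (sub_pos.2 hqx).ne'
  rw [qGamma, qGamma, qPochInf_eq_mul hq0.le hq1 (q ^ x), Real.rpow_add_one hq0.ne',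
    sub_add_eq_sub_sub, Real.rpow_sub_one h1q]
  field_simp

end QGamma

theorem isEntire_of_tendsto_ratio {f : ℝ⟦X⟧} {r : ℕ → ℝ}
    (hf : ∀ n, coeff (n + 1) f = r n * coeff n f) (hr : Tendsto r atTop (𝓝 0)) : IsEntire f := by
  intro x
  have hrx : Tendsto (fun n => ‖r n * x‖) atTop (𝓝 0) := by
    simpa only [zero_mul, norm_zero] using (hr.mul_const x).norm
  refine summable_of_ratio_norm_eventually_le (r := 1 / 2) (by norm_num) ?_
  filter_upwards [hrx.eventually_le_const one_half_pos] with n hn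
  calc ‖coeff (n + 1) f * x ^ (n + 1)‖
      = ‖r n * x‖ * ‖coeff n f * x ^ n‖ := by
        rw [hf, ← norm_mul]
        ring_nf
    _ ≤ 1 / 2 * ‖coeff n f * x ^ n‖ := by gcongr

/-- The series `Γ_q(γ + 1) λ_{γ,σ}` in the variable `X = z²`. -/
noncomputable def qMLSeries (γ σ q : ℝ) : ℝ⟦X⟧ :=
  mk fun n => qGamma q (γ + 1) *
    ((-1) ^ n * σ ^ (2 * n) * q ^ (n * (n - 1)) / qGamma q (2 * n + γ + 1))

/-- The negated quotient of the coefficients of `X ^ (n + 1)` and `X ^ n` in `qMLSeries γ σ q`. -/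
noncomputable def qMLRatio (γ σ q : ℝ) (n : ℕ) : ℝ :=
  (σ * (1 - q) * q ^ n) ^ 2 / ((1 - q ^ (2 * n + γ + 1)) * (1 - q ^ (2 * n + γ + 2)))

variable {γ q : ℝ}

theorem one_sub_rpow_pos (hq0 : 0 < q) (hq1 : q < 1) {x : ℝ} (hx : 0 < x) : 0 < 1 - q ^ x :=
  sub_pos.2 (Real.rpow_lt_one hq0.le hq1 hx)

theorem constantCoeff_qMLSeries (hγ : -1 < γ) (σ : ℝ) (hq0 : 0 < q) (hq1 : q < 1) :
    constantCoeff (qMLSeries γ σ q) = 1 := by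
  have hΓ := (qGamma_pos hq0 hq1 (neg_lt_iff_pos_add.1 hγ)).ne'
  simp [qMLSeries, ← coeff_zero_eq_constantCoeff_apply, hΓ]

theorem coeff_succ_qMLSeries (hγ : -1 < γ) (σ : ℝ) (hq0 : 0 < q) (hq1 : q < 1) (n : ℕ) :
    coeff (n + 1) (qMLSeries γ σ q) = -(qMLRatio γ σ q n * coeff n (qMLSeries γ σ q)) := by
  have hx : 0 < 2 * (n : ℝ) + γ + 1 := by linarith [n.cast_nonneg (α := ℝ)]
  have hΓ : qGamma q (2 * (n + 1 : ℕ) + γ + 1) = (1 - q ^ (2 * n + γ + 2)) / (1 - q) *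
      ((1 - q ^ (2 * n + γ + 1)) / (1 - q) * qGamma q (2 * n + γ + 1)) := by
    rw [← qGamma_add_one hq0 hq1 hx, show 2 * (n : ℝ) + γ + 2 = 2 * n + γ + 1 + 1 by ring,
      ← qGamma_add_one hq0 hq1 (by linarith)]
    push_cast
    ring_nf
  have hexp : (n + 1) * (n + 1 - 1) = n * (n - 1) + 2 * n := by
    cases n
    · rfl
    · simp only [Nat.add_sub_cancel]
      ring
  have h1 := (one_sub_rpow_pos hq0 hq1 hx).ne'
  have h2 := (one_sub_rpow_pos hq0 hq1 (x := 2 * n + γ + 2) (by linarith)).ne'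
  have hΓ0 := (qGamma_pos hq0 hq1 hx).ne'
  have h1q : 1 - q ≠ 0 := (sub_pos.2 hq1).ne'
  rw [qMLSeries, qMLRatio, coeff_mk, coeff_mk, hΓ, hexp]
  field_simp
  ring

theorem qMLRatio_nonneg (hγ : -1 < γ) (σ : ℝ) (hq0 : 0 < q) (hq1 : q < 1) (n : ℕ) :
    0 ≤ qMLRatio γ σ q n := by
  have := n.cast_nonneg (α := ℝ)
  have h1 := one_sub_rpow_pos hq0 hq1 (x := 2 * n + γ + 1) (by linarith)
  have h2 := one_sub_rpow_pos hq0 hq1 (x := 2 * n + γ + 2) (by linarith)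
  exact div_nonneg (sq_nonneg _) (mul_pos h1 h2).le

theorem qMLRatio_succ_le (hγ : -1 < γ) (σ : ℝ) (hq0 : 0 < q) (hq1 : q < 1) (n : ℕ) :
    qMLRatio γ σ q (n + 1) ≤ q ^ 2 * qMLRatio γ σ q n := by
  have := n.cast_nonneg (α := ℝ)
  have hpos {b : ℝ} (hb : 1 ≤ b) : 0 < 1 - q ^ (2 * n + γ + b) :=
    one_sub_rpow_pos hq0 hq1 (by linarith)
  have hmono (b : ℝ) : 1 - q ^ (2 * n + γ + b) ≤ 1 - q ^ (2 * (n + 1 : ℕ) + γ + b) := by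
    refine sub_le_sub_left (Real.rpow_le_rpow_of_exponent_ge hq0 hq1.le ?_) 1
    push_cast
    linarith
  calc qMLRatio γ σ q (n + 1)
      ≤ (σ * (1 - q) * q ^ (n + 1)) ^ 2 /
          ((1 - q ^ (2 * n + γ + 1)) * (1 - q ^ (2 * n + γ + 2))) := by
        have h1 := hpos le_rfl
        have h2 := hpos one_le_two
        unfold qMLRatio
        gcongr _ / (?_ * ?_)
        exacts [h1.le.trans (hmono 1), hmono 1, hmono 2]
    _ = q ^ 2 * qMLRatio γ σ q n := by
        rw [qMLRatio, pow_succ]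
        ring

theorem tendsto_qMLRatio (hγ : -1 < γ) (σ : ℝ) (hq0 : 0 < q) (hq1 : q < 1) :
    Tendsto (qMLRatio γ σ q) atTop (𝓝 0) := by
  have hle (n : ℕ) : qMLRatio γ σ q n ≤ (q ^ 2) ^ n * qMLRatio γ σ q 0 :=
    le_geom (sq_nonneg q) n fun k _ => qMLRatio_succ_le hγ σ hq0 hq1 k
  have hgeom : Tendsto (fun n : ℕ => (q ^ 2) ^ n * qMLRatio γ σ q 0) atTop (𝓝 0) := by
    simpa only [zero_mul] using (tendsto_pow_atTop_nhds_zero_of_lt_one (sq_nonneg q)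
      (pow_lt_one₀ hq0.le hq1 two_ne_zero)).mul_const (qMLRatio γ σ q 0)
  exact squeeze_zero (qMLRatio_nonneg hγ σ hq0 hq1) hle hgeom

theorem isEntire_qMLSeries (hγ : -1 < γ) (σ : ℝ) (hq0 : 0 < q) (hq1 : q < 1) :
    IsEntire (qMLSeries γ σ q) :=
  isEntire_of_tendsto_ratio (r := fun n => -qMLRatio γ σ q n)
    (fun n => by rw [coeff_succ_qMLSeries hγ σ hq0 hq1, neg_mul])
    (by simpa only [neg_zero] using (tendsto_qMLRatio hγ σ hq0 hq1).neg)

theorem nonnegCoeff_negLogDeriv_qMLSeries_of_le_half (hγ : -1 < γ) (σ : ℝ) (hq0 : 0 < q)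
    (hq : q ≤ 1 / 2) : NonnegCoeff (negLogDeriv (qMLSeries γ σ q)) := by
  have hq1 : q < 1 := hq.trans_lt one_half_lt_one
  have hr := qMLRatio_nonneg hγ σ hq0 hq1
  refine nonnegCoeff_negLogDeriv_of_hutchinson
    (by rw [constantCoeff_qMLSeries hγ σ hq0 hq1]; exact one_pos)
    (coeff_succ_qMLSeries hγ σ hq0 hq1) hr fun n => ?_
  calc qMLRatio γ σ q (n + 1) ≤ q ^ 2 * qMLRatio γ σ q n := qMLRatio_succ_le hγ σ hq0 hq1 n
    _ ≤ (1 / 2) ^ 2 * qMLRatio γ σ q n := by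
        have := hr n
        gcongr
    _ = qMLRatio γ σ q n / 4 := by ring

-- `h` holds for `γ = 0, 1`, where `λ_{γ,σ}` is a `q`-cosine and a `q`-sine: Hahn–Exton `q`-Bessel
-- functions of base `q²`.
theorem nonnegCoeff_negLogDeriv_qMLSeries_of_mul_eq (hγ : -1 < γ) (σ : ℝ) (hq0 : 0 < q)
    (hq1 : q < 1) {b : ℝ} (hb0 : 0 ≤ b) (hb1 : b < 1)
    (h : ∀ n : ℕ, (1 - q ^ (2 * n + γ + 1)) * (1 - q ^ (2 * n + γ + 2)) =
      (1 - (q ^ 2) ^ (n + 1)) * (1 - b * (q ^ 2) ^ n)) :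
    NonnegCoeff (negLogDeriv (qMLSeries γ σ q)) := by
  refine nonnegCoeff_negLogDeriv_of_hahnExton_recurrence
    (by rw [constantCoeff_qMLSeries hγ σ hq0 hq1]; exact one_pos) (sq_nonneg q)
    (pow_lt_one₀ hq0.le hq1 two_ne_zero) hb0 hb1 (sq_nonneg (σ * (1 - q))) fun n => ?_
  have := n.cast_nonneg (α := ℝ)
  have h1 := (one_sub_rpow_pos hq0 hq1 (x := 2 * n + γ + 1) (by linarith)).ne'
  have h2 := (one_sub_rpow_pos hq0 hq1 (x := 2 * n + γ + 2) (by linarith)).ne'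
  rw [← h, coeff_succ_qMLSeries hγ σ hq0 hq1, qMLRatio]
  field_simp
  ring

theorem isLaguerreType_qMLSeries (hγ : -1 < γ) (σ : ℝ) (hq0 : 0 < q) (hq1 : q < 1)
    (h : γ = 0 ∨ γ = 1 ∨ q ≤ 1 / 2) : IsLaguerreType (qMLSeries γ σ q) where
  isEntire := isEntire_qMLSeries hγ σ hq0 hq1
  constantCoeff_pos := by rw [constantCoeff_qMLSeries hγ σ hq0 hq1]; exact one_pos
  nonnegCoeff_negLogDeriv := by
    have hpow (n m : ℕ) : q ^ (2 * n + m : ℝ) = q ^ m * (q ^ 2) ^ n := by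
      rw [← pow_mul, ← pow_add, add_comm m, ← Real.rpow_natCast]
      push_cast
      rfl
    rcases h with rfl | rfl | hq
    · refine nonnegCoeff_negLogDeriv_qMLSeries_of_mul_eq hγ σ hq0 hq1 hq0.le hq1 fun n => ?_
      have h1 := hpow n 1
      have h2 := hpow n 2
      push_cast at h1 h2
      rw [add_zero, h1, h2]
      ring
    · refine nonnegCoeff_negLogDeriv_qMLSeries_of_mul_eq hγ σ hq0 hq1 (pow_nonneg hq0.le 3)
        (pow_lt_one₀ hq0.le hq1 three_ne_zero) fun n => ?_
      have h2 := hpow n 2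
      have h3 := hpow n 3
      push_cast at h2 h3
      rw [add_assoc, one_add_one_eq_two, add_assoc, show (1 : ℝ) + 2 = 3 by norm_num, h2, h3]
      ring
    · exact nonnegCoeff_negLogDeriv_qMLSeries_of_le_half hγ σ hq0 hq

theorem qGamma_mul_qMLR (γ σ q x : ℝ) :
    qGamma q (γ + 1) * qMLR γ σ q x = powerSum (qMLSeries γ σ q) (x ^ 2) := by
  simp only [qMLR, powerSum, qMLSeries, coeff_mk, ← tsum_mul_left, smul_eq_mul, pow_mul, mul_assoc]

theorem qGamma_mul_qML (γ σ q : ℝ) (z : ℂ) :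
    qGamma q (γ + 1) * qML γ σ q z = powerSum (qMLSeries γ σ q) (z ^ 2) := by
  simp only [qML, powerSum, qMLSeries, coeff_mk, ← tsum_mul_left, Complex.real_smul,
    Complex.ofReal_mul, ← pow_mul, mul_assoc]

theorem fMLR_eq_realRootNormalization (γ σ q : ℝ) :
    fMLR γ σ q = realRootNormalization (γ + 1) (qMLSeries γ σ q) := by
  funext x
  rw [fMLR, mul_assoc, qGamma_mul_qMLR, realRootNormalization]

theorem fML_eq_rootNormalization (γ σ q : ℝ) :
    fML γ σ q = rootNormalization (γ + 1) (qMLSeries γ σ q) := by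
  funext z
  rw [fML, mul_assoc, qGamma_mul_qML, rootNormalization]
  push_cast
  rfl

theorem deriv_rpow_mul_powerSum_qMLSeries (γ σ q x : ℝ) :
    deriv (fun t : ℝ => t ^ (γ + 1) * powerSum (qMLSeries γ σ q) (t ^ 2)) x =
      qGamma q (γ + 1) * deriv (fun t : ℝ => t ^ (γ + 1) * qMLR γ σ q t) x := by
  simp only [← qGamma_mul_qMLR, mul_left_comm _ (qGamma q (γ + 1)), deriv_const_mul_field]

theorem condR.eq_zero_or_eq_one_or_le_half (hγ : -1 < γ) (hq0 : 0 < q) (hq1 : q < 1)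
    (h : condR q γ) : γ = 0 ∨ γ = 1 ∨ q ≤ 1 / 2 := by
  rcases h with (h0 | h1) | ⟨-, -, h⟩
  · exact .inl h0
  · exact .inr (.inl h1)
  · have h1 := Real.rpow_pos_of_pos hq0 (γ + 1)
    have h2 := Real.rpow_pos_of_pos hq0 (γ + 2)
    have h2' := one_sub_rpow_pos hq0 hq1 (x := γ + 2) (by linarith)
    have hlt : 1 < q⁻¹ * (1 - q) := by
      have : 0 < q⁻¹ * (1 - q) := mul_pos (inv_pos.2 hq0) (sub_pos.2 hq1)
      calc 1 < q⁻¹ * (1 - q) * (1 - q ^ (γ + 1)) * (1 - q ^ (γ + 2)) := h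
        _ ≤ q⁻¹ * (1 - q) * 1 * 1 := by gcongr <;> linarith
        _ = q⁻¹ * (1 - q) := by rw [mul_one, mul_one]
    rw [inv_mul_eq_div, one_lt_div₀ hq0] at hlt
    exact .inr (.inr (by linarith))

end QMittagLeffler

theorem stmt13_general {q γ σ α ξ1 : ℝ} (hq0 : 0 < q) (hq1 : q < 1) (hγ : -1 < γ)
    (h : γ = 0 ∨ γ = 1 ∨ q ≤ 1 / 2) (hα : α < 1)
    (hξ1 : IsLeast {x : ℝ | 0 < x ∧
      deriv (fun t : ℝ => t ^ (γ + 1) * qMLR γ σ q t) x = 0} ξ1) :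
    ∃ r₁ : ℝ,
      (r₁ ∈ Set.Ioo 0 ξ1 ∧
        1 + r₁ * deriv (deriv (fMLR γ σ q)) r₁ / deriv (fMLR γ σ q) r₁ = α) ∧
      (∀ r : ℝ, r ∈ Set.Ioo 0 ξ1 →
        1 + r * deriv (deriv (fMLR γ σ q)) r / deriv (fMLR γ σ q) r = α → r = r₁) ∧
      radiusConvex α (fML γ σ q) = r₁ := by
  have hν : 0 < γ + 1 := neg_lt_iff_pos_add.1 hγ
  rw [fMLR_eq_realRootNormalization, fML_eq_rootNormalization]
  refine (isLaguerreType_qMLSeries hγ σ hq0 hq1 h).exists_radiusConvex_rootNormalization hν hα ?_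
  simpa only [deriv_rpow_mul_powerSum_qMLSeries, mul_eq_zero, (qGamma_pos hq0 hq1 hν).ne',
    false_or] using hξ1

theorem stmt13 (q σ γ : ℝ) (hq0 : 0 < q) (hq1 : q < 1) (hσ : 0 < σ)
    (hγ : γ ∈ Set.Ioo (0 : ℝ) 2) (hR : condR q γ)
    (α : ℝ) (hα0 : 0 ≤ α) (hα1 : α < 1)
    (ξ1 : ℝ)
    (hξ1 : IsLeast {x : ℝ | 0 < x ∧
      deriv (fun t : ℝ => t ^ (γ + 1) * qMLR γ σ q t) x = 0} ξ1) :
    ∃ r₁ : ℝ,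
      (r₁ ∈ Set.Ioo 0 ξ1 ∧
        1 + r₁ * deriv (deriv (fMLR γ σ q)) r₁ / deriv (fMLR γ σ q) r₁ = α) ∧
      (∀ r : ℝ, r ∈ Set.Ioo 0 ξ1 →
        1 + r * deriv (deriv (fMLR γ σ q)) r / deriv (fMLR γ σ q) r = α → r = r₁) ∧
      radiusConvex α (fML γ σ q) = r₁ :=
  have hγ' : -1 < γ := neg_one_lt_zero.trans hγ.1
  stmt13_general hq0 hq1 hγ' (hR.eq_zero_or_eq_one_or_le_half hγ' hq0 hq1) hα1 hξ1
end

section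
/- Assume condition (R) and let α∈[0,1). Let θ_{γ,σ,1}(q) be the smallest positive zero of g_{γ,σ}'(·;q). Then the equation 1 + r·g_{γ,σ}''(r;q)/g_{γ,σ}'(r;q) = α has a unique root r₂ in the interval (0, θ_{γ,σ,1}(q)), and the radius of convexity of order α of g_{γ,σ}(·;q) equals r₂. -/
/-- Real restriction of the normalized function $g_{γ,σ}$. -/
noncomputable def gMLR (γ σ q : ℝ) (x : ℝ) : ℝ :=
  x * qGamma q (γ + 1) * qMLR γ σ q x

/-!
Let `g = gML γ σ q`. Write `g z = z * F (z ^ 2)`. If `γ = 0` or `γ = 1` then `F` is a limit of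
polynomials obtained from truncated Euler products by the multipliers `1 - b p ^ n`, `p = q ^ 2`,
which keep the roots positive and `p`-separated; otherwise condition (R) forces `q ≤ 1 / 2`, and the
partial sums of `F` have only positive roots by Hutchinson's criterion. Hence `g`, and by
Gauss–Lucas also `g'`, is a locally uniform limit of polynomials with real roots.

If the even function `φ = g'` has no zero in `[-r, r]`, pairing `z` with `-z` in the partial
fraction expansion of `φ' / φ` over the roots `ξ` gives terms `2 z² / (z² - ξ²)` with `r < |ξ|`, and
comparing them termwise yields `‖z‖² Re (r φ'(r) / φ(r)) ≤ r² Re (z φ'(z) / φ(z))` for `‖z‖ ≤ r`. So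
as soon as `1 + r φ'(r) / φ(r) = α < 1`, the real part of `1 + z φ'(z) / φ(z)` exceeds `α` on the
open disc of radius `r`; this gives both the uniqueness of `r` and the radius of convexity.
Existence is Rolle's theorem for `t ^ (1 - α) * φ t` on `[0, θ₁]`.
-/

namespace QMittagLeffler

open Polynomial Filter Topology Finset

/-! ### Locally uniform limits of polynomials with real roots -/

/-- `f` is a locally uniform limit on `ℂ` of polynomials all of whose roots lie in `S`. For `S` the
real line these are the functions of the Laguerre–Pólya class. -/
def IsLimitOfRootsIn (S : Set ℂ) (f : ℂ → ℂ) : Prop :=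
  ∃ P : ℕ → ℂ[X], (∀ N, ∀ ξ ∈ (P N).roots, ξ ∈ S) ∧
    TendstoLocallyUniformly (fun N z => (P N).eval z) f atTop

theorem IsLimitOfRootsIn.differentiable {S : Set ℂ} {f : ℂ → ℂ} (hf : IsLimitOfRootsIn S f) :
    Differentiable ℂ f := by
  obtain ⟨P, -, hP⟩ := hf
  rw [← differentiableOn_univ]
  exact (tendstoLocallyUniformlyOn_univ.2 hP).differentiableOn
    (.of_forall fun N => (P N).differentiable.differentiableOn) isOpen_univ

theorem mem_of_mem_roots_derivative {S : Set ℂ} (hS : Convex ℝ S) {P : ℂ[X]}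
    (hP : ∀ ξ ∈ P.roots, ξ ∈ S) {ξ : ℂ} (hξ : ξ ∈ (derivative P).roots) : ξ ∈ S := by
  have hP' : derivative P ≠ 0 := ne_zero_of_mem_roots hξ
  have hdeg : 0 < P.degree := by
    rw [← natDegree_pos_iff_degree_pos, Nat.pos_iff_ne_zero]
    exact fun h => hP' (derivative_of_natDegree_zero h)
  have hroots : P.rootSet ℂ ⊆ S := fun η hη => hP η <| by
    simpa [mem_rootSet'] using hη
  exact convexHull_min hroots hS <| rootSet_derivative_subset_convexHull_rootSet hdeg <| by
    simpa [mem_rootSet'] using hξ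

theorem IsLimitOfRootsIn.deriv {S : Set ℂ} {f : ℂ → ℂ} (hf : IsLimitOfRootsIn S f)
    (hS : Convex ℝ S) : IsLimitOfRootsIn S (deriv f) := by
  obtain ⟨P, hroots, hP⟩ := hf
  refine ⟨fun N => derivative (P N), fun N ξ => mem_of_mem_roots_derivative hS (hroots N), ?_⟩
  rw [← tendstoLocallyUniformlyOn_univ] at hP ⊢
  convert! hP.deriv (.of_forall fun N => (P N).differentiable.differentiableOn) isOpen_univ using 1
  ext N z
  exact (P N).deriv.symm

theorem IsLimitOfRootsIn.mul_comp_sq {f : ℂ → ℂ}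
    (hf : IsLimitOfRootsIn (Complex.ofReal '' Set.Ici 0) f) :
    IsLimitOfRootsIn (Set.range Complex.ofReal) fun z => z * f (z ^ 2) := by
  have hcont := hf.differentiable.continuous
  obtain ⟨P, hroots, hP⟩ := hf
  refine ⟨fun N => X * (P N).comp (X ^ 2), fun N ξ hξ => ?_, ?_⟩
  · obtain ⟨hne, hξ⟩ := mem_roots'.1 hξ
    obtain rfl | hξ : ξ = 0 ∨ (P N).eval (ξ ^ 2) = 0 := by simpa [eval_comp] using hξ
    · exact ⟨0, Complex.ofReal_zero⟩
    have hPN : P N ≠ 0 := fun h => hne (by simp [h])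
    obtain ⟨t, ht : 0 ≤ t, htξ⟩ := hroots N _ ((mem_roots hPN).2 hξ)
    obtain h | h : ξ = √t ∨ ξ = -√t := sq_eq_sq_iff_eq_or_eq_neg.1 <| by
      rw [← htξ, ← Complex.ofReal_pow, Real.sq_sqrt ht]
    · exact ⟨√t, h.symm⟩
    · exact ⟨-√t, by rw [h, Complex.ofReal_neg]⟩
  · have hX : TendstoLocallyUniformly (fun (_ : ℕ) (z : ℂ) => z) (fun z => z) atTop :=
      fun u hu z => ⟨Set.univ, univ_mem, .of_forall fun _ _ _ => refl_mem_uniformity hu⟩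
    have hsq : Continuous fun z : ℂ => z ^ 2 := by fun_prop
    convert! hX.mul₀ (hP.comp _ hsq) continuous_id (hcont.comp hsq) using 1
    ext N z
    simp [eval_comp]

theorem norm_eval_re_le_norm_eval {P : ℂ[X]} (hP : ∀ ξ ∈ P.roots, ξ ∈ Set.range Complex.ofReal)
    (z : ℂ) : ‖P.eval (z.re : ℂ)‖ ≤ ‖P.eval z‖ := by
  have hnorm (w : ℂ) : ‖P.eval w‖ = ‖P.leadingCoeff‖ * (P.roots.map fun ξ => ‖w - ξ‖).prod := by
    rw [(IsAlgClosed.splits P).eval_eq_prod_roots, norm_mul,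
      ← normHom_apply (Multiset.prod _), map_multiset_prod, Multiset.map_map]
    rfl
  rw [hnorm, hnorm]
  refine mul_le_mul_of_nonneg_left
    (Multiset.prod_map_le_prod_map₀ _ _ (fun _ _ => norm_nonneg _) fun ξ hξ => ?_) (norm_nonneg _)
  obtain ⟨x, rfl⟩ := hP ξ hξ
  rw [← Complex.ofReal_sub, Complex.norm_real]
  simpa using Complex.abs_re_le_norm (z - x)

theorem IsLimitOfRootsIn.norm_apply_re_le {f : ℂ → ℂ}
    (hf : IsLimitOfRootsIn (Set.range Complex.ofReal) f) (z : ℂ) : ‖f z.re‖ ≤ ‖f z‖ := by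
  obtain ⟨P, hroots, hP⟩ := hf
  rw [← tendstoLocallyUniformlyOn_univ] at hP
  exact le_of_tendsto_of_tendsto' (hP.tendsto_at (Set.mem_univ _)).norm
    (hP.tendsto_at (Set.mem_univ _)).norm fun N => norm_eval_re_le_norm_eval (hroots N) z

theorem logDeriv_eval_eq_sum_roots {P : ℂ[X]} {z : ℂ} (hz : z ∉ P.roots) :
    logDeriv P.eval z = (P.roots.map fun ξ => 1 / (z - ξ)).sum := by
  obtain rfl | hP := eq_or_ne P 0
  · simp [logDeriv_apply]
  · have hPz : P.eval z ≠ 0 := fun h => hz ((mem_roots hP).2 h)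
    rw [logDeriv_apply, P.deriv, (IsAlgClosed.splits P).eval_derivative_div_eval_of_ne_zero hPz]

theorem re_mul_logDeriv_eval_sub_eq_sum_roots {P : ℂ[X]} {z : ℂ} (hz : z ∉ P.roots)
    (hz' : -z ∉ P.roots) :
    (z * (logDeriv P.eval z - logDeriv P.eval (-z))).re =
      (P.roots.map fun ξ => (2 * z ^ 2 / (z ^ 2 - ξ ^ 2)).re).sum := by
  rw [logDeriv_eval_eq_sum_roots hz, logDeriv_eval_eq_sum_roots hz', ← Multiset.sum_map_sub,
    ← Multiset.sum_map_mul_left, ← Complex.coe_reAddGroupHom, map_multiset_sum, Multiset.map_map]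
  refine congrArg Multiset.sum (Multiset.map_congr rfl fun ξ hξ => congrArg Complex.re ?_)
  have h : z - ξ ≠ 0 := sub_ne_zero.2 fun h => hz (h ▸ hξ)
  have h' : -z - ξ ≠ 0 := sub_ne_zero.2 fun h => hz' (h ▸ hξ)
  have h2 : z ^ 2 - ξ ^ 2 ≠ 0 := by
    rw [show z ^ 2 - ξ ^ 2 = -((z - ξ) * (-z - ξ)) by ring]
    exact neg_ne_zero.2 (mul_ne_zero h h')
  field_simp
  ring

theorem sq_norm_mul_re_div_sq_sub_sq_le {r x : ℝ} (hx : r < |x|) {z : ℂ} (hz : ‖z‖ ≤ r) :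
    ‖z‖ ^ 2 * (2 * r ^ 2 / (r ^ 2 - x ^ 2)) ≤ r ^ 2 * (2 * z ^ 2 / (z ^ 2 - x ^ 2)).re := by
  have hr : 0 ≤ r := (norm_nonneg z).trans hz
  have hx2 : r ^ 2 < x ^ 2 := sq_lt_sq.2 (by rwa [abs_of_nonneg hr])
  have hden : x ^ 2 - r ^ 2 ≤ ‖z ^ 2 - x ^ 2‖ := by
    have h := norm_sub_norm_le ((x : ℂ) ^ 2) (z ^ 2)
    rw [norm_sub_rev, norm_pow, norm_pow, Complex.norm_real, Real.norm_eq_abs, sq_abs] at h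
    nlinarith [norm_nonneg z]
  have hre : -(2 * ‖z‖ ^ 2 / (x ^ 2 - r ^ 2)) ≤ (2 * z ^ 2 / (z ^ 2 - x ^ 2)).re := by
    refine (neg_le_neg ?_).trans (neg_le_of_abs_le (Complex.abs_re_le_norm _))
    rw [norm_div, norm_mul, norm_pow, Complex.norm_two]
    gcongr
  calc ‖z‖ ^ 2 * (2 * r ^ 2 / (r ^ 2 - x ^ 2)) = r ^ 2 * -(2 * ‖z‖ ^ 2 / (x ^ 2 - r ^ 2)) := by
        rw [← neg_sub (x ^ 2), div_neg]; ring
    _ ≤ _ := by gcongr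

theorem sq_norm_mul_re_logDeriv_eval_sub_le {P : ℂ[X]}
    (hP : ∀ ξ ∈ P.roots, ξ ∈ Set.range Complex.ofReal) {r : ℝ} (hr : ∀ ξ ∈ P.roots, r < ‖ξ‖)
    {z : ℂ} (hz : ‖z‖ ≤ r) :
    ‖z‖ ^ 2 * (r * (logDeriv P.eval r - logDeriv P.eval (-r))).re ≤
      r ^ 2 * (z * (logDeriv P.eval z - logDeriv P.eval (-z))).re := by
  have hr0 : ‖(r : ℂ)‖ = r := by
    rw [Complex.norm_real, Real.norm_of_nonneg ((norm_nonneg z).trans hz)]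
  have hnotMem {w : ℂ} (hw : ‖w‖ ≤ r) : w ∉ P.roots := fun h => (hr w h).not_ge hw
  rw [re_mul_logDeriv_eval_sub_eq_sum_roots (hnotMem hr0.le) (hnotMem (by rw [norm_neg, hr0])),
    re_mul_logDeriv_eval_sub_eq_sum_roots (hnotMem hz) (hnotMem (by rwa [norm_neg])),
    ← Multiset.sum_map_mul_left, ← Multiset.sum_map_mul_left]
  refine Multiset.sum_map_le_sum_map _ _ fun ξ hξ => ?_
  obtain ⟨x, rfl⟩ := hP ξ hξ
  have hx : r < |x| := by simpa using hr _ hξ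
  convert! sq_norm_mul_re_div_sq_sub_sq_le hx hz using 2
  exact_mod_cast Complex.ofReal_re _

theorem eventually_forall_roots_lt_norm {P : ℕ → ℂ[X]} {f : ℂ → ℂ}
    (hP : TendstoLocallyUniformly (fun N z => (P N).eval z) f atTop) (hf : Continuous f)
    (hroots : ∀ N, ∀ ξ ∈ (P N).roots, ξ ∈ Set.range Complex.ofReal) {r : ℝ}
    (hne : ∀ x : ℝ, |x| ≤ r → f x ≠ 0) : ∀ᶠ N in atTop, ∀ ξ ∈ (P N).roots, r < ‖ξ‖ := by
  have hK : IsCompact (Complex.ofReal '' Set.Icc (-r) r) :=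
    isCompact_Icc.image Complex.continuous_ofReal
  have hunif := tendstoLocallyUniformly_iff_forall_isCompact.1 hP _ hK
  obtain ⟨ε, hε, hεf⟩ : ∃ ε > 0, ∀ w ∈ Complex.ofReal '' Set.Icc (-r) r, ε ≤ ‖f w‖ := by
    simpa using hK.exists_forall_le' (a := 0) hf.norm.continuousOn <| by
      rintro _ ⟨x, hx, rfl⟩
      exact norm_pos_iff.2 (hne x (abs_le.2 hx))
  filter_upwards [Metric.tendstoUniformlyOn_iff.1 hunif ε hε] with N hN ξ hξ
  obtain ⟨x, rfl⟩ := hroots N ξ hξ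
  by_contra! hx
  have hxr : |x| ≤ r := by simpa using hx
  have h := hN x ⟨x, abs_le.1 hxr, rfl⟩
  rw [(mem_roots'.1 hξ).2, dist_zero_right] at h
  exact h.not_ge (hεf _ ⟨x, abs_le.1 hxr, rfl⟩)

theorem logDeriv_neg_of_even {f : ℂ → ℂ} (hf : ∀ z, f (-z) = f z) (z : ℂ) :
    logDeriv f (-z) = -logDeriv f z := by
  have h := deriv_comp_neg f z
  rw [funext hf] at h
  rw [logDeriv_apply, logDeriv_apply, hf, h]
  ring

theorem IsLimitOfRootsIn.sq_norm_mul_re_logDeriv_le {f : ℂ → ℂ}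
    (hf : IsLimitOfRootsIn (Set.range Complex.ofReal) f) (heven : ∀ z, f (-z) = f z) {r : ℝ}
    (hne : ∀ x : ℝ, |x| ≤ r → f x ≠ 0) {z : ℂ} (hz : ‖z‖ ≤ r) :
    ‖z‖ ^ 2 * (r * logDeriv f r).re ≤ r ^ 2 * (z * logDeriv f z).re := by
  have hne' {w : ℂ} (hw : ‖w‖ ≤ r) : f w ≠ 0 := fun h =>
    hne w.re ((Complex.abs_re_le_norm w).trans hw) <| norm_le_zero_iff.1 <| by
      simpa [h] using hf.norm_apply_re_le w
  have hr : ‖(r : ℂ)‖ ≤ r := by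
    rw [Complex.norm_real, Real.norm_of_nonneg ((norm_nonneg z).trans hz)]
  have hcont := hf.differentiable.continuous
  obtain ⟨P, hroots, hP⟩ := hf
  have hlog {w : ℂ} (hw : ‖w‖ ≤ r) :
      Tendsto (fun N => w * (logDeriv (P N).eval w - logDeriv (P N).eval (-w))) atTop
        (𝓝 (2 * (w * logDeriv f w))) := by
    have hlim {v : ℂ} (hv : ‖v‖ ≤ r) :=
      Complex.logDeriv_tendsto isOpen_univ (Set.mem_univ v) (tendstoLocallyUniformlyOn_univ.2 hP)
        (.of_forall fun N => (P N).differentiable.differentiableOn) (hne' hv)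
    convert! ((hlim hw).sub (hlim ((norm_neg w).trans_le hw))).const_mul w using 2
    rw [logDeriv_neg_of_even heven]
    ring
  have hle := le_of_tendsto_of_tendsto
    (((Complex.continuous_re.tendsto _).comp (hlog hr)).const_mul (‖z‖ ^ 2))
    (((Complex.continuous_re.tendsto _).comp (hlog hz)).const_mul (r ^ 2))
    ((eventually_forall_roots_lt_norm hP hcont hroots hne).mono fun N hN =>
      sq_norm_mul_re_logDeriv_eval_sub_le (hroots N) hN hz)
  simp only [Complex.mul_re (2 : ℂ), Complex.re_ofNat, Complex.im_ofNat, zero_mul, sub_zero] at hle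
  linarith

/-! ### The radius of convexity -/

theorem exists_one_add_mul_logDeriv_eq {ψ : ℝ → ℝ} (hψ : Differentiable ℝ ψ) {θ α : ℝ} (hθ : 0 < θ)
    (hψθ : ψ θ = 0) (hne : ∀ t ∈ Set.Ioo 0 θ, ψ t ≠ 0) (hα : α < 1) :
    ∃ r ∈ Set.Ioo 0 θ, 1 + r * logDeriv ψ r = α := by
  have hα' : 0 < 1 - α := sub_pos.2 hα
  have hcont : ContinuousOn (fun t => t ^ (1 - α) * ψ t) (Set.Icc 0 θ) :=
    ((Real.continuous_rpow_const hα'.le).mul hψ.continuous).continuousOn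
  have hends : (0 : ℝ) ^ (1 - α) * ψ 0 = θ ^ (1 - α) * ψ θ := by
    rw [Real.zero_rpow hα'.ne', hψθ, zero_mul, mul_zero]
  obtain ⟨r, hr, hrolle⟩ := exists_hasDerivAt_eq_zero hθ hcont hends fun t ht =>
    (Real.hasDerivAt_rpow_const (.inl ht.1.ne')).mul (hψ t).hasDerivAt
  refine ⟨r, hr, ?_⟩
  have hpow : r ^ (1 - α) = r * r ^ (1 - α - 1) := by
    rw [Real.rpow_sub_one hr.1.ne', mul_div_cancel₀ _ hr.1.ne']
  have hzero : (1 - α) * ψ r + r * deriv ψ r = 0 := by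
    refine (mul_eq_zero.1 ?_).resolve_left (Real.rpow_pos_of_pos hr.1 (1 - α - 1)).ne'
    linear_combination hrolle - deriv ψ r * hpow
  have hψr := hne r hr
  rw [logDeriv_apply]
  field_simp
  linear_combination hzero

theorem IsLimitOfRootsIn.re_mul_logDeriv_lt {φ : ℂ → ℂ}
    (hφ : IsLimitOfRootsIn (Set.range Complex.ofReal) φ) (heven : ∀ z, φ (-z) = φ z) {r : ℝ}
    (hne : ∀ x : ℝ, |x| ≤ r → φ x ≠ 0) (hr : (r * logDeriv φ r).re < 0) {z : ℂ} (hz : ‖z‖ < r) :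
    (r * logDeriv φ r).re < (z * logDeriv φ z).re := by
  have hle := hφ.sq_norm_mul_re_logDeriv_le heven hne hz.le
  have hsq : ‖z‖ ^ 2 < r ^ 2 := by gcongr
  have hr2 : 0 < r ^ 2 := (sq_nonneg _).trans_lt hsq
  refine lt_of_mul_lt_mul_left ?_ hr2.le
  exact (mul_lt_mul_of_neg_right hsq hr).trans_le hle

theorem radiusConvex_eq_of_forall_norm_lt {α : ℝ} {f : ℂ → ℂ} {r : ℝ} (hr : 0 < r)
    (hlt : ∀ z : ℂ, ‖z‖ < r → α < (1 + z * deriv (deriv f) z / deriv f z).re)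
    (heq : (1 + r * deriv (deriv f) r / deriv f r).re = α) : radiusConvex α f = r := by
  refine IsGreatest.csSup_eq ⟨⟨hr, hlt⟩, fun s hs => ?_⟩
  by_contra! hrs
  refine (hs.2 r ?_).ne' heq
  rwa [Complex.norm_real, Real.norm_of_nonneg hr.le]

theorem hasDerivAt_re_deriv_of_ofReal_eq {f : ℂ → ℂ} {g : ℝ → ℝ} (hf : Differentiable ℂ f)
    (hfg : ∀ x : ℝ, f x = g x) (x : ℝ) : HasDerivAt g (deriv f x).re x := by
  simpa only [hfg, Complex.ofReal_re] using (hf x).hasDerivAt.real_of_complex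

theorem deriv_ofReal_of_ofReal_eq {f : ℂ → ℂ} {g : ℝ → ℝ} (hf : Differentiable ℂ f)
    (hfg : ∀ x : ℝ, f x = g x) (x : ℝ) : deriv f x = ((deriv g x : ℝ) : ℂ) := by
  have hg := hasDerivAt_re_deriv_of_ofReal_eq hf hfg x
  have hfx : HasDerivAt (fun y : ℝ => (g y : ℂ)) (deriv f x) x := by
    simpa only [hfg] using (hf x).hasDerivAt.comp_ofReal
  rw [hfx.unique hg.ofReal_comp, hg.deriv]

theorem deriv_neg_of_odd {f : ℂ → ℂ} (hf : ∀ z, f (-z) = -f z) (z : ℂ) :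
    deriv f (-z) = deriv f z := by
  have h := deriv_comp_neg f z
  rw [funext hf, deriv.fun_neg] at h
  exact (neg_injective h).symm

theorem convex_range_ofReal : Convex ℝ (Set.range Complex.ofReal) := by
  rw [← Set.image_univ]
  exact convex_univ.linear_image Complex.ofRealCLM.toLinearMap

theorem ne_zero_of_abs_lt_of_isLeast {φ : ℂ → ℂ} {ψ : ℝ → ℝ} (heven : ∀ z, φ (-z) = φ z)
    (hφψ : ∀ x : ℝ, φ x = ψ x) (h0 : φ 0 ≠ 0) {θ : ℝ} (hθ : IsLeast {x : ℝ | 0 < x ∧ ψ x = 0} θ)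
    {x : ℝ} (hx : |x| < θ) : φ x ≠ 0 := by
  have habs : φ x = φ (|x| : ℝ) := by
    rcases abs_choice x with h | h <;> simp only [h, Complex.ofReal_neg, heven]
  obtain rfl | hx0 := eq_or_ne x 0
  · rwa [Complex.ofReal_zero]
  · rw [habs, hφψ]
    exact Complex.ofReal_ne_zero.2 fun h => (hθ.2 ⟨abs_pos.2 hx0, h⟩).not_gt hx

theorem exists_radiusConvex_eq {f : ℂ → ℂ} {g : ℝ → ℝ}
    (hf : IsLimitOfRootsIn (Set.range Complex.ofReal) f) (hodd : ∀ z, f (-z) = -f z)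
    (hfg : ∀ x : ℝ, f x = g x) (h0 : deriv f 0 ≠ 0) {α : ℝ} (hα : α < 1) {θ : ℝ}
    (hθ : IsLeast {x : ℝ | 0 < x ∧ deriv g x = 0} θ) :
    ∃ r₂ : ℝ, (r₂ ∈ Set.Ioo 0 θ ∧ 1 + r₂ * deriv (deriv g) r₂ / deriv g r₂ = α) ∧
      (∀ r : ℝ, r ∈ Set.Ioo 0 θ → 1 + r * deriv (deriv g) r / deriv g r = α → r = r₂) ∧
      radiusConvex α f = r₂ := by
  have hf' := hf.deriv convex_range_ofReal
  have heven := deriv_neg_of_odd hodd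
  have hfg' := deriv_ofReal_of_ofReal_eq hf.differentiable hfg
  have hfg'' := deriv_ofReal_of_ofReal_eq hf'.differentiable hfg'
  have hg' : Differentiable ℝ (deriv g) := fun x =>
    (hasDerivAt_re_deriv_of_ofReal_eq hf'.differentiable hfg' x).differentiableAt
  have hre (x : ℝ) : (x * logDeriv (deriv f) x).re = x * logDeriv (deriv g) x := by
    rw [logDeriv_apply, logDeriv_apply, hfg', hfg'', ← Complex.ofReal_div, ← Complex.ofReal_mul,
      Complex.ofReal_re]
  have hlt {r : ℝ} (hr : r ∈ Set.Ioo 0 θ) (hrα : 1 + r * logDeriv (deriv g) r = α) {z : ℂ}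
      (hz : ‖z‖ < r) : α < 1 + (z * logDeriv (deriv f) z).re := by
    have hne {x : ℝ} (hx : |x| ≤ r) : deriv f x ≠ 0 :=
      ne_zero_of_abs_lt_of_isLeast heven hfg' h0 hθ (hx.trans_lt hr.2)
    have := hf'.re_mul_logDeriv_lt heven (fun _ => hne) (by rw [hre]; linarith) hz
    rw [hre] at this
    linarith
  have hle {r s : ℝ} (hr : r ∈ Set.Ioo 0 θ) (hrα : 1 + r * logDeriv (deriv g) r = α)
      (hs : s ∈ Set.Ioo 0 θ) (hsα : 1 + s * logDeriv (deriv g) s = α) : r ≤ s := by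
    by_contra! hsr
    refine (hlt hr hrα (z := s) ?_).ne' (by rwa [hre])
    rwa [Complex.norm_real, Real.norm_of_nonneg hs.1.le]
  simp only [mul_div_assoc, ← logDeriv_apply]
  obtain ⟨r₂, hr₂, heq⟩ := exists_one_add_mul_logDeriv_eq hg' hθ.1.1 hθ.1.2
    (fun t ht h => (hθ.2 ⟨ht.1, h⟩).not_gt ht.2) hα
  refine ⟨r₂, ⟨hr₂, heq⟩, fun r hr hrα => (hle hr hrα hr₂ heq).antisymm (hle hr₂ heq hr hrα),
    radiusConvex_eq_of_forall_norm_lt hr₂.1 (fun z hz => ?_) ?_⟩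
  · rw [mul_div_assoc]
    exact hlt hr₂ heq hz
  · rw [mul_div_assoc, ← logDeriv_apply, Complex.add_re, Complex.one_re, hre, heq]

/-! ### Power series as limits of polynomials -/

theorem hasSum_coeff_mul_pow (P : ℂ[X]) (z : ℂ) :
    HasSum (fun n => P.coeff n * z ^ n) (P.eval z) := by
  rw [eval_eq_sum_range]
  refine hasSum_sum_of_ne_finset_zero fun n hn => ?_
  rw [coeff_eq_zero_of_natDegree_lt (by simpa using hn), zero_mul]

theorem tendstoLocallyUniformly_eval_of_tendsto_coeff {P : ℕ → ℂ[X]} {a : ℕ → ℂ} {b : ℕ → ℝ}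
    (hb : ∀ R : ℝ, 0 ≤ R → Summable fun n => b n * R ^ n)
    (hPb : ∀ N n, ‖(P N).coeff n‖ ≤ b n)
    (hPa : ∀ n, Tendsto (fun N => (P N).coeff n) atTop (𝓝 (a n))) :
    TendstoLocallyUniformly (fun N z => (P N).eval z) (fun z => ∑' n, a n * z ^ n) atTop := by
  rw [tendstoLocallyUniformly_iff_forall_isCompact]
  intro K hK
  obtain ⟨R, hR, hKR⟩ := hK.isBounded.exists_pos_norm_le
  have hab (n : ℕ) : ‖a n‖ ≤ b n := le_of_tendsto (hPa n).norm (.of_forall fun N => hPb N n)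
  have hdiff (N n : ℕ) : ‖(P N).coeff n - a n‖ ≤ 2 * b n := by
    linarith [norm_sub_le ((P N).coeff n) (a n), hPb N n, hab n]
  have hsum : Summable fun n => 2 * b n * R ^ n := by
    simpa only [mul_assoc] using (hb R hR.le).mul_left 2
  have hlim : Tendsto (fun N => ∑' n, ‖(P N).coeff n - a n‖ * R ^ n) atTop (𝓝 0) := by
    have h := tendsto_tsum_of_dominated_convergence (𝓕 := atTop) hsum
      (fun n => (((hPa n).sub_const (a n)).norm.mul_const (R ^ n))) <| .of_forall fun N n => by
        rw [norm_mul, norm_norm, norm_pow, Real.norm_of_nonneg hR.le]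
        gcongr
        exact hdiff N n
    simpa using h
  rw [Metric.tendstoUniformlyOn_iff]
  intro ε hε
  filter_upwards [hlim.eventually_lt_const hε] with N hN z hz
  have hP : HasSum (fun n => (P N).coeff n * z ^ n) ((P N).eval z) := hasSum_coeff_mul_pow _ _
  have ha : Summable fun n => a n * z ^ n := .of_norm_bounded (hb R hR.le) fun n => by
    rw [norm_mul, norm_pow]
    exact mul_le_mul (hab n) (by gcongr; exact hKR z hz) (by positivity)
      ((norm_nonneg _).trans (hab n))
  have hd : Summable fun n => ‖(P N).coeff n - a n‖ * R ^ n :=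
    .of_nonneg_of_le (fun n => by positivity) (fun n => by gcongr; exact hdiff N n) hsum
  rw [dist_comm, dist_eq_norm, ← hP.tsum_eq, ← hP.summable.tsum_sub ha]
  refine (tsum_of_norm_bounded hd.hasSum fun n => ?_).trans_lt hN
  rw [← sub_mul, norm_mul, norm_pow]
  gcongr
  exact hKR z hz

theorem isLimitOfRootsIn_of_tendsto_coeff {S : Set ℂ} {P : ℕ → ℝ[X]} {a b : ℕ → ℝ}
    (hroots : ∀ N, ∀ ξ ∈ ((P N).map Complex.ofRealHom).roots, ξ ∈ S)
    (hb : ∀ R : ℝ, 0 ≤ R → Summable fun n => b n * R ^ n)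
    (hPb : ∀ N n, |(P N).coeff n| ≤ b n)
    (hPa : ∀ n, Tendsto (fun N => (P N).coeff n) atTop (𝓝 (a n))) :
    IsLimitOfRootsIn S fun z => ∑' n, (a n : ℂ) * z ^ n := by
  refine ⟨_, hroots, tendstoLocallyUniformly_eval_of_tendsto_coeff hb (fun N n => ?_) fun n => ?_⟩
  · simpa using hPb N n
  · simpa [Function.comp_def] using (Complex.continuous_ofReal.tendsto _).comp (hPa n)

/-- The polynomial with roots `x 0, …, x (N - 1)` and value `1` at the origin. -/
noncomputable def rootProd (x : ℕ → ℝ) (N : ℕ) : ℝ[X] :=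
  ∏ j ∈ range N, (1 - C (x j)⁻¹ * X)

theorem eval_rootProd (x : ℕ → ℝ) (N : ℕ) (w : ℝ) :
    (rootProd x N).eval w = ∏ j ∈ range N, (1 - (x j)⁻¹ * w) := by
  simp [rootProd, eval_prod]

theorem coeff_zero_rootProd (x : ℕ → ℝ) (N : ℕ) : (rootProd x N).coeff 0 = 1 := by
  rw [coeff_zero_eq_eval_zero, eval_rootProd]
  simp

theorem natDegree_rootProd_le (x : ℕ → ℝ) (N : ℕ) : (rootProd x N).natDegree ≤ N := by
  refine (natDegree_prod_le _ _).trans ?_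
  refine (sum_le_sum (g := fun _ => 1) fun j _ => by compute_degree).trans ?_
  simp

theorem eval_rootProd_eq_zero {x : ℕ → ℝ} {N j : ℕ} (hj : j < N) (hx : x j ≠ 0) :
    (rootProd x N).eval (x j) = 0 := by
  rw [eval_rootProd]
  exact prod_eq_zero (mem_range.2 hj) (by rw [inv_mul_cancel₀ hx, sub_self])

theorem mem_image_ofReal_Ici_of_mem_roots_rootProd {x : ℕ → ℝ} {N : ℕ} (hx : ∀ j, 0 < x j) {ξ : ℂ}
    (hξ : ξ ∈ ((rootProd x N).map Complex.ofRealHom).roots) : ξ ∈ Complex.ofReal '' Set.Ici 0 := by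
  have hzero := (mem_roots'.1 hξ).2
  simp only [rootProd, Polynomial.map_prod, IsRoot.def, eval_prod, prod_eq_zero_iff] at hzero
  obtain ⟨j, -, hj⟩ := hzero
  refine ⟨x j, (hx j).le, ?_⟩
  have hxj : (x j : ℂ) ≠ 0 := Complex.ofReal_ne_zero.2 (hx j).ne'
  simp only [Polynomial.map_sub, Polynomial.map_one, Polynomial.map_mul, map_C, map_X, eval_sub,
    eval_one, eval_mul, eval_C, eval_X, Complex.ofRealHom_eq_coe, Complex.ofReal_inv] at hj
  rw [sub_eq_zero, eq_comm, inv_mul_eq_one₀ hxj] at hj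
  exact hj

theorem eq_rootProd_of_eval_eq_zero {Q : ℝ[X]} {N : ℕ} (hdeg : Q.natDegree ≤ N)
    (h0 : Q.coeff 0 = 1) {y : ℕ → ℝ} (hy : ∀ j, y j ≠ 0) (hinj : Function.Injective y)
    (hQ : ∀ j < N, Q.eval (y j) = 0) : Q = rootProd y N := by
  have hnotMem : 0 ∉ (range N).image y := by simp [hy]
  refine eq_of_natDegree_lt_card_of_eval_eq' Q _ (insert 0 ((range N).image y))
    (fun w hw => ?_) ?_
  · obtain rfl | hw := mem_insert.1 hw
    · rw [← coeff_zero_eq_eval_zero, ← coeff_zero_eq_eval_zero, h0, coeff_zero_rootProd]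
    · obtain ⟨j, hj, rfl⟩ := mem_image.1 hw
      rw [hQ j (mem_range.1 hj), eval_rootProd_eq_zero (mem_range.1 hj) (hy j)]
  · rw [card_insert_of_notMem hnotMem, card_image_of_injective _ hinj, card_range]
    exact Nat.lt_succ_of_le (max_le hdeg (natDegree_rootProd_le y N))

theorem exists_mem_Icc_eval_eq_zero {Q : ℝ[X]} {e l r : ℝ} (he : e ≠ 0) (hlr : l ≤ r)
    (hl : 0 ≤ e * Q.eval l) (hr : e * Q.eval r ≤ 0) : ∃ y ∈ Set.Icc l r, Q.eval y = 0 := by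
  obtain ⟨y, hy, hy0⟩ := intermediate_value_Icc' hlr
    (f := fun t => e * Q.eval t) (by fun_prop) ⟨hr, hl⟩
  exact ⟨y, hy, (mul_eq_zero.1 hy0).resolve_left he⟩

theorem exists_eq_rootProd_of_sign_changes {Q : ℝ[X]} {N : ℕ} (hdeg : Q.natDegree ≤ N)
    (h0 : Q.coeff 0 = 1) {l r : ℕ → ℝ} (hl : ∀ j, 0 ≤ l j) (hr : ∀ j, 0 < r j)
    (hlr : ∀ j, l j ≤ r j) (hrl : ∀ j, r j < l (j + 1))
    (hQl : ∀ j < N, 0 ≤ (-1) ^ j * Q.eval (l j)) (hQr : ∀ j < N, (-1) ^ j * Q.eval (r j) ≤ 0) :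
    ∃ y : ℕ → ℝ, (∀ j, 0 < y j) ∧ (∀ j, y j ∈ Set.Icc (l j) (r j)) ∧ Q = rootProd y N := by
  have hexists (j : ℕ) : ∃ y ∈ Set.Icc (l j) (r j), 0 < y ∧ (j < N → Q.eval y = 0) := by
    by_cases hj : j < N
    · obtain ⟨y, hy, hQy⟩ := exists_mem_Icc_eval_eq_zero (pow_ne_zero j (neg_ne_zero.2 one_ne_zero))
        (hlr j) (hQl j hj) (hQr j hj)
      refine ⟨y, hy, ((hl j).trans hy.1).lt_of_ne ?_, fun _ => hQy⟩
      rintro rfl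
      rw [← coeff_zero_eq_eval_zero, h0] at hQy
      exact one_ne_zero hQy
    · exact ⟨r j, ⟨hlr j, le_rfl⟩, hr j, fun h => absurd h hj⟩
  choose y hy hy0 hQy using hexists
  have hmono : StrictMono y := strictMono_nat_of_lt_succ fun j =>
    (hy j).2.trans_lt ((hrl j).trans_le (hy (j + 1)).1)
  exact ⟨y, hy0, hy, eq_rootProd_of_eval_eq_zero hdeg h0 (fun j => (hy0 j).ne') hmono.injective hQy⟩

/-! ### Polynomials with geometrically separated roots -/

theorem neg_one_pow_mul_eval_rootProd_nonneg {x : ℕ → ℝ} {N j : ℕ} (hx : ∀ i, 0 < x i) (hj : j ≤ N)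
    {w : ℝ} (hlt : ∀ i < j, x i ≤ w) (hge : ∀ i, j ≤ i → w ≤ x i) :
    0 ≤ (-1) ^ j * (rootProd x N).eval w := by
  have hneg : (-1) ^ j * ∏ i ∈ range j, (1 - (x i)⁻¹ * w) = ∏ i ∈ range j, ((x i)⁻¹ * w - 1) := by
    simpa using (prod_neg (s := range j) fun i => 1 - (x i)⁻¹ * w).symm
  rw [eval_rootProd, ← prod_range_mul_prod_Ico _ hj, ← mul_assoc, hneg]
  refine mul_nonneg (prod_nonneg fun i hi => sub_nonneg.2 ?_)
    (prod_nonneg fun i hi => sub_nonneg.2 ?_)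
  · rw [inv_mul_eq_div, one_le_div (hx i)]
    exact hlt i (mem_range.1 hi)
  · rw [inv_mul_eq_div, div_le_one (hx i)]
    exact hge i (mem_Ico.1 hi).1

/-- `P` is normalized by `P 0 = 1` and has `N` positive roots, each at most `p` times the next. -/
def IsMeshPoly (p : ℝ) (N : ℕ) (P : ℝ[X]) : Prop :=
  ∃ x : ℕ → ℝ, (∀ j, 0 < x j) ∧ (∀ j, x j ≤ p * x (j + 1)) ∧ P = rootProd x N

/-- The operator multiplying the coefficient of `X ^ n` by `(1 - b * p ^ n) / (1 - b)`. -/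
noncomputable def qMultiplier (p b : ℝ) (P : ℝ[X]) : ℝ[X] :=
  C (1 - b)⁻¹ * (P - C b * P.comp (C p * X))

theorem coeff_qMultiplier (p b : ℝ) (P : ℝ[X]) (n : ℕ) :
    (qMultiplier p b P).coeff n = (1 - b)⁻¹ * ((1 - b * p ^ n) * P.coeff n) := by
  simp only [qMultiplier, coeff_C_mul, coeff_sub, comp_C_mul_X_coeff]
  ring

theorem eval_qMultiplier (p b : ℝ) (P : ℝ[X]) (w : ℝ) :
    (qMultiplier p b P).eval w = (1 - b)⁻¹ * (P.eval w - b * P.eval (p * w)) := by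
  simp [qMultiplier, eval_comp]

theorem natDegree_qMultiplier_le (p b : ℝ) (P : ℝ[X]) :
    (qMultiplier p b P).natDegree ≤ P.natDegree :=
  natDegree_le_iff_coeff_eq_zero.2 fun n hn => by
    rw [coeff_qMultiplier, coeff_eq_zero_of_natDegree_lt hn, mul_zero, mul_zero]

theorem strictMono_of_le_mul_succ {p : ℝ} (hp : p < 1) {x : ℕ → ℝ} (hx : ∀ j, 0 < x j)
    (hmesh : ∀ j, x j ≤ p * x (j + 1)) : StrictMono x :=
  strictMono_nat_of_lt_succ fun j =>
    (hmesh j).trans_lt (mul_lt_of_lt_one_left (hx (j + 1)) hp)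

section Mesh

variable {p b : ℝ} {x : ℕ → ℝ} {N j : ℕ}

theorem neg_one_pow_mul_eval_qMultiplier_root_nonpos (hp0 : 0 < p) (hp1 : p < 1) (hb0 : 0 ≤ b)
    (hb1 : b < 1) (hx : ∀ j, 0 < x j) (hmesh : ∀ j, x j ≤ p * x (j + 1)) (hj : j < N) :
    (-1) ^ j * (qMultiplier p b (rootProd x N)).eval (x j) ≤ 0 := by
  have hmono := (strictMono_of_le_mul_succ hp1 hx hmesh).monotone
  have hsign : 0 ≤ (-1) ^ j * (rootProd x N).eval (p * x j) := by
    refine neg_one_pow_mul_eval_rootProd_nonneg hx hj.le (fun i hi => ?_) fun i hi => ?_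
    · exact (hmesh i).trans (by gcongr; exact hmono hi)
    · exact (mul_le_of_le_one_left (hx j).le hp1.le).trans (hmono hi)
  have hb : 0 ≤ (1 - b)⁻¹ := inv_nonneg.2 (sub_nonneg.2 hb1.le)
  rw [eval_qMultiplier, eval_rootProd_eq_zero hj (hx j).ne']
  linarith [mul_nonneg (mul_nonneg hb hb0) hsign]

theorem neg_one_pow_mul_eval_qMultiplier_root_div_nonneg (hp0 : 0 < p) (hp1 : p < 1) (hb1 : b < 1)
    (hx : ∀ j, 0 < x j) (hmesh : ∀ j, x j ≤ p * x (j + 1)) (hj : j < N) :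
    0 ≤ (-1) ^ (j + 1) * (qMultiplier p b (rootProd x N)).eval (x j / p) := by
  have hmono := (strictMono_of_le_mul_succ hp1 hx hmesh).monotone
  have hsign : 0 ≤ (-1) ^ (j + 1) * (rootProd x N).eval (x j / p) := by
    refine neg_one_pow_mul_eval_rootProd_nonneg hx hj (fun i hi => ?_) fun i hi => ?_
    · exact (hmono (Nat.lt_succ_iff.1 hi)).trans (le_div_self (hx j).le hp0 hp1.le)
    · exact ((div_le_iff₀' hp0).2 (hmesh j)).trans (hmono hi)
  have hb : 0 ≤ (1 - b)⁻¹ := inv_nonneg.2 (sub_nonneg.2 hb1.le)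
  rw [eval_qMultiplier, mul_div_cancel₀ _ hp0.ne', eval_rootProd_eq_zero hj (hx j).ne', mul_zero,
    sub_zero, mul_left_comm]
  exact mul_nonneg hb hsign

-- The new roots interlace with the old ones: the `j`-th lies between `x (j - 1) / p` and `x j`.
theorem IsMeshPoly.isMeshPoly_qMultiplier {P : ℝ[X]} (hP : IsMeshPoly p N P) (hp0 : 0 < p)
    (hp1 : p < 1) (hb0 : 0 ≤ b) (hb1 : b < 1) : IsMeshPoly p N (qMultiplier p b P) := by
  obtain ⟨x, hx, hmesh, rfl⟩ := hP
  have h0 : (qMultiplier p b (rootProd x N)).coeff 0 = 1 := by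
    rw [coeff_qMultiplier, coeff_zero_rootProd, pow_zero, mul_one, mul_one,
      inv_mul_cancel₀ (sub_pos.2 hb1).ne']
  let l : ℕ → ℝ := fun j => j.casesOn 0 fun k => x k / p
  have hl (j : ℕ) : 0 ≤ l j := by
    cases j with
    | zero => exact le_rfl
    | succ k => exact (div_pos (hx k) hp0).le
  have hlx (j : ℕ) : l j ≤ x j := by
    cases j with
    | zero => exact (hx 0).le
    | succ k => exact (div_le_iff₀' hp0).2 (hmesh k)
  have hQl (j : ℕ) (hj : j < N) :
      0 ≤ (-1) ^ j * (qMultiplier p b (rootProd x N)).eval (l j) := by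
    cases j with
    | zero =>
      change 0 ≤ (-1) ^ 0 * eval 0 _
      rw [← coeff_zero_eq_eval_zero, h0]
      norm_num
    | succ k =>
      exact neg_one_pow_mul_eval_qMultiplier_root_div_nonneg hp0 hp1 hb1 hx hmesh
        (Nat.lt_of_succ_lt hj)
  obtain ⟨y, hy0, hy, hQ⟩ := exists_eq_rootProd_of_sign_changes
    ((natDegree_qMultiplier_le p b _).trans (natDegree_rootProd_le x N)) h0 hl hx hlx
    (fun j => (lt_div_iff₀ hp0).2 (mul_lt_of_lt_one_right (hx j) hp1)) hQl fun j =>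
      neg_one_pow_mul_eval_qMultiplier_root_nonpos hp0 hp1 hb0 hb1 hx hmesh
  refine ⟨y, hy0, fun j => ?_, hQ⟩
  calc y j ≤ x j := (hy j).2
    _ = p * l (j + 1) := (mul_div_cancel₀ (x j) hp0.ne').symm
    _ ≤ p * y (j + 1) := by gcongr; exact (hy (j + 1)).1

end Mesh

/-- The truncated Euler product `∏_{k < N} (1 - s p ^ k X)`. -/
noncomputable def eulerPoly (p s : ℝ) (N : ℕ) : ℝ[X] :=
  ∏ k ∈ range N, (1 - C (s * p ^ k) * X)

theorem isMeshPoly_eulerPoly {p s : ℝ} (hp : 0 < p) (hs : 0 < s) (N : ℕ) :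
    IsMeshPoly p N (eulerPoly p s N) := by
  refine ⟨fun k => (s * p ^ k)⁻¹, fun k => by positivity, fun k => ?_, ?_⟩
  · simp only [pow_succ]
    field_simp
    rfl
  · simp only [eulerPoly, rootProd, inv_inv]

theorem eulerPoly_comp_mul (p s : ℝ) (N : ℕ) :
    (eulerPoly p s N).comp (C p * X) * (1 - C s * X) =
      eulerPoly p s N * (1 - C (s * p ^ N) * X) := by
  have hcomp : (eulerPoly p s N).comp (C p * X) = ∏ k ∈ range N, (1 - C (s * p ^ (k + 1)) * X) := by
    rw [eulerPoly, Polynomial.prod_comp]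
    refine prod_congr rfl fun k _ => ?_
    simp only [sub_comp, one_comp, Polynomial.mul_comp, C_comp, X_comp, C_mul, pow_succ]
    ring
  have hprod := prod_range_succ' (fun k => 1 - C (s * p ^ k) * X) N
  rw [prod_range_succ, pow_zero, mul_one] at hprod
  rw [hcomp, ← hprod, eulerPoly]

theorem coeff_succ_eulerPoly_mul (p s : ℝ) (N n : ℕ) :
    (eulerPoly p s N).coeff (n + 1) * (1 - p ^ (n + 1)) =
      -(s * (p ^ n - p ^ N)) * (eulerPoly p s N).coeff n := by
  have hcoeff (Q : ℝ[X]) (c : ℝ) :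
      (Q * (1 - C c * X)).coeff (n + 1) = Q.coeff (n + 1) - c * Q.coeff n := by
    rw [mul_sub, mul_one, mul_left_comm, coeff_sub, coeff_C_mul, coeff_mul_X]
  have h := congrArg (fun Q : ℝ[X] => Q.coeff (n + 1)) (eulerPoly_comp_mul p s N)
  simp only [hcoeff, comp_C_mul_X_coeff] at h
  linear_combination -h

/-- The polynomial obtained from `eulerPoly p s N` by the multipliers `a, a p, …, a p ^ (m - 1)`;
for `m, N → ∞` it tends to `∑ (-s) ^ n p ^ (n (n - 1) / 2) w ^ n / ((p; p)_n (a; p)_n)`. -/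
noncomputable def qBesselPoly (p a s : ℝ) (N : ℕ) : ℕ → ℝ[X]
  | 0 => eulerPoly p s N
  | m + 1 => qMultiplier p (a * p ^ m) (qBesselPoly p a s N m)

theorem mul_pow_lt_one {p a : ℝ} (hp0 : 0 ≤ p) (hp1 : p ≤ 1) (ha0 : 0 ≤ a) (ha1 : a < 1) (m : ℕ) :
    a * p ^ m < 1 :=
  (mul_le_of_le_one_right ha0 (pow_le_one₀ hp0 hp1)).trans_lt ha1

theorem isMeshPoly_qBesselPoly {p a s : ℝ} (hp0 : 0 < p) (hp1 : p < 1) (ha0 : 0 ≤ a) (ha1 : a < 1)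
    (hs : 0 < s) (N m : ℕ) : IsMeshPoly p N (qBesselPoly p a s N m) := by
  induction m with
  | zero => exact isMeshPoly_eulerPoly hp0 hs N
  | succ m ih =>
    exact ih.isMeshPoly_qMultiplier hp0 hp1 (by positivity)
      (mul_pow_lt_one hp0.le hp1.le ha0 ha1 m)

theorem coeff_succ_qBesselPoly {p a : ℝ} (hp0 : 0 ≤ p) (hp1 : p < 1) (ha0 : 0 ≤ a) (ha1 : a < 1)
    (s : ℝ) (N m n : ℕ) :
    (qBesselPoly p a s N m).coeff (n + 1) =
      -(s * (p ^ n - p ^ N) * (1 - a * p ^ (n + m)) / ((1 - p ^ (n + 1)) * (1 - a * p ^ n))) *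
        (qBesselPoly p a s N m).coeff n := by
  have hne (k : ℕ) : 1 - a * p ^ k ≠ 0 := (sub_pos.2 (mul_pow_lt_one hp0 hp1.le ha0 ha1 k)).ne'
  have hpn : 1 - p ^ (n + 1) ≠ 0 := (sub_pos.2 (pow_lt_one₀ hp0 hp1 n.succ_ne_zero)).ne'
  induction m with
  | zero =>
    rw [qBesselPoly, add_zero, mul_div_mul_right _ _ (hne n), ← neg_div, div_mul_eq_mul_div,
      eq_div_iff hpn]
    exact coeff_succ_eulerPoly_mul p s N n
  | succ m ih =>
    have hexp : a * p ^ m * p ^ (n + 1) = a * p ^ (n + (m + 1)) := by ring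
    have hexp' : a * p ^ m * p ^ n = a * p ^ (n + m) := by ring
    rw [qBesselPoly, coeff_qMultiplier, coeff_qMultiplier, ih, hexp, hexp']
    ring

section qBessel

variable {p a s : ℝ} {f : ℕ → ℝ}

theorem IsMeshPoly.coeff_zero {N : ℕ} {P : ℝ[X]} (hP : IsMeshPoly p N P) : P.coeff 0 = 1 := by
  obtain ⟨x, -, -, rfl⟩ := hP
  exact coeff_zero_rootProd x N

theorem IsMeshPoly.natDegree_le {N : ℕ} {P : ℝ[X]} (hP : IsMeshPoly p N P) : P.natDegree ≤ N := by
  obtain ⟨x, -, -, rfl⟩ := hP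
  exact natDegree_rootProd_le x N

theorem abs_coeff_qBesselPoly_le (hp0 : 0 < p) (hp1 : p < 1) (ha0 : 0 ≤ a) (ha1 : a < 1)
    (hs : 0 < s) (hf0 : f 0 = 1)
    (hf : ∀ n, f (n + 1) = f n * (s * p ^ n / ((1 - p ^ (n + 1)) * (1 - a * p ^ n))))
    (N m n : ℕ) : |(qBesselPoly p a s N m).coeff n| ≤ f n := by
  have hP := isMeshPoly_qBesselPoly hp0 hp1 ha0 ha1 hs N m
  have ha (k : ℕ) : 0 ≤ 1 - a * p ^ k := (sub_pos.2 (mul_pow_lt_one hp0.le hp1.le ha0 ha1 k)).le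
  have hp (k : ℕ) : 0 ≤ 1 - p ^ k := sub_nonneg.2 (pow_le_one₀ hp0.le hp1.le)
  induction n with
  | zero => rw [hP.coeff_zero, hf0, abs_one]
  | succ n ih =>
    have hden : 0 ≤ (1 - p ^ (n + 1)) * (1 - a * p ^ n) := mul_nonneg (hp _) (ha _)
    obtain hn | hn := le_or_gt n N
    · have hpN : 0 ≤ p ^ n - p ^ N := sub_nonneg.2 (pow_le_pow_of_le_one hp0.le hp1.le hn)
      have hnum : s * (p ^ n - p ^ N) * (1 - a * p ^ (n + m)) ≤ s * p ^ n :=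
        (mul_le_of_le_one_right (mul_nonneg hs.le hpN) (sub_le_self _ (by positivity))).trans
          (mul_le_mul_of_nonneg_left (sub_le_self _ (by positivity)) hs.le)
      rw [coeff_succ_qBesselPoly hp0.le hp1 ha0 ha1, neg_mul, abs_neg, abs_mul, mul_comm, hf,
        abs_of_nonneg (div_nonneg (mul_nonneg (mul_nonneg hs.le hpN) (ha _)) hden)]
      exact mul_le_mul ih (div_le_div_of_nonneg_right hnum hden)
        (div_nonneg (mul_nonneg (mul_nonneg hs.le hpN) (ha _)) hden) ((abs_nonneg _).trans ih)
    · rw [coeff_eq_zero_of_natDegree_lt (hP.natDegree_le.trans_lt (by omega)), abs_zero, hf]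
      have hfn : 0 ≤ f n := (abs_nonneg _).trans ih
      positivity

theorem tendsto_coeff_qBesselPoly (hp0 : 0 < p) (hp1 : p < 1) (ha0 : 0 ≤ a) (ha1 : a < 1)
    (hs : 0 < s) (hf0 : f 0 = 1)
    (hf : ∀ n, f (n + 1) = f n * (s * p ^ n / ((1 - p ^ (n + 1)) * (1 - a * p ^ n)))) (n : ℕ) :
    Tendsto (fun N => (qBesselPoly p a s N N).coeff n) atTop (𝓝 ((-1) ^ n * f n)) := by
  induction n with
  | zero =>
    simp only [(isMeshPoly_qBesselPoly hp0 hp1 ha0 ha1 hs _ _).coeff_zero, hf0, pow_zero, mul_one]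
    exact tendsto_const_nhds
  | succ n ih =>
    have hpow : Tendsto (fun N => p ^ N) atTop (𝓝 0) :=
      tendsto_pow_atTop_nhds_zero_of_lt_one hp0.le hp1
    have hpow' : Tendsto (fun N => p ^ (n + N)) atTop (𝓝 0) :=
      hpow.comp (tendsto_atTop_mono (Nat.le_add_left · n) tendsto_id)
    have hlim := ((((hpow.const_sub (p ^ n)).const_mul s).mul ((hpow'.const_mul a).const_sub 1)
      |>.div_const ((1 - p ^ (n + 1)) * (1 - a * p ^ n))).neg.mul ih)
    simp only [coeff_succ_qBesselPoly hp0.le hp1 ha0 ha1]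
    convert hlim using 2
    rw [hf]
    ring

theorem isLimitOfRootsIn_tsum_qBessel (hp0 : 0 < p) (hp1 : p < 1) (ha0 : 0 ≤ a) (ha1 : a < 1)
    (hs : 0 < s) (hf0 : f 0 = 1)
    (hf : ∀ n, f (n + 1) = f n * (s * p ^ n / ((1 - p ^ (n + 1)) * (1 - a * p ^ n))))
    (hsum : ∀ R : ℝ, 0 ≤ R → Summable fun n => f n * R ^ n) :
    IsLimitOfRootsIn (Complex.ofReal '' Set.Ici 0)
      fun w => ∑' n, (((-1) ^ n * f n : ℝ) : ℂ) * w ^ n := by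
  refine isLimitOfRootsIn_of_tendsto_coeff (P := fun N => qBesselPoly p a s N N) (fun N ξ hξ => ?_)
    hsum (fun N => abs_coeff_qBesselPoly_le hp0 hp1 ha0 ha1 hs hf0 hf N N)
    (tendsto_coeff_qBesselPoly hp0 hp1 ha0 ha1 hs hf0 hf)
  obtain ⟨x, hx, -, hP⟩ := isMeshPoly_qBesselPoly hp0 hp1 ha0 ha1 hs N N
  rw [hP] at hξ
  exact mem_image_ofReal_Ici_of_mem_roots_rootProd hx hξ

end qBessel

/-! ### Hutchinson's criterion -/

theorem neg_one_pow_mul_sum_range_succ_mem_Icc {T : ℕ → ℝ} {m : ℕ} (h0 : 0 ≤ T 0)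
    (hT : ∀ k < m, 2 * T k ≤ T (k + 1)) :
    (-1) ^ m * ∑ k ∈ range (m + 1), (-1) ^ k * T k ∈ Set.Icc (T m / 2) (T m) := by
  induction m with
  | zero => simpa using h0
  | succ m ih =>
    obtain ⟨hlow, hhigh⟩ := ih fun k hk => hT k (hk.trans m.lt_succ_self)
    have hsucc : (-1) ^ (m + 1) * ∑ k ∈ range (m + 1 + 1), (-1) ^ k * T k =
        T (m + 1) - (-1) ^ m * ∑ k ∈ range (m + 1), (-1) ^ k * T k := by
      rw [sum_range_succ, mul_add, ← mul_assoc, ← mul_pow, neg_one_mul, neg_neg, one_pow, pow_succ]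
      ring
    have hm := hT m m.lt_succ_self
    rw [hsucc]
    constructor <;> linarith

theorem sum_range_neg_one_pow_mul_mem_Icc {T : ℕ → ℝ} (h0 : ∀ k, 0 ≤ T k) (hT : Antitone T)
    (n : ℕ) : ∑ k ∈ range n, (-1) ^ k * T k ∈ Set.Icc 0 (T 0) := by
  induction n generalizing T with
  | zero => simpa using h0 0
  | succ n ih =>
    obtain ⟨hlow, hhigh⟩ := ih (T := fun k => T (k + 1)) (fun k => h0 (k + 1))
      fun i j hij => hT (Nat.succ_le_succ hij)
    have hsucc : ∑ k ∈ range (n + 1), (-1) ^ k * T k =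
        T 0 - ∑ k ∈ range n, (-1) ^ k * T (k + 1) := by
      rw [sum_range_succ', add_comm, sub_eq_add_neg, ← sum_neg_distrib]
      simp only [pow_succ, pow_zero, one_mul, mul_neg_one, neg_mul]
    have h01 := hT (Nat.zero_le 1)
    rw [hsucc]
    constructor <;> linarith

theorem neg_one_pow_mul_sum_range_nonneg {T : ℕ → ℝ} {m N : ℕ} (h0 : ∀ k, 0 ≤ T k) (hm : m ≤ N)
    (hup : ∀ k < m, 2 * T k ≤ T (k + 1)) (hdown : ∀ k, m ≤ k → 2 * T (k + 1) ≤ T k) :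
    0 ≤ (-1) ^ m * ∑ k ∈ range (N + 1), (-1) ^ k * T k := by
  obtain ⟨d, rfl⟩ := Nat.exists_eq_add_of_le hm
  have hanti : Antitone fun k => T (m + 1 + k) := antitone_nat_of_succ_le fun k => by
    change T (m + 1 + k + 1) ≤ T (m + 1 + k)
    linarith [hdown (m + 1 + k) (by omega), h0 (m + 1 + k + 1)]
  have hhead := (neg_one_pow_mul_sum_range_succ_mem_Icc (h0 0) hup).1
  have htail := (sum_range_neg_one_pow_mul_mem_Icc (fun k => h0 (m + 1 + k)) hanti d).2
  have hsplit : (-1) ^ m * ∑ k ∈ range (m + d + 1), (-1) ^ k * T k =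
      (-1) ^ m * ∑ k ∈ range (m + 1), (-1) ^ k * T k -
        ∑ k ∈ range d, (-1) ^ k * T (m + 1 + k) := by
    rw [add_right_comm, sum_range_add, mul_add, sub_eq_add_neg, ← sum_neg_distrib,
      mul_sum (range d)]
    refine congrArg _ (sum_congr rfl fun k _ => ?_)
    rw [← mul_assoc, ← pow_add, show m + (m + 1 + k) = 2 * m + (k + 1) by ring, pow_add, pow_mul,
      neg_one_sq, one_pow, pow_succ]
    ring
  rw [hsplit]
  linarith [hdown m le_rfl]

/-- The partial sum of degree `N` of the power series `∑ (-1) ^ k f k X ^ k`. -/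
noncomputable def altPartialSum (f : ℕ → ℝ) (N : ℕ) : ℝ[X] :=
  ∑ k ∈ range (N + 1), C ((-1) ^ k * f k) * X ^ k

theorem coeff_altPartialSum (f : ℕ → ℝ) (N n : ℕ) :
    (altPartialSum f N).coeff n = if n ≤ N then (-1) ^ n * f n else 0 := by
  simp only [altPartialSum, finsetSum_coeff, coeff_C_mul, coeff_X_pow]
  simp

theorem eval_altPartialSum (f : ℕ → ℝ) (N : ℕ) (w : ℝ) :
    (altPartialSum f N).eval w = ∑ k ∈ range (N + 1), (-1) ^ k * (f k * w ^ k) := by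
  simp [altPartialSum, eval_finsetSum, mul_assoc]

theorem natDegree_altPartialSum_le (f : ℕ → ℝ) (N : ℕ) : (altPartialSum f N).natDegree ≤ N :=
  natDegree_le_iff_coeff_eq_zero.2 fun n hn => by
    rw [coeff_altPartialSum, if_neg hn.not_ge]

section Hutchinson

variable {f : ℕ → ℝ}

theorem neg_one_pow_mul_eval_altPartialSum_nonneg (hf : ∀ n, 0 < f n) {m N : ℕ} (hm : m ≤ N) {w : ℝ}
    (hw : 0 ≤ w) (hlow : ∀ k < m, 2 * (f k / f (k + 1)) ≤ w)
    (hhigh : ∀ k, m ≤ k → 2 * w ≤ f k / f (k + 1)) :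
    0 ≤ (-1) ^ m * (altPartialSum f N).eval w := by
  rw [eval_altPartialSum]
  refine neg_one_pow_mul_sum_range_nonneg (T := fun k => f k * w ^ k)
    (fun k => mul_nonneg (hf k).le (pow_nonneg hw k)) hm (fun k hk => ?_) fun k hk => ?_
  · have h : 2 * f k ≤ w * f (k + 1) := by
      rw [← div_le_iff₀ (hf (k + 1)), mul_div_assoc]
      exact hlow k hk
    calc 2 * (f k * w ^ k) = 2 * f k * w ^ k := by ring
      _ ≤ w * f (k + 1) * w ^ k := by gcongr
      _ = f (k + 1) * w ^ (k + 1) := by ring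
  · have h : 2 * w * f (k + 1) ≤ f k := (le_div_iff₀ (hf (k + 1))).1 (hhigh k hk)
    calc 2 * (f (k + 1) * w ^ (k + 1)) = 2 * w * f (k + 1) * w ^ k := by ring
      _ ≤ f k * w ^ k := by gcongr

theorem exists_altPartialSum_eq_rootProd (hf : ∀ n, 0 < f n) (hf0 : f 0 = 1)
    (h4 : ∀ n, 4 * (f n * f (n + 2)) < f (n + 1) ^ 2) (N : ℕ) :
    ∃ y : ℕ → ℝ, (∀ j, 0 < y j) ∧ altPartialSum f N = rootProd y N := by
  let t : ℕ → ℝ := fun n => f n / f (n + 1)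
  have ht (n : ℕ) : 0 < t n := div_pos (hf n) (hf (n + 1))
  have ht4 (n : ℕ) : 4 * t n < t (n + 1) := by
    simp only [t, ← mul_div_assoc]
    rw [div_lt_div_iff₀ (hf _) (hf _)]
    linarith [h4 n]
  have hmono : Monotone t := monotone_nat_of_le_succ fun n => by linarith [ht4 n, ht n]
  have h0 : (altPartialSum f N).coeff 0 = 1 := by
    rw [coeff_altPartialSum, if_pos N.zero_le, hf0, pow_zero, mul_one]
  have ht4' {j k : ℕ} (hjk : j < k) : 4 * t j ≤ t k := (ht4 j).le.trans (hmono hjk)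
  obtain ⟨y, hy, -, hP⟩ := exists_eq_rootProd_of_sign_changes (l := fun j => t j / 2)
    (r := fun j => 2 * t j) (natDegree_altPartialSum_le f N) h0 (fun j => (half_pos (ht j)).le)
    (fun j => mul_pos two_pos (ht j)) (fun j => by linarith [ht j]) (fun j => by linarith [ht4 j])
    (fun j hj => neg_one_pow_mul_eval_altPartialSum_nonneg hf hj.le (half_pos (ht j)).le
      (fun k hk => by linarith [ht4' hk]) fun k hk => by linarith [hmono hk])
    fun j hj => by
      have h := neg_one_pow_mul_eval_altPartialSum_nonneg hf hj (mul_pos two_pos (ht j)).le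
        (fun k hk => by linarith [hmono (Nat.lt_succ_iff.1 hk)]) fun k hk => by linarith [ht4' hk]
      rw [pow_succ] at h
      linarith
  exact ⟨y, hy, hP⟩

-- Hutchinson's criterion: the constant `4` lets a single term of the series, and hence its sign,
-- dominate at the points `f j / (2 * f (j + 1))` and `2 * f j / f (j + 1)`.
theorem isLimitOfRootsIn_tsum_of_four_mul_lt_sq (hf : ∀ n, 0 < f n) (hf0 : f 0 = 1)
    (h4 : ∀ n, 4 * (f n * f (n + 2)) < f (n + 1) ^ 2)
    (hsum : ∀ R : ℝ, 0 ≤ R → Summable fun n => f n * R ^ n) :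
    IsLimitOfRootsIn (Complex.ofReal '' Set.Ici 0)
      fun w => ∑' n, (((-1) ^ n * f n : ℝ) : ℂ) * w ^ n := by
  refine isLimitOfRootsIn_of_tendsto_coeff (P := altPartialSum f) (fun N ξ hξ => ?_) hsum
    (fun N n => ?_) fun n => tendsto_const_nhds.congr' ?_
  · obtain ⟨y, hy, hP⟩ := exists_altPartialSum_eq_rootProd hf hf0 h4 N
    rw [hP] at hξ
    exact mem_image_ofReal_Ici_of_mem_roots_rootProd hy hξ
  · rw [coeff_altPartialSum]
    split_ifs
    · rw [abs_mul, abs_neg_one_pow, one_mul, abs_of_pos (hf n)]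
    · rw [abs_zero]
      exact (hf n).le
  · filter_upwards [eventually_ge_atTop n] with N hN
    rw [coeff_altPartialSum, if_pos hN]

end Hutchinson

/-! ### The normalized function -/

section QGamma

variable {q : ℝ}

theorem summable_norm_neg_mul_pow (hq0 : 0 < q) (hq1 : q < 1) (a : ℝ) :
    Summable fun k : ℕ => ‖-(a * q ^ k)‖ :=
  ((summable_geometric_of_lt_one hq0.le hq1).mul_left a).neg.norm

theorem qPochInf_ne_zero (hq0 : 0 < q) (hq1 : q < 1) {a : ℝ} (ha0 : 0 ≤ a) (ha1 : a < 1) :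
    qPochInf a q ≠ 0 := by
  have hne (k : ℕ) : 1 + -(a * q ^ k) ≠ 0 := by
    rw [← sub_eq_add_neg]
    exact (sub_pos.2 (mul_pow_lt_one hq0.le hq1.le ha0 ha1 k)).ne'
  have h := tprod_one_add_ne_zero_of_summable hne (summable_norm_neg_mul_pow hq0 hq1 a)
  simpa only [qPochInf, sub_eq_add_neg] using h

theorem qPochInf_eq_one_sub_mul (hq0 : 0 < q) (hq1 : q < 1) (a : ℝ) :
    qPochInf a q = (1 - a) * qPochInf (a * q) q := by
  have hpow (k : ℕ) : a * q ^ (k + 1) = a * q * q ^ k := by ring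
  have hm : Multipliable fun k : ℕ => 1 - a * q ^ (k + 1) := by
    simpa only [hpow, sub_eq_add_neg] using
      multipliable_one_add_of_summable (summable_norm_neg_mul_pow hq0 hq1 (a * q))
  have h := tprod_eq_zero_mul' (f := fun k : ℕ => 1 - a * q ^ k) hm
  simpa only [qPochInf, hpow, pow_zero, mul_one] using h

theorem qGamma_ne_zero (hq0 : 0 < q) (hq1 : q < 1) {x : ℝ} (hx : 0 < x) : qGamma q x ≠ 0 :=
  div_ne_zero (mul_ne_zero (qPochInf_ne_zero hq0 hq1 hq0.le hq1)
      (Real.rpow_pos_of_pos (sub_pos.2 hq1) _).ne')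
    (qPochInf_ne_zero hq0 hq1 (Real.rpow_nonneg hq0.le x) (Real.rpow_lt_one hq0.le hq1 hx))

theorem qGamma_add_one (hq0 : 0 < q) (hq1 : q < 1) {x : ℝ} (hx : 0 < x) :
    qGamma q (x + 1) = qGamma q x * ((1 - q ^ x) / (1 - q)) := by
  have h1q : 0 < 1 - q := sub_pos.2 hq1
  have hqx : 1 - q ^ x ≠ 0 := (sub_pos.2 (Real.rpow_lt_one hq0.le hq1 hx)).ne'
  have : qPochInf (q ^ x * q) q ≠ 0 := by
    rw [← Real.rpow_add_one hq0.ne']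
    exact qPochInf_ne_zero hq0 hq1 (Real.rpow_nonneg hq0.le _)
      (Real.rpow_lt_one hq0.le hq1 (by linarith))
  have hexp : (1 - q) ^ (1 - x) = (1 - q) ^ (1 - (x + 1)) * (1 - q) := by
    rw [← Real.rpow_add_one h1q.ne', sub_add_eq_sub_sub, sub_add_cancel]
  rw [qGamma, qGamma, qPochInf_eq_one_sub_mul hq0 hq1 (q ^ x), Real.rpow_add_one hq0.ne', hexp]
  field_simp

end QGamma

/-- The coefficient of `(-1) ^ n z ^ (2 n + 1)` in the power series of `gML γ σ q`. -/
noncomputable def gMLCoeff (γ σ q : ℝ) (n : ℕ) : ℝ :=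
  qGamma q (γ + 1) * (σ ^ (2 * n) * q ^ (n * (n - 1)) / qGamma q (2 * n + γ + 1))

/-- The ratio of consecutive values of `gMLCoeff γ σ q`. -/
noncomputable def gMLRatio (γ σ q : ℝ) (n : ℕ) : ℝ :=
  σ ^ 2 * (1 - q) ^ 2 * (q ^ 2) ^ n / ((1 - q ^ (2 * n + γ + 1)) * (1 - q ^ (2 * n + γ + 2)))

section Coefficients

variable {γ σ q : ℝ}

theorem one_sub_rpow_pos (hq0 : 0 < q) (hq1 : q < 1) {x : ℝ} (hx : 0 < x) : 0 < 1 - q ^ x :=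
  sub_pos.2 (Real.rpow_lt_one hq0.le hq1 hx)

theorem gMLCoeff_zero (hq0 : 0 < q) (hq1 : q < 1) (hγ : -1 < γ) : gMLCoeff γ σ q 0 = 1 := by
  have hne := qGamma_ne_zero hq0 hq1 (neg_lt_iff_pos_add.1 hγ)
  simp [gMLCoeff, hne]

theorem gMLCoeff_succ (hq0 : 0 < q) (hq1 : q < 1) (hγ : -1 < γ) (n : ℕ) :
    gMLCoeff γ σ q (n + 1) = gMLCoeff γ σ q n * gMLRatio γ σ q n := by
  have hx : 0 < 2 * n + γ + 1 := by linarith [n.cast_nonneg (α := ℝ)]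
  have hadd : 2 * n + γ + 2 = 2 * n + γ + 1 + 1 := by ring
  have hΓ : qGamma q (2 * (n + 1 : ℕ) + γ + 1) = qGamma q (2 * n + γ + 1) *
      ((1 - q ^ (2 * n + γ + 1)) / (1 - q)) * ((1 - q ^ (2 * n + γ + 2)) / (1 - q)) := by
    rw [hadd, ← qGamma_add_one hq0 hq1 hx, ← qGamma_add_one hq0 hq1 (by linarith)]
    congr 1
    push_cast
    ring
  have hpow : q ^ ((n + 1) * (n + 1 - 1)) = q ^ (n * (n - 1)) * (q ^ 2) ^ n := by
    rw [← pow_mul, ← pow_add]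
    congr 1
    cases n with
    | zero => rfl
    | succ m =>
      simp only [Nat.add_sub_cancel]
      ring
  have hΓne := qGamma_ne_zero hq0 hq1 hx
  have h1 := (one_sub_rpow_pos hq0 hq1 hx).ne'
  have h2 := (one_sub_rpow_pos hq0 hq1 (hadd ▸ (by linarith : 0 < 2 * n + γ + 1 + 1))).ne'
  have h1q : 1 - q ≠ 0 := (sub_pos.2 hq1).ne'
  rw [gMLCoeff, gMLCoeff, gMLRatio, hΓ, hpow, mul_add, pow_add]
  field_simp

theorem gMLRatio_pos (hq0 : 0 < q) (hq1 : q < 1) (hσ : σ ≠ 0) (hγ : -1 < γ) (n : ℕ) :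
    0 < gMLRatio γ σ q n := by
  have := n.cast_nonneg (α := ℝ)
  have h1 := one_sub_rpow_pos hq0 hq1 (x := 2 * n + γ + 1) (by linarith)
  have h2 := one_sub_rpow_pos hq0 hq1 (x := 2 * n + γ + 2) (by linarith)
  have : 0 < 1 - q := sub_pos.2 hq1
  rw [gMLRatio]
  positivity

theorem gMLCoeff_pos (hq0 : 0 < q) (hq1 : q < 1) (hσ : σ ≠ 0) (hγ : -1 < γ) (n : ℕ) :
    0 < gMLCoeff γ σ q n := by
  induction n with
  | zero =>
    rw [gMLCoeff_zero hq0 hq1 hγ]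
    exact one_pos
  | succ n ih =>
    rw [gMLCoeff_succ hq0 hq1 hγ]
    exact mul_pos ih (gMLRatio_pos hq0 hq1 hσ hγ n)

theorem gMLRatio_succ_lt (hq0 : 0 < q) (hq1 : q < 1) (hσ : σ ≠ 0) (hγ : -1 < γ) (n : ℕ) :
    gMLRatio γ σ q (n + 1) < q ^ 2 * gMLRatio γ σ q n := by
  have := n.cast_nonneg (α := ℝ)
  have h1 := one_sub_rpow_pos hq0 hq1 (x := 2 * n + γ + 1) (by linarith)
  have h2 := one_sub_rpow_pos hq0 hq1 (x := 2 * n + γ + 2) (by linarith)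
  have h1' : q ^ (2 * (n + 1 : ℕ) + γ + 1) < q ^ (2 * n + γ + 1) :=
    Real.rpow_lt_rpow_of_exponent_gt hq0 hq1 (by push_cast; linarith)
  have h2' : q ^ (2 * (n + 1 : ℕ) + γ + 2) < q ^ (2 * n + γ + 2) :=
    Real.rpow_lt_rpow_of_exponent_gt hq0 hq1 (by push_cast; linarith)
  have : 0 < 1 - q := sub_pos.2 hq1
  calc gMLRatio γ σ q (n + 1) < σ ^ 2 * (1 - q) ^ 2 * (q ^ 2) ^ (n + 1) /
        ((1 - q ^ (2 * n + γ + 1)) * (1 - q ^ (2 * n + γ + 2))) := by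
        rw [gMLRatio]
        gcongr
    _ = q ^ 2 * gMLRatio γ σ q n := by
        rw [gMLRatio]
        ring

theorem tendsto_gMLRatio (hq0 : 0 < q) (hq1 : q < 1) (hσ : σ ≠ 0) (hγ : -1 < γ) :
    Tendsto (gMLRatio γ σ q) atTop (𝓝 0) := by
  have hgeom : Tendsto (fun n => (q ^ 2) ^ n * gMLRatio γ σ q 0) atTop (𝓝 0) := by
    simpa using (tendsto_pow_atTop_nhds_zero_of_lt_one (sq_nonneg q)
      (pow_lt_one₀ hq0.le hq1 two_ne_zero)).mul_const (gMLRatio γ σ q 0)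
  exact squeeze_zero (fun n => (gMLRatio_pos hq0 hq1 hσ hγ n).le)
    (fun n => le_geom (sq_nonneg q) n fun k _ => (gMLRatio_succ_lt hq0 hq1 hσ hγ k).le) hgeom

theorem summable_mul_pow_of_tendsto_ratio {f ρ : ℕ → ℝ} (hf : ∀ n, f (n + 1) = f n * ρ n)
    (hρ : Tendsto ρ atTop (𝓝 0)) (R : ℝ) : Summable fun n => f n * R ^ n := by
  have hlim : Tendsto (fun n => ‖ρ n * R‖) atTop (𝓝 0) := by
    simpa using (hρ.mul_const R).norm
  refine summable_of_ratio_norm_eventually_le (r := 1 / 2) (by norm_num) ?_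
  filter_upwards [hlim.eventually_lt_const one_half_pos] with n hn
  rw [hf, pow_succ, show f n * ρ n * (R ^ n * R) = ρ n * R * (f n * R ^ n) by ring, norm_mul]
  gcongr

theorem four_mul_gMLCoeff_lt_sq (hq0 : 0 < q) (hq : q ≤ 1 / 2) (hσ : σ ≠ 0) (hγ : -1 < γ) (n : ℕ) :
    4 * (gMLCoeff γ σ q n * gMLCoeff γ σ q (n + 2)) < gMLCoeff γ σ q (n + 1) ^ 2 := by
  have hq1 : q < 1 := by linarith
  have hf := gMLCoeff_pos hq0 hq1 hσ hγ n
  have hρ := gMLRatio_pos hq0 hq1 hσ hγ n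
  have hratio : 4 * gMLRatio γ σ q (n + 1) < gMLRatio γ σ q n := by
    have hsq : q ^ 2 ≤ 1 / 4 := by nlinarith
    nlinarith [gMLRatio_succ_lt hq0 hq1 hσ hγ n]
  rw [gMLCoeff_succ hq0 hq1 hγ (n + 1), gMLCoeff_succ hq0 hq1 hγ n]
  calc 4 * (gMLCoeff γ σ q n * (gMLCoeff γ σ q n * gMLRatio γ σ q n * gMLRatio γ σ q (n + 1)))
      = gMLCoeff γ σ q n ^ 2 * gMLRatio γ σ q n * (4 * gMLRatio γ σ q (n + 1)) := by ring
    _ < gMLCoeff γ σ q n ^ 2 * gMLRatio γ σ q n * gMLRatio γ σ q n := by gcongr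
    _ = (gMLCoeff γ σ q n * gMLRatio γ σ q n) ^ 2 := by ring

theorem rpow_two_mul_natCast_add_natCast (q : ℝ) (n k : ℕ) :
    q ^ (2 * n + k : ℝ) = q ^ k * (q ^ 2) ^ n := by
  rw [← pow_mul, ← pow_add, ← Real.rpow_natCast]
  push_cast
  rw [add_comm]

theorem gMLRatio_zero_left (σ q : ℝ) (n : ℕ) : gMLRatio 0 σ q n =
    σ ^ 2 * (1 - q) ^ 2 * (q ^ 2) ^ n / ((1 - (q ^ 2) ^ (n + 1)) * (1 - q * (q ^ 2) ^ n)) := by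
  have h1 := rpow_two_mul_natCast_add_natCast q n 1
  have h2 := rpow_two_mul_natCast_add_natCast q n 2
  push_cast at h1 h2
  rw [gMLRatio, add_zero, h1, h2, pow_one, mul_comm (1 - q * _), pow_succ' (q ^ 2)]

theorem gMLRatio_one_left (σ q : ℝ) (n : ℕ) : gMLRatio 1 σ q n =
    σ ^ 2 * (1 - q) ^ 2 * (q ^ 2) ^ n / ((1 - (q ^ 2) ^ (n + 1)) * (1 - q ^ 3 * (q ^ 2) ^ n)) := by
  have h2 := rpow_two_mul_natCast_add_natCast q n 2
  have h3 := rpow_two_mul_natCast_add_natCast q n 3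
  push_cast at h2 h3
  rw [gMLRatio, add_assoc, add_assoc, one_add_one_eq_two, (by norm_num : (1 : ℝ) + 2 = 3), h2, h3,
    pow_succ' (q ^ 2)]

theorem isLimitOfRootsIn_tsum_gMLCoeff (hq0 : 0 < q) (hq1 : q < 1) (hσ : σ ≠ 0) (hγ : -1 < γ)
    (h : γ = 0 ∨ γ = 1 ∨ q ≤ 1 / 2) : IsLimitOfRootsIn (Complex.ofReal '' Set.Ici 0)
      fun w => ∑' n, (((-1) ^ n * gMLCoeff γ σ q n : ℝ) : ℂ) * w ^ n := by
  have hsum (R : ℝ) (_ : 0 ≤ R) : Summable fun n => gMLCoeff γ σ q n * R ^ n :=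
    summable_mul_pow_of_tendsto_ratio (gMLCoeff_succ hq0 hq1 hγ) (tendsto_gMLRatio hq0 hq1 hσ hγ) R
  have hs : 0 < σ ^ 2 * (1 - q) ^ 2 := by
    have : 0 < 1 - q := sub_pos.2 hq1
    positivity
  have hp0 : 0 < q ^ 2 := by positivity
  have hp1 : q ^ 2 < 1 := pow_lt_one₀ hq0.le hq1 two_ne_zero
  obtain rfl | rfl | hq := h
  · refine isLimitOfRootsIn_tsum_qBessel hp0 hp1 hq0.le hq1 hs (gMLCoeff_zero hq0 hq1 hγ)
      (fun n => ?_) hsum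
    rw [gMLCoeff_succ hq0 hq1 hγ, gMLRatio_zero_left]
  · refine isLimitOfRootsIn_tsum_qBessel (a := q ^ 3) hp0 hp1 (by positivity)
      (pow_lt_one₀ hq0.le hq1 three_ne_zero) hs (gMLCoeff_zero hq0 hq1 hγ) (fun n => ?_) hsum
    rw [gMLCoeff_succ hq0 hq1 hγ, gMLRatio_one_left]
  · exact isLimitOfRootsIn_tsum_of_four_mul_lt_sq (gMLCoeff_pos hq0 hq1 hσ hγ)
      (gMLCoeff_zero hq0 hq1 hγ) (four_mul_gMLCoeff_lt_sq hq0 hq hσ hγ) hsum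

end Coefficients

theorem gML_eq_mul_tsum (γ σ q : ℝ) (z : ℂ) :
    gML γ σ q z = z * ∑' n, (((-1) ^ n * gMLCoeff γ σ q n : ℝ) : ℂ) * (z ^ 2) ^ n := by
  rw [gML, qML, mul_assoc, ← tsum_mul_left]
  refine congrArg _ (tsum_congr fun n => ?_)
  rw [gMLCoeff, pow_mul]
  push_cast
  ring

theorem gML_ofReal (γ σ q x : ℝ) : gML γ σ q x = gMLR γ σ q x := by
  rw [gML, gMLR, qML, qMLR]
  push_cast
  rfl

theorem gML_neg (γ σ q : ℝ) (z : ℂ) : gML γ σ q (-z) = -gML γ σ q z := by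
  rw [gML_eq_mul_tsum, gML_eq_mul_tsum, neg_sq, neg_mul]

theorem hasDerivAt_mul_comp_sq_zero {F : ℂ → ℂ} (hF : Differentiable ℂ F) :
    HasDerivAt (fun z => z * F (z ^ 2)) (F 0) 0 := by
  have hcomp : DifferentiableAt ℂ (fun z => F (z ^ 2)) 0 := by fun_prop
  simpa using (hasDerivAt_id' (0 : ℂ)).fun_mul hcomp.hasDerivAt

theorem deriv_gML_zero {γ σ q : ℝ} (hq0 : 0 < q) (hq1 : q < 1) (hσ : σ ≠ 0) (hγ : -1 < γ)
    (h : γ = 0 ∨ γ = 1 ∨ q ≤ 1 / 2) : deriv (gML γ σ q) 0 = 1 := by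
  have hF := (isLimitOfRootsIn_tsum_gMLCoeff hq0 hq1 hσ hγ h).differentiable
  rw [funext (gML_eq_mul_tsum γ σ q), (hasDerivAt_mul_comp_sq_zero hF).deriv,
    tsum_eq_single 0 fun n hn => by rw [zero_pow hn, mul_zero]]
  simp [gMLCoeff_zero hq0 hq1 hγ]

theorem eq_zero_or_eq_one_or_le_half_of_condR {q γ : ℝ} (hq0 : 0 < q) (hq1 : q < 1)
    (h : condR q γ) : γ = 0 ∨ γ = 1 ∨ q ≤ 1 / 2 := by
  rw [← or_assoc]
  refine h.imp_right fun ⟨⟨hγ, _⟩, _, hR⟩ => ?_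
  have hpos : 0 ≤ q⁻¹ * (1 - q) := mul_nonneg (inv_nonneg.2 hq0.le) (sub_nonneg.2 hq1.le)
  have hfactor : 0 ≤ 1 - q ^ (γ + 1) := (one_sub_rpow_pos hq0 hq1 (by linarith)).le
  have hlt : 1 < q⁻¹ * (1 - q) := calc
    1 < q⁻¹ * (1 - q) * (1 - q ^ (γ + 1)) * (1 - q ^ (γ + 2)) := hR
    _ ≤ q⁻¹ * (1 - q) * (1 - q ^ (γ + 1)) :=
      mul_le_of_le_one_right (mul_nonneg hpos hfactor) (sub_le_self _ (by positivity))
    _ ≤ q⁻¹ * (1 - q) := mul_le_of_le_one_right hpos (sub_le_self _ (by positivity))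
  rw [inv_mul_eq_div, one_lt_div hq0] at hlt
  linarith

end QMittagLeffler

open QMittagLeffler in
theorem stmt14_general {q σ γ : ℝ} (hq0 : 0 < q) (hq1 : q < 1) (hσ : σ ≠ 0) (hγ : -1 < γ)
    (hqγ : γ = 0 ∨ γ = 1 ∨ q ≤ 1 / 2) {α : ℝ} (hα : α < 1) {θ1 : ℝ}
    (hθ1 : IsLeast {x : ℝ | 0 < x ∧ deriv (gMLR γ σ q) x = 0} θ1) :
    ∃ r₂ : ℝ,
      (r₂ ∈ Set.Ioo 0 θ1 ∧
        1 + r₂ * deriv (deriv (gMLR γ σ q)) r₂ / deriv (gMLR γ σ q) r₂ = α) ∧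
      (∀ r : ℝ, r ∈ Set.Ioo 0 θ1 →
        1 + r * deriv (deriv (gMLR γ σ q)) r / deriv (gMLR γ σ q) r = α → r = r₂) ∧
      radiusConvex α (gML γ σ q) = r₂ := by
  have hg : IsLimitOfRootsIn (Set.range Complex.ofReal) (gML γ σ q) := by
    rw [funext (gML_eq_mul_tsum γ σ q)]
    exact (isLimitOfRootsIn_tsum_gMLCoeff hq0 hq1 hσ hγ hqγ).mul_comp_sq
  exact exists_radiusConvex_eq hg (gML_neg γ σ q) (gML_ofReal γ σ q)
    (by rw [deriv_gML_zero hq0 hq1 hσ hγ hqγ]; exact one_ne_zero) hα hθ1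

theorem stmt14 (q σ γ : ℝ) (hq0 : 0 < q) (hq1 : q < 1) (hσ : 0 < σ)
    (hγ0 : 0 ≤ γ) (hγ2 : γ < 2) (hR : condR q γ)
    (α : ℝ) (hα0 : 0 ≤ α) (hα1 : α < 1)
    (θ1 : ℝ)
    (hθ1 : IsLeast {x : ℝ | 0 < x ∧ deriv (gMLR γ σ q) x = 0} θ1) :
    ∃ r₂ : ℝ,
      (r₂ ∈ Set.Ioo 0 θ1 ∧
        1 + r₂ * deriv (deriv (gMLR γ σ q)) r₂ / deriv (gMLR γ σ q) r₂ = α) ∧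
      (∀ r : ℝ, r ∈ Set.Ioo 0 θ1 →
        1 + r * deriv (deriv (gMLR γ σ q)) r / deriv (gMLR γ σ q) r = α → r = r₂) ∧
      radiusConvex α (gML γ σ q) = r₂ :=
  stmt14_general hq0 hq1 hσ.ne' (by linarith)
    (QMittagLeffler.eq_zero_or_eq_one_or_le_half_of_condR hq0 hq1 hR) hα1 hθ1
end
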